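/- arXiv:1710.04680 — 4 statements merged into one kernel-verified Lean document; each statement's English description precedes it below -/
import Mathlib

section
/- Let k ≥ 5 and n ≥ 2(k − 1)(k − 3). Then there exist four matrices M₁, M₂, M₃, M₄ in the integral symplectic group Sp(2n, ℤ), each of order exactly k, such that the subgroup they generate is all of Sp(2n, ℤ). -/
/-!
For permutations `σ, τ, ρ` of the coordinates, acting on both halves of the symplectic basis, take
the generators `σ`, `τ`, `ρ` and `z σ z⁻¹`, where `z` is a short root element for a pair `(p, τ p)`
times a transvection far away from it. Writing `z^π` for the conjugate of `z` by `π`, the group they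
generate contains `x = z (z^σ)⁻¹` and `x^τ`. In the commutator of `x` and `x^τ` all factors but the
short root elements for `(p, τ p)` and `(τ p, τ (τ p))` cancel, since they lie in a common abelian
unipotent radical, so the commutator is the short root element for `(p, τ (τ p))`. Permutations and
further commutators spread this to all pairs, the permutations being built from `k`-cycles on
consecutive blocks with offset starting points so that they act transitively. Dividing the short
root elements out of `x` leaves a quotient of two transvections, from which short root elements
extract the long ones. Root elements generate the symplectic group over a Euclidean domain.
-/

namespace SpGenerators

open Matrix

section SymplecticForm

variable {ι : Type*} [DecidableEq ι] {R : Type*} [CommRing R]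

/-- The first half of the standard symplectic basis. -/
def basisX (i : ι) : ι ⊕ ι → R :=
  Pi.single (Sum.inl i) 1

/-- The second half of the standard symplectic basis. -/
def basisY (i : ι) : ι ⊕ ι → R :=
  Pi.single (Sum.inr i) 1

@[simp]
theorem basisX_inl (i j : ι) : (basisX i : ι ⊕ ι → R) (Sum.inl j) = if j = i then 1 else 0 := by
  simp [basisX, Pi.single_apply]

@[simp]
theorem basisX_inr (i j : ι) : (basisX i : ι ⊕ ι → R) (Sum.inr j) = 0 := by
  simp [basisX]

@[simp]
theorem basisY_inl (i j : ι) : (basisY i : ι ⊕ ι → R) (Sum.inl j) = 0 := by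
  simp [basisY]

@[simp]
theorem basisY_inr (i j : ι) : (basisY i : ι ⊕ ι → R) (Sum.inr j) = if j = i then 1 else 0 := by
  simp [basisY, Pi.single_apply]

variable [Fintype ι]

/-- The standard symplectic form `uᵀ J v` as a bilinear form. With Mathlib's sign convention for
`J`, the vector `basisY i` pairs to `1` with `basisX i`. -/
def symplecticForm : LinearMap.BilinForm R (ι ⊕ ι → R) :=
  Matrix.toBilin' (J ι R)

local notation "ω" => symplecticForm

theorem symplecticForm_apply (u v : ι ⊕ ι → R) :
    ω u v = ∑ i, (u (Sum.inr i) * v (Sum.inl i) - u (Sum.inl i) * v (Sum.inr i)) := by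
  simp [symplecticForm, Matrix.toBilin'_apply', J, fromBlocks_mulVec, dotProduct, neg_mulVec,
    sub_eq_neg_add, Finset.sum_add_distrib]

theorem symplecticForm_isAlt : (ω : LinearMap.BilinForm R (ι ⊕ ι → R)).IsAlt := fun v ↦ by
  simp [symplecticForm_apply, mul_comm]

theorem symplecticForm_self (u : ι ⊕ ι → R) : ω u u = 0 :=
  symplecticForm_isAlt u

theorem symplecticForm_swap (u v : ι ⊕ ι → R) : ω u v = -ω v u :=
  (symplecticForm_isAlt.neg_eq v u).symm

theorem symplecticForm_eq_zero_comm {u v : ι ⊕ ι → R} : ω u v = 0 ↔ ω v u = 0 :=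
  symplecticForm_isAlt.eq_iff

@[simp]
theorem symplecticForm_basisX_left (i : ι) (v : ι ⊕ ι → R) :
    ω (basisX i) v = -v (Sum.inr i) := by
  simp [symplecticForm_apply, basisX, Pi.single_apply]

@[simp]
theorem symplecticForm_basisY_left (i : ι) (v : ι ⊕ ι → R) :
    ω (basisY i) v = v (Sum.inl i) := by
  simp [symplecticForm_apply, basisY, Pi.single_apply]

@[simp]
theorem symplecticForm_basisX_right (i : ι) (v : ι ⊕ ι → R) :
    ω v (basisX i) = v (Sum.inr i) := by
  simp [symplecticForm_swap v]

@[simp]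
theorem symplecticForm_basisY_right (i : ι) (v : ι ⊕ ι → R) :
    ω v (basisY i) = -v (Sum.inl i) := by
  simp [symplecticForm_swap v]

theorem mem_symplecticGroup_iff_symplecticForm {A : Matrix (ι ⊕ ι) (ι ⊕ ι) R} :
    A ∈ symplecticGroup ι R ↔ ∀ u v, ω (A *ᵥ u) (A *ᵥ v) = ω u v := by
  rw [SymplecticGroup.mem_iff', ← Matrix.toBilin'.injective.eq_iff, LinearMap.ext_iff₂]
  refine forall₂_congr fun u v ↦ ?_
  simp [symplecticForm, Matrix.toBilin'_apply', ← mulVec_mulVec, dotProduct_mulVec,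
    vecMul_transpose]

theorem symplecticForm_mulVec_mulVec (g : symplecticGroup ι R) (u v : ι ⊕ ι → R) :
    ω (g.1 *ᵥ u) (g.1 *ᵥ v) = ω u v :=
  mem_symplecticGroup_iff_symplecticForm.1 g.2 u v

theorem coe_mul_mulVec (g h : symplecticGroup ι R) (v : ι ⊕ ι → R) :
    (g * h).1 *ᵥ v = g.1 *ᵥ h.1 *ᵥ v :=
  (mulVec_mulVec ..).symm

@[simp]
theorem coe_inv_mulVec_mulVec (g : symplecticGroup ι R) (v : ι ⊕ ι → R) :
    g⁻¹.1 *ᵥ g.1 *ᵥ v = v := by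
  rw [← coe_mul_mulVec, inv_mul_cancel, OneMemClass.coe_one, one_mulVec]

@[simp]
theorem coe_mulVec_inv_mulVec (g : symplecticGroup ι R) (v : ι ⊕ ι → R) :
    g.1 *ᵥ g⁻¹.1 *ᵥ v = v := by
  rw [← coe_mul_mulVec, mul_inv_cancel, OneMemClass.coe_one, one_mulVec]

theorem symplecticGroup_ext {g h : symplecticGroup ι R} (hgh : ∀ v, g.1 *ᵥ v = h.1 *ᵥ v) :
    g = h :=
  Subtype.ext (Matrix.ext_of_mulVec_single fun i ↦ hgh (Pi.single i 1))

theorem symplecticGroup_ext_basis {g h : symplecticGroup ι R}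
    (hX : ∀ i, g.1 *ᵥ basisX i = h.1 *ᵥ basisX i) (hY : ∀ i, g.1 *ᵥ basisY i = h.1 *ᵥ basisY i) :
    g = h :=
  Subtype.ext (Matrix.ext_of_mulVec_single (Sum.rec hX hY))

end SymplecticForm

section Transvections

variable {ι : Type*} [Fintype ι] [DecidableEq ι] {R : Type*} [CommRing R]

local notation "ω" => symplecticForm

theorem one_add_smul_vecMulVec_mulVec (c : R) (u v : ι ⊕ ι → R) :
    (1 + c • vecMulVec u (u ᵥ* J ι R)) *ᵥ v = v + (c * ω u v) • u := by
  simp [add_mulVec, smul_mulVec, vecMulVec_mulVec, symplecticForm, toBilin'_apply',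
    dotProduct_mulVec, mul_smul]

/-- The symplectic transvection `v ↦ v + c ω(u, v) u` along `u`. -/
def transvection (c : R) (u : ι ⊕ ι → R) : symplecticGroup ι R where
  val := 1 + c • vecMulVec u (u ᵥ* J ι R)
  property := mem_symplecticGroup_iff_symplecticForm.2 fun v w ↦ by
    simp only [one_add_smul_vecMulVec_mulVec, map_add, map_smul, LinearMap.add_apply,
      LinearMap.smul_apply, symplecticForm_self, symplecticForm_swap v u, smul_eq_mul]
    ring

theorem transvection_mulVec (c : R) (u v : ι ⊕ ι → R) :
    (transvection c u).1 *ᵥ v = v + (c * ω u v) • u :=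
  one_add_smul_vecMulVec_mulVec c u v

theorem transvection_mulVec_of_orthogonal (c : R) {u v : ι ⊕ ι → R} (huv : ω u v = 0) :
    (transvection c u).1 *ᵥ v = v := by
  simp [transvection_mulVec, huv]

theorem transvection_mul (c d : R) (u : ι ⊕ ι → R) :
    transvection c u * transvection d u = transvection (c + d) u :=
  symplecticGroup_ext fun v ↦ by
    simp only [coe_mul_mulVec, transvection_mulVec, map_add, map_smul, symplecticForm_self,
      smul_eq_mul]
    module

theorem transvection_zero_left (u : ι ⊕ ι → R) : transvection 0 u = 1 :=
  symplecticGroup_ext fun v ↦ by simp [transvection_mulVec]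

theorem transvection_inv (c : R) (u : ι ⊕ ι → R) :
    (transvection c u)⁻¹ = transvection (-c) u :=
  inv_eq_of_mul_eq_one_right (by rw [transvection_mul, add_neg_cancel, transvection_zero_left])

theorem transvection_zpow (c : R) (u : ι ⊕ ι → R) (m : ℤ) :
    transvection c u ^ m = transvection (m * c) u := by
  induction m with
  | zero => simp [transvection_zero_left]
  | succ m ih => rw [_root_.zpow_add_one, ih, transvection_mul]; congr 1; push_cast; ring
  | pred m ih =>
    rw [_root_.zpow_sub_one, ih, transvection_inv, transvection_mul]; congr 1; push_cast; ring

theorem transvection_smul (c d : R) (u : ι ⊕ ι → R) :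
    transvection c (d • u) = transvection (c * d ^ 2) u :=
  symplecticGroup_ext fun v ↦ by
    simp only [transvection_mulVec, map_smul, LinearMap.smul_apply, smul_eq_mul]
    module

theorem transvection_neg (c : R) (u : ι ⊕ ι → R) : transvection c (-u) = transvection c u := by
  simpa using transvection_smul c (-1) u

theorem conj_transvection (g : symplecticGroup ι R) (c : R) (u : ι ⊕ ι → R) :
    g * transvection c u * g⁻¹ = transvection c (g.1 *ᵥ u) :=
  symplecticGroup_ext fun v ↦ by
    rw [coe_mul_mulVec, coe_mul_mulVec, transvection_mulVec, transvection_mulVec, mulVec_add,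
      mulVec_smul, coe_mulVec_inv_mulVec, ← symplecticForm_mulVec_mulVec g u,
      coe_mulVec_inv_mulVec]

theorem exists_transvection_mulVec_eq {u v : ι ⊕ ι → R} (hvu : IsUnit (ω v u)) :
    ∃ c : R, (transvection c (v - u)).1 *ᵥ u = v := by
  obtain ⟨c, hc⟩ := hvu.exists_left_inv
  exact ⟨c, by simp [transvection_mulVec, symplecticForm_self, hc]⟩

/-- The Eichler transformation `v ↦ v + ω(u, v) w + ω(w, v) u` attached to an orthogonal pair
`u, w`. The expression through transvections makes sense for all pairs, and keeps conjugation
formulas free of hypotheses. -/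
def eichler (u w : ι ⊕ ι → R) : symplecticGroup ι R :=
  transvection 1 (u + w) * transvection (-1) u * transvection (-1) w

theorem eichler_mulVec {u w : ι ⊕ ι → R} (huw : ω u w = 0) (v : ι ⊕ ι → R) :
    (eichler u w).1 *ᵥ v = v + ω u v • w + ω w v • u := by
  simp only [eichler, coe_mul_mulVec, transvection_mulVec, map_add, map_smul, LinearMap.add_apply,
    symplecticForm_self, huw, symplecticForm_eq_zero_comm.1 huw, smul_eq_mul]
  module

theorem eichler_mulVec_of_orthogonal {u w v : ι ⊕ ι → R} (huw : ω u w = 0) (huv : ω u v = 0)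
    (hwv : ω w v = 0) : (eichler u w).1 *ᵥ v = v := by
  simp [eichler_mulVec huw, huv, hwv]

theorem conj_eichler (g : symplecticGroup ι R) (u w : ι ⊕ ι → R) :
    g * eichler u w * g⁻¹ = eichler (g.1 *ᵥ u) (g.1 *ᵥ w) := by
  simp only [eichler, ← mulVec_add, ← conj_transvection]
  group

theorem transvection_add {u w : ι ⊕ ι → R} (huw : ω u w = 0) :
    transvection 1 (u + w) = transvection 1 u * eichler u w * transvection 1 w :=
  symplecticGroup_ext fun v ↦ by
    simp only [coe_mul_mulVec, transvection_mulVec, eichler_mulVec huw, map_add, map_smul,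
      LinearMap.add_apply, symplecticForm_self, huw, smul_eq_mul]
    module

theorem eichler_comm {u w : ι ⊕ ι → R} (huw : ω u w = 0) : eichler u w = eichler w u :=
  symplecticGroup_ext fun v ↦ by
    rw [eichler_mulVec huw, eichler_mulVec (symplecticForm_eq_zero_comm.1 huw)]
    module

theorem eichler_add_left {u u' w : ι ⊕ ι → R} (huw : ω u w = 0) (hu'w : ω u' w = 0)
    (huu' : ω u u' = 0) : eichler (u + u') w = eichler u w * eichler u' w :=
  symplecticGroup_ext fun v ↦ by
    have hsum : ω (u + u') w = 0 := by simp [huw, hu'w]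
    rw [coe_mul_mulVec, eichler_mulVec hsum, eichler_mulVec huw, eichler_mulVec hu'w]
    simp only [map_add, map_smul, LinearMap.add_apply, symplecticForm_self, huw, huu',
      symplecticForm_eq_zero_comm.1 hu'w, smul_eq_mul]
    module

theorem eichler_neg_left {u w : ι ⊕ ι → R} (huw : ω u w = 0) :
    eichler (-u) w = (eichler u w)⁻¹ :=
  eq_inv_of_mul_eq_one_left (symplecticGroup_ext fun v ↦ by
    have hneg : ω (-u) w = 0 := by simp [huw]
    rw [coe_mul_mulVec, eichler_mulVec hneg, eichler_mulVec huw, OneMemClass.coe_one, one_mulVec]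
    simp only [map_add, map_smul, map_neg, LinearMap.neg_apply, symplecticForm_self, huw,
      symplecticForm_eq_zero_comm.1 huw, smul_eq_mul]
    module)

theorem eichler_zpow {u w : ι ⊕ ι → R} (huw : ω u w = 0) (m : ℤ) :
    eichler u w ^ m = eichler ((m : R) • u) w := by
  induction m with
  | zero => exact symplecticGroup_ext fun v ↦ by simp [eichler_mulVec]
  | succ m ih =>
    rw [_root_.zpow_add_one, ih, ← eichler_add_left (by simp [huw]) huw
      (by simp [symplecticForm_self])]
    congr 1; push_cast; module
  | pred m ih =>
    rw [_root_.zpow_sub_one, ih, ← eichler_neg_left huw, ← eichler_add_left (by simp [huw])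
      (by simp [huw]) (by simp [symplecticForm_self])]
    congr 1; push_cast; module

theorem commute_eichler_transvection {u w z : ι ⊕ ι → R} (c : R) (huw : ω u w = 0)
    (huz : ω u z = 0) (hwz : ω w z = 0) : Commute (eichler u w) (transvection c z) := by
  rw [commute_iff_eq, ← mul_inv_eq_iff_eq_mul, conj_transvection,
    eichler_mulVec_of_orthogonal huw huz hwz]

open scoped commutatorElement in
theorem commutator_eichler {u w u' w' : ι ⊕ ι → R} (huw : ω u w = 0) (hu'w' : ω u' w' = 0)
    (huu' : ω u u' = 0) (huw' : ω u w' = 0) (hww' : ω w w' = 0) (hwu' : ω w u' = 1) :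
    ⁅eichler u w, eichler u' w'⁆ = eichler u w' := by
  have hconj : (eichler u w).1 *ᵥ u' = u + u' := by
    simp [eichler_mulVec huw, huu', hwu', add_comm]
  rw [commutatorElement_def, conj_eichler, hconj, eichler_mulVec_of_orthogonal huw huw' hww',
    eichler_add_left huw' hu'w' huu', mul_inv_cancel_right]

end Transvections

section ElementaryGeneration

theorem exists_pair_zero_right {R : Type*} [EuclideanDomain R] {P : R → R → Prop}
    (hleft : ∀ a b s, P a b → P (a + s * b) b) (hright : ∀ a b s, P a b → P a (b + s * a))
    {a b : R} (hab : P a b) : ∃ d, P d 0 := by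
  classical
  have hswap (d : R) (hd : P 0 d) : P d 0 := by
    simpa using hright _ _ (-1) (hleft _ _ 1 hd)
  have hmod (a b : R) : a % b = a + -(a / b) * b := by
    rw [EuclideanDomain.mod_eq_sub_mul_div]; ring
  suffices h : P a b ∨ P b a → ∃ d, P d 0 from h (.inl hab)
  clear hab
  induction a, b using EuclideanDomain.GCD.induction with
  | H0 d => exact fun h ↦ ⟨d, h.elim (hswap d) id⟩
  | H1 a b _ ih =>
    rw [hmod] at ih
    exact fun h ↦ ih (h.symm.imp (hleft _ _ _) (hright _ _ _))

variable {ι : Type*} [DecidableEq ι] {R : Type*}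

local notation "ω" => symplecticForm

section CommRing

variable [CommRing R] {S : Finset ι}

/-- The span of the basis vectors `basisX i` and `basisY i` with `i ∈ S`, described by the
vanishing of the other coordinates. -/
def coordinateSubmodule (S : Finset ι) : Submodule R (ι ⊕ ι → R) where
  carrier := {v | ∀ i ∉ S, v (Sum.inl i) = 0 ∧ v (Sum.inr i) = 0}
  add_mem' hu hv i hi := by simp [hu i hi, hv i hi]
  zero_mem' i _ := by simp
  smul_mem' c v hv i hi := by simp [hv i hi]

theorem basisX_mem_coordinateSubmodule {i : ι} (hi : i ∈ S) :
    (basisX i : ι ⊕ ι → R) ∈ coordinateSubmodule S := fun j hj ↦ by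
  simp [ne_of_mem_of_not_mem hi hj |>.symm]

theorem basisY_mem_coordinateSubmodule {i : ι} (hi : i ∈ S) :
    (basisY i : ι ⊕ ι → R) ∈ coordinateSubmodule S := fun j hj ↦ by
  simp [ne_of_mem_of_not_mem hi hj |>.symm]

variable [Fintype ι]

/-- The copy of the symplectic group of `coordinateSubmodule S` inside the whole group. -/
def coordinateSubgroup (S : Finset ι) : Subgroup (symplecticGroup ι R) where
  carrier := {g | ∀ i ∉ S, g.1 *ᵥ basisX i = basisX i ∧ g.1 *ᵥ basisY i = basisY i}
  mul_mem' hg hh i hi := by simp only [coe_mul_mulVec, hg i hi, hh i hi, and_self]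
  one_mem' i _ := by simp
  inv_mem' {g} hg i hi :=
    ⟨by conv_lhs => rw [← (hg i hi).1, coe_inv_mulVec_mulVec],
      by conv_lhs => rw [← (hg i hi).2, coe_inv_mulVec_mulVec]⟩

/-- The subgroup generated by the root elements with indices in `S`. The long roots are the
transvections along basis vectors; Eichler transformations supply the short roots. -/
def elementarySubgroup (S : Finset ι) : Subgroup (symplecticGroup ι R) :=
  Subgroup.closure
    ({g | ∃ i ∈ S, ∃ c : R, g = transvection c (basisX i) ∨ g = transvection c (basisY i)} ∪
      {g | ∃ i ∈ S, ∃ j ∈ S, i ≠ j ∧ ∃ c : R, g = eichler (c • basisX i) (basisY j)})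

theorem mulVec_mem_coordinateSubmodule {g : symplecticGroup ι R} (hg : g ∈ coordinateSubgroup S)
    {v : ι ⊕ ι → R} (hv : v ∈ coordinateSubmodule S) : g.1 *ᵥ v ∈ coordinateSubmodule S := by
  intro i hi
  constructor
  · rw [← symplecticForm_basisY_left i (_ *ᵥ _), ← (hg i hi).2, symplecticForm_mulVec_mulVec,
      symplecticForm_basisY_left, (hv i hi).1]
  · rw [← symplecticForm_basisX_right i (_ *ᵥ _), ← (hg i hi).1, symplecticForm_mulVec_mulVec,
      symplecticForm_basisX_right, (hv i hi).2]

theorem transvection_basisX_mem_elementarySubgroup {i : ι} (hi : i ∈ S) (c : R) :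
    transvection c (basisX i) ∈ elementarySubgroup S :=
  Subgroup.subset_closure (.inl ⟨i, hi, c, .inl rfl⟩)

theorem transvection_basisY_mem_elementarySubgroup {i : ι} (hi : i ∈ S) (c : R) :
    transvection c (basisY i) ∈ elementarySubgroup S :=
  Subgroup.subset_closure (.inl ⟨i, hi, c, .inr rfl⟩)

theorem eichler_mem_elementarySubgroup {i j : ι} (hi : i ∈ S) (hj : j ∈ S) (hij : i ≠ j) (c : R) :
    eichler (R := R) (c • basisX i) (basisY j) ∈ elementarySubgroup S :=
  Subgroup.subset_closure (.inr ⟨i, hi, j, hj, hij, c, rfl⟩)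

theorem eichler_smul_basisX_basisY_mulVec {i j : ι} (hij : i ≠ j) (c : R) (v : ι ⊕ ι → R) :
    (eichler (c • basisX i) (basisY j)).1 *ᵥ v =
      v - (c * v (Sum.inr i)) • basisY j + (c * v (Sum.inl j)) • basisX i := by
  rw [eichler_mulVec (by simp [hij.symm])]
  simp only [map_smul, LinearMap.smul_apply, symplecticForm_basisX_left,
    symplecticForm_basisY_left, smul_eq_mul]
  module

theorem eichler_basisX_basisY_mulVec {i j : ι} (hij : i ≠ j) (v : ι ⊕ ι → R) :
    (eichler (basisX i) (basisY j)).1 *ᵥ v =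
      v - v (Sum.inr i) • basisY j + v (Sum.inl j) • basisX i := by
  simpa using eichler_smul_basisX_basisY_mulVec hij 1 v

theorem elementarySubgroup_mono {S T : Finset ι} (hST : S ⊆ T) :
    (elementarySubgroup S : Subgroup (symplecticGroup ι R)) ≤ elementarySubgroup T := by
  refine Subgroup.closure_mono (Set.union_subset_union ?_ ?_)
  · rintro _ ⟨i, hi, h⟩
    exact ⟨i, hST hi, h⟩
  · rintro _ ⟨i, hi, j, hj, h⟩
    exact ⟨i, hST hi, j, hST hj, h⟩

theorem transvection_mem_coordinateSubgroup (c : R) {u : ι ⊕ ι → R}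
    (hu : u ∈ coordinateSubmodule S) : transvection c u ∈ coordinateSubgroup S := fun i hi ↦
  ⟨transvection_mulVec_of_orthogonal c (by simp [hu i hi]),
    transvection_mulVec_of_orthogonal c (by simp [hu i hi])⟩

theorem elementarySubgroup_le_coordinateSubgroup :
    (elementarySubgroup S : Subgroup (symplecticGroup ι R)) ≤ coordinateSubgroup S := by
  refine (Subgroup.closure_le _).2 (Set.union_subset ?_ ?_)
  · rintro _ ⟨i, hi, c, rfl | rfl⟩
    · exact transvection_mem_coordinateSubgroup c (basisX_mem_coordinateSubmodule hi)
    · exact transvection_mem_coordinateSubgroup c (basisY_mem_coordinateSubmodule hi)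
  · rintro _ ⟨i, hi, j, hj, -, c, rfl⟩
    have hX := Submodule.smul_mem _ c (basisX_mem_coordinateSubmodule (R := R) hi)
    have hY := basisY_mem_coordinateSubmodule (R := R) hj
    exact mul_mem (mul_mem (transvection_mem_coordinateSubgroup 1 (add_mem hX hY))
      (transvection_mem_coordinateSubgroup (-1) hX)) (transvection_mem_coordinateSubgroup (-1) hY)

end CommRing

variable [Fintype ι] [EuclideanDomain R] {S : Finset ι}

theorem exists_elementary_inr_eq_zero {j : ι} (hj : j ∈ S) (v : ι ⊕ ι → R) :
    ∃ g ∈ elementarySubgroup S, (g.1 *ᵥ v) (Sum.inr j) = 0 ∧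
      ∀ i ≠ j, (g.1 *ᵥ v) (Sum.inr i) = v (Sum.inr i) := by
  let P (a b : R) : Prop := ∃ g ∈ elementarySubgroup S, (g.1 *ᵥ v) (Sum.inl j) = a ∧
    (g.1 *ᵥ v) (Sum.inr j) = b ∧ ∀ i ≠ j, (g.1 *ᵥ v) (Sum.inr i) = v (Sum.inr i)
  obtain ⟨_, g, hg, -, hgj, hgi⟩ : ∃ d, P d 0 := by
    refine exists_pair_zero_right (P := P) ?_ ?_ ⟨1, one_mem _, rfl, rfl, by simp⟩
    · rintro _ _ s ⟨g, hg, rfl, rfl, hgi⟩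
      refine ⟨_, mul_mem (transvection_basisX_mem_elementarySubgroup hj (-s)) hg, ?_, ?_,
        fun i hi ↦ ?_⟩ <;> rw [coe_mul_mulVec, transvection_mulVec]
      · simp
      · simp
      · simp [hgi i hi]
    · rintro _ _ s ⟨g, hg, rfl, rfl, hgi⟩
      refine ⟨_, mul_mem (transvection_basisY_mem_elementarySubgroup hj s) hg, ?_, ?_,
        fun i hi ↦ ?_⟩ <;> rw [coe_mul_mulVec, transvection_mulVec]
      · simp
      · simp
      · simp [hi, hgi i hi]
  exact ⟨g, hg, hgj, hgi⟩

theorem exists_elementary_inl_eq_zero {i j : ι} (hi : i ∈ S) (hj : j ∈ S) (hij : i ≠ j)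
    {v : ι ⊕ ι → R} (hv : ∀ l, v (Sum.inr l) = 0) :
    ∃ g ∈ elementarySubgroup S, (g.1 *ᵥ v) (Sum.inl j) = 0 ∧
      (∀ l ≠ i, l ≠ j → (g.1 *ᵥ v) (Sum.inl l) = v (Sum.inl l)) ∧
      ∀ l, (g.1 *ᵥ v) (Sum.inr l) = 0 := by
  let P (a b : R) : Prop := ∃ g ∈ elementarySubgroup S, (g.1 *ᵥ v) (Sum.inl i) = a ∧
    (g.1 *ᵥ v) (Sum.inl j) = b ∧ (∀ l ≠ i, l ≠ j → (g.1 *ᵥ v) (Sum.inl l) = v (Sum.inl l)) ∧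
    ∀ l, (g.1 *ᵥ v) (Sum.inr l) = 0
  obtain ⟨_, g, hg, -, hgj, hgl⟩ : ∃ d, P d 0 := by
    refine exists_pair_zero_right (P := P) ?_ ?_ ⟨1, one_mem _, rfl, rfl, by simp, by simpa⟩
    · rintro _ _ s ⟨g, hg, rfl, rfl, hgl, hgr⟩
      refine ⟨_, mul_mem (eichler_mem_elementarySubgroup hi hj hij s) hg, ?_, ?_,
        fun l hli hlj ↦ ?_, fun l ↦ ?_⟩ <;>
        rw [coe_mul_mulVec, eichler_smul_basisX_basisY_mulVec hij]
      · simp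
      · simp [hij.symm]
      · simp [hli, hgl l hli hlj]
      · simp [hgr]
    · rintro _ _ s ⟨g, hg, rfl, rfl, hgl, hgr⟩
      refine ⟨_, mul_mem (eichler_mem_elementarySubgroup hj hi hij.symm s) hg, ?_, ?_,
        fun l hli hlj ↦ ?_, fun l ↦ ?_⟩ <;>
        rw [coe_mul_mulVec, eichler_smul_basisX_basisY_mulVec hij.symm]
      · simp [hij]
      · simp
      · simp [hlj, hgl l hli hlj]
      · simp [hgr]
  exact ⟨g, hg, hgj, hgl⟩

theorem exists_elementary_forall_inr_eq_zero {T : Finset ι} (hTS : T ⊆ S) (v : ι ⊕ ι → R) :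
    ∃ g ∈ elementarySubgroup S, ∀ j ∈ T, (g.1 *ᵥ v) (Sum.inr j) = 0 := by
  induction T using Finset.induction_on with
  | empty => exact ⟨1, one_mem _, by simp⟩
  | insert j T _ ih =>
    obtain ⟨hj, hT⟩ := Finset.insert_subset_iff.1 hTS
    obtain ⟨g, hg, hgT⟩ := ih hT
    obtain ⟨h, hh, hhj, hhT⟩ := exists_elementary_inr_eq_zero hj (g.1 *ᵥ v)
    refine ⟨h * g, mul_mem hh hg, fun l hl ↦ ?_⟩
    rw [coe_mul_mulVec]
    obtain rfl | hlj := eq_or_ne l j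
    · exact hhj
    · rw [hhT l hlj, hgT l (Finset.mem_of_mem_insert_of_ne hl hlj)]

theorem exists_elementary_forall_inl_eq_zero {i : ι} (hi : i ∈ S) {T : Finset ι} (hTS : T ⊆ S)
    (hiT : i ∉ T) {v : ι ⊕ ι → R} (hv : ∀ l, v (Sum.inr l) = 0) :
    ∃ g ∈ elementarySubgroup S, (∀ j ∈ T, (g.1 *ᵥ v) (Sum.inl j) = 0) ∧
      ∀ l, (g.1 *ᵥ v) (Sum.inr l) = 0 := by
  induction T using Finset.induction_on with
  | empty => exact ⟨1, one_mem _, by simp, by simpa⟩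
  | insert j T _ ih =>
    obtain ⟨hj, hT⟩ := Finset.insert_subset_iff.1 hTS
    obtain ⟨hij, hiT⟩ := not_or.1 (Finset.mem_insert.not.1 hiT)
    obtain ⟨g, hg, hgT, hgr⟩ := ih hT hiT
    obtain ⟨h, hh, hhj, hhT, hhr⟩ := exists_elementary_inl_eq_zero hi hj hij hgr
    refine ⟨h * g, mul_mem hh hg, fun l hl ↦ ?_, fun l ↦ ?_⟩ <;> rw [coe_mul_mulVec]
    · obtain rfl | hlj := eq_or_ne l j
      · exact hhj
      · have hlT := Finset.mem_of_mem_insert_of_ne hl hlj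
        rw [hhT l (ne_of_mem_of_not_mem hlT hiT) hlj, hgT l hlT]
    · exact hhr l

theorem exists_elementary_mulVec_eq_smul_basisX {i : ι} (hi : i ∈ S) {v : ι ⊕ ι → R}
    (hv : v ∈ coordinateSubmodule S) :
    ∃ g ∈ elementarySubgroup S, ∃ d : R, g.1 *ᵥ v = d • basisX i := by
  obtain ⟨g, hg, hgr⟩ := exists_elementary_forall_inr_eq_zero subset_rfl v
  have hgv := mulVec_mem_coordinateSubmodule (elementarySubgroup_le_coordinateSubgroup hg) hv
  have hr (l : ι) : (g.1 *ᵥ v) (Sum.inr l) = 0 := by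
    by_cases hl : l ∈ S
    exacts [hgr l hl, (hgv l hl).2]
  obtain ⟨h, hh, hhl, hhr⟩ := exists_elementary_forall_inl_eq_zero hi (S.erase_subset i)
    (S.notMem_erase i) hr
  have hhv := mulVec_mem_coordinateSubmodule (elementarySubgroup_le_coordinateSubgroup hh) hgv
  refine ⟨h * g, mul_mem hh hg, (h.1 *ᵥ g.1 *ᵥ v) (Sum.inl i), ?_⟩
  rw [coe_mul_mulVec]
  ext (l | l)
  · by_cases hli : l = i
    · simp [hli]
    · by_cases hl : l ∈ S
      · simp [hli, hhl l (Finset.mem_erase_of_ne_of_mem hli hl)]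
      · simp [hli, (hhv l hl).1]
  · simp [hhr l]

theorem transvection_mem_elementarySubgroup (c : R) {u : ι ⊕ ι → R}
    (hu : u ∈ coordinateSubmodule S) : transvection c u ∈ elementarySubgroup S := by
  obtain rfl | ⟨i, hi⟩ := S.eq_empty_or_nonempty
  · have hu0 : u = 0 := by
      ext (l | l)
      exacts [(hu l (Finset.notMem_empty l)).1, (hu l (Finset.notMem_empty l)).2]
    have hone : transvection c u = 1 :=
      symplecticGroup_ext fun v ↦ by simp [transvection_mulVec, hu0]
    exact hone ▸ one_mem _
  · obtain ⟨g, hg, d, hgu⟩ := exists_elementary_mulVec_eq_smul_basisX hi hu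
    have hconj : g * transvection c u * g⁻¹ = transvection (c * d ^ 2) (basisX i) := by
      rw [conj_transvection, hgu, transvection_smul]
    have hmem := hconj ▸ transvection_basisX_mem_elementarySubgroup hi (c * d ^ 2)
    rwa [Subgroup.mul_mem_cancel_right _ (inv_mem hg), Subgroup.mul_mem_cancel_left _ hg] at hmem

theorem exists_elementary_mulVec_basisX_eq {i : ι} (hi : i ∈ S) {g : symplecticGroup ι R}
    (hg : g ∈ coordinateSubgroup S) :
    ∃ h ∈ elementarySubgroup S, (h * g).1 *ᵥ basisX i = basisX i := by
  have hX : (basisX i : ι ⊕ ι → R) ∈ coordinateSubmodule S := basisX_mem_coordinateSubmodule hi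
  have hY : (basisY i : ι ⊕ ι → R) ∈ coordinateSubmodule S := basisY_mem_coordinateSubmodule hi
  obtain ⟨h, hh, d, hd⟩ :=
    exists_elementary_mulVec_eq_smul_basisX hi (mulVec_mem_coordinateSubmodule hg hX)
  rw [← coe_mul_mulVec] at hd
  have hunit : IsUnit d := by
    have hpair := symplecticForm_mulVec_mulVec (h * g) (basisY i) (basisX i)
    rw [hd] at hpair
    exact IsUnit.of_mul_eq_one _ (by simpa using hpair)
  obtain ⟨c, hc⟩ := exists_transvection_mulVec_eq (R := R) (u := d • basisX i) (v := basisY i)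
    (by simpa using hunit)
  obtain ⟨c', hc'⟩ := exists_transvection_mulVec_eq (R := R) (u := basisY i) (v := basisX i)
    (by simp)
  refine ⟨transvection c' (basisX i - basisY i) * transvection c (basisY i - d • basisX i) * h,
    mul_mem (mul_mem (transvection_mem_elementarySubgroup c' (sub_mem hX hY))
      (transvection_mem_elementarySubgroup c (sub_mem hY (Submodule.smul_mem _ d hX)))) hh, ?_⟩
  rw [mul_assoc, mul_assoc, coe_mul_mulVec, coe_mul_mulVec, hd, hc, hc']

theorem exists_elementary_mulVec_eq_basisY {i : ι} (hi : i ∈ S) {w : ι ⊕ ι → R}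
    (hw : w ∈ coordinateSubmodule S) (hwX : ω w (basisX i) = 1) :
    ∃ h ∈ elementarySubgroup S, h.1 *ᵥ basisX i = basisX i ∧ h.1 *ᵥ w = basisY i := by
  have hX : (basisX i : ι ⊕ ι → R) ∈ coordinateSubmodule S := basisX_mem_coordinateSubmodule hi
  have hY : (basisY i : ι ⊕ ι → R) ∈ coordinateSubmodule S := basisY_mem_coordinateSubmodule hi
  set w' := w + (1 - ω (basisY i) w) • basisX i with hw'
  have hmove : (transvection (ω (basisY i) w - 1) (basisX i)).1 *ᵥ w = w' := by
    rw [transvection_mulVec, symplecticForm_swap (basisX i), hwX, hw']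
    module
  have hYw' : ω (basisY i) w' = 1 := by simp [hw']
  have hw'X : ω w' (basisX i) = 1 := by simpa [hw'] using hwX
  refine ⟨transvection 1 (basisY i - w') * transvection (ω (basisY i) w - 1) (basisX i),
    mul_mem (transvection_mem_elementarySubgroup 1 (sub_mem hY
      (add_mem hw (Submodule.smul_mem _ _ hX)))) (transvection_mem_elementarySubgroup _ hX), ?_, ?_⟩
  · rw [coe_mul_mulVec, transvection_mulVec_of_orthogonal _ (symplecticForm_self _),
      transvection_mulVec_of_orthogonal]
    simp only [map_sub, LinearMap.sub_apply, hw'X]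
    simp
  · rw [coe_mul_mulVec, hmove, transvection_mulVec, map_sub, LinearMap.sub_apply, hYw',
      symplecticForm_self]
    simp

theorem coordinateSubgroup_le_elementarySubgroup :
    (coordinateSubgroup S : Subgroup (symplecticGroup ι R)) ≤ elementarySubgroup S := by
  induction S using Finset.induction_on with
  | empty =>
    intro g hg
    have hone : g = 1 := symplecticGroup_ext_basis
      (fun i ↦ by simp [(hg i (Finset.notMem_empty i)).1])
      fun i ↦ by simp [(hg i (Finset.notMem_empty i)).2]
    exact hone ▸ one_mem _
  | insert i S _ ih =>
    intro g hg
    have hi : i ∈ insert i S := S.mem_insert_self i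
    obtain ⟨h₁, hh₁, hX₁⟩ := exists_elementary_mulVec_basisX_eq hi hg
    have hg₁ := mul_mem (elementarySubgroup_le_coordinateSubgroup hh₁) hg
    obtain ⟨h₂, hh₂, hX₂, hY₂⟩ := exists_elementary_mulVec_eq_basisY hi
      (mulVec_mem_coordinateSubmodule hg₁ (basisY_mem_coordinateSubmodule hi))
      (by rw [← hX₁, symplecticForm_mulVec_mulVec]; simp)
    have hg₂ : h₂ * (h₁ * g) ∈ coordinateSubgroup S := fun j hj ↦ by
      obtain rfl | hji := eq_or_ne j i
      · exact ⟨by rw [coe_mul_mulVec, hX₁, hX₂], by rw [coe_mul_mulVec, hY₂]⟩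
      · exact mul_mem (elementarySubgroup_le_coordinateSubgroup hh₂) hg₁ j
          (by simp [hji, hj])
    have hmem := elementarySubgroup_mono (S.subset_insert i) (ih hg₂)
    rwa [Subgroup.mul_mem_cancel_left _ hh₂, Subgroup.mul_mem_cancel_left _ hh₁] at hmem

theorem elementarySubgroup_univ :
    (elementarySubgroup Finset.univ : Subgroup (symplecticGroup ι R)) = ⊤ :=
  top_le_iff.1 fun _ _ ↦ coordinateSubgroup_le_elementarySubgroup fun i hi ↦
    absurd (Finset.mem_univ i) hi

theorem eq_top_of_root_elements_mem {G : Subgroup (symplecticGroup ι ℤ)}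
    (hE : ∀ i j, i ≠ j → eichler (basisX i) (basisY j) ∈ G)
    (hX : ∀ i, transvection 1 (basisX i) ∈ G) (hY : ∀ i, transvection 1 (basisY i) ∈ G) :
    G = ⊤ := by
  rw [← top_le_iff, ← elementarySubgroup_univ, elementarySubgroup, Subgroup.closure_le]
  refine Set.union_subset ?_ ?_
  · rintro _ ⟨i, -, c, rfl | rfl⟩
    · simpa [transvection_zpow] using zpow_mem (hX i) c
    · simpa [transvection_zpow] using zpow_mem (hY i) c
  · rintro _ ⟨i, -, j, -, hij, c, rfl⟩
    have hmem := zpow_mem (hE i j hij) c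
    rwa [eichler_zpow (by simp [hij.symm]), Int.cast_id] at hmem

end ElementaryGeneration

section Unipotent

variable {ι : Type*} {R : Type*} [CommRing R]

/-- The Lagrangian coordinate subspace spanned by `basisX i` for `i ∈ A` and `basisY j` for
`j ∉ A`. -/
def coordinateLagrangian (A : Set ι) : Submodule R (ι ⊕ ι → R) where
  carrier := {v | (∀ i ∉ A, v (Sum.inl i) = 0) ∧ ∀ i ∈ A, v (Sum.inr i) = 0}
  add_mem' hu hv :=
    ⟨fun i hi ↦ by simp [hu.1 i hi, hv.1 i hi], fun i hi ↦ by simp [hu.2 i hi, hv.2 i hi]⟩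
  zero_mem' := by simp
  smul_mem' c v hv := ⟨fun i hi ↦ by simp [hv.1 i hi], fun i hi ↦ by simp [hv.2 i hi]⟩

variable [DecidableEq ι] {A : Set ι}

theorem basisX_mem_coordinateLagrangian {i : ι} (hi : i ∈ A) :
    (basisX i : ι ⊕ ι → R) ∈ coordinateLagrangian A :=
  ⟨fun j hj ↦ by simp [ne_of_mem_of_not_mem hi hj |>.symm], by simp⟩

theorem basisY_mem_coordinateLagrangian {i : ι} (hi : i ∉ A) :
    (basisY i : ι ⊕ ι → R) ∈ coordinateLagrangian A :=
  ⟨by simp, fun j hj ↦ by simp [ne_of_mem_of_not_mem hj hi]⟩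

variable [Fintype ι]

local notation "ω" => symplecticForm

theorem symplecticForm_eq_zero_of_mem_coordinateLagrangian {u v : ι ⊕ ι → R}
    (hu : u ∈ coordinateLagrangian A) (hv : v ∈ coordinateLagrangian A) : ω u v = 0 := by
  rw [symplecticForm_apply]
  refine Finset.sum_eq_zero fun i _ ↦ ?_
  by_cases hi : i ∈ A
  · simp [hu.2 i hi, hv.2 i hi]
  · simp [hu.1 i hi, hv.1 i hi]

/-- The elements acting trivially on `L` and on the quotient by `L`. For isotropic `L` this is the
abelian unipotent radical of the stabilizer of `L`. -/
def unipotentSubgroup (L : Submodule R (ι ⊕ ι → R)) : Subgroup (symplecticGroup ι R) where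
  carrier := {g | (∀ v ∈ L, g.1 *ᵥ v = v) ∧ ∀ v, g.1 *ᵥ v - v ∈ L}
  mul_mem' {g h} hg hh := by
    refine ⟨fun v hv ↦ by rw [coe_mul_mulVec, hh.1 v hv, hg.1 v hv], fun v ↦ ?_⟩
    rw [coe_mul_mulVec, ← sub_add_sub_cancel _ (h.1 *ᵥ v)]
    exact add_mem (hg.2 _) (hh.2 v)
  one_mem' := by simp
  inv_mem' {g} hg := by
    refine ⟨fun v hv ↦ by conv_lhs => rw [← hg.1 v hv, coe_inv_mulVec_mulVec], fun v ↦ ?_⟩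
    have hneg := neg_mem (hg.2 (g⁻¹.1 *ᵥ v))
    rwa [coe_mulVec_inv_mulVec, neg_sub] at hneg

theorem commute_of_mem_unipotentSubgroup {L : Submodule R (ι ⊕ ι → R)} {g h : symplecticGroup ι R}
    (hg : g ∈ unipotentSubgroup L) (hh : h ∈ unipotentSubgroup L) : Commute g h :=
  symplecticGroup_ext fun v ↦ by
    have hgh := hg.1 _ (hh.2 v)
    have hhg := hh.1 _ (hg.2 v)
    rw [mulVec_sub, sub_eq_iff_eq_add] at hgh hhg
    rw [coe_mul_mulVec, coe_mul_mulVec, hgh, hhg]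
    abel

theorem transvection_mem_unipotentSubgroup (c : R) {u : ι ⊕ ι → R}
    (hu : u ∈ coordinateLagrangian A) :
    transvection c u ∈ unipotentSubgroup (coordinateLagrangian A) :=
  ⟨fun _ hv ↦ transvection_mulVec_of_orthogonal c
    (symplecticForm_eq_zero_of_mem_coordinateLagrangian hu hv), fun v ↦ by
      simpa [transvection_mulVec] using Submodule.smul_mem _ (c * ω u v) hu⟩

theorem eichler_mem_unipotentSubgroup {u w : ι ⊕ ι → R} (hu : u ∈ coordinateLagrangian A)
    (hw : w ∈ coordinateLagrangian A) :
    eichler u w ∈ unipotentSubgroup (coordinateLagrangian A) :=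
  mul_mem (mul_mem (transvection_mem_unipotentSubgroup 1 (add_mem hu hw))
    (transvection_mem_unipotentSubgroup (-1) hu)) (transvection_mem_unipotentSubgroup (-1) hw)

end Unipotent

section Permutations

variable {ι : Type*} [Fintype ι] [DecidableEq ι] {R : Type*} [CommRing R]

theorem permMatrixHom_sumCongr_mulVec (σ : Equiv.Perm ι) (v : ι ⊕ ι → R) :
    permMatrixHom (Equiv.Perm.sumCongr σ σ) *ᵥ v = v ∘ Sum.map ⇑σ⁻¹ ⇑σ⁻¹ := by
  rw [permMatrixHom_apply, permMatrix_mulVec]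
  rfl

theorem permMatrixHom_sumCongr_mem (σ : Equiv.Perm ι) :
    permMatrixHom (R := R) (Equiv.Perm.sumCongr σ σ) ∈ symplecticGroup ι R :=
  mem_symplecticGroup_iff_symplecticForm.2 fun u v ↦ by
    simp only [permMatrixHom_sumCongr_mulVec, symplecticForm_apply, Function.comp_apply,
      Sum.map_inl, Sum.map_inr]
    exact Equiv.sum_comp σ⁻¹ fun i ↦
      u (Sum.inr i) * v (Sum.inl i) - u (Sum.inl i) * v (Sum.inr i)

/-- The embedding of the symmetric group into the symplectic group which permutes the vectors
`basisX i` and the vectors `basisY i` simultaneously. -/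
def permSymplectic : Equiv.Perm ι →* symplecticGroup ι R where
  toFun σ := ⟨permMatrixHom (Equiv.Perm.sumCongr σ σ), permMatrixHom_sumCongr_mem σ⟩
  map_one' := Subtype.ext (by simp [Equiv.Perm.sumCongr_one])
  map_mul' σ τ := Subtype.ext (by simp [← Equiv.Perm.sumCongr_mul])

theorem permSymplectic_mulVec (σ : Equiv.Perm ι) (v : ι ⊕ ι → R) :
    (permSymplectic σ).1 *ᵥ v = v ∘ Sum.map ⇑σ⁻¹ ⇑σ⁻¹ :=
  permMatrixHom_sumCongr_mulVec σ v

theorem permSymplectic_mulVec_basisX (σ : Equiv.Perm ι) (i : ι) :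
    (permSymplectic σ).1 *ᵥ basisX i = (basisX (σ i) : ι ⊕ ι → R) := by
  ext (j | j) <;> simp [permSymplectic_mulVec, Equiv.symm_apply_eq]

theorem permSymplectic_mulVec_basisY (σ : Equiv.Perm ι) (i : ι) :
    (permSymplectic σ).1 *ᵥ basisY i = (basisY (σ i) : ι ⊕ ι → R) := by
  ext (j | j) <;> simp [permSymplectic_mulVec, Equiv.symm_apply_eq]

theorem permSymplectic_injective [Nontrivial R] :
    Function.Injective (permSymplectic : Equiv.Perm ι →* symplecticGroup ι R) := by
  intro σ τ hστ
  ext i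
  have hX : (basisX (σ i) : ι ⊕ ι → R) = basisX (τ i) := by
    rw [← permSymplectic_mulVec_basisX, hστ, permSymplectic_mulVec_basisX]
  simpa using congrFun hX (Sum.inl (σ i))

theorem conj_permSymplectic_eichler (σ : Equiv.Perm ι) (i j : ι) :
    permSymplectic σ * eichler (basisX i) (basisY j) * (permSymplectic σ)⁻¹ =
      (eichler (basisX (σ i)) (basisY (σ j)) : symplecticGroup ι R) := by
  rw [conj_eichler, permSymplectic_mulVec_basisX, permSymplectic_mulVec_basisY]

end Permutations

section EichlerLinked

variable {ι : Type*} [Fintype ι] [DecidableEq ι] {R : Type*} [CommRing R]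
  {G : Subgroup (symplecticGroup ι R)}

/-- The root element attached to the pair `i, j` lies in `G`. The diagonal is included by
convention, so that the relation is reflexive. -/
def EichlerLinked (G : Subgroup (symplecticGroup ι R)) (i j : ι) : Prop :=
  i ≠ j → eichler (basisX i) (basisY j) ∈ G

theorem EichlerLinked.refl (i : ι) : EichlerLinked G i i := fun hi ↦ (hi rfl).elim

theorem EichlerLinked.trans {i j l : ι} (hij : EichlerLinked G i j) (hjl : EichlerLinked G j l) :
    EichlerLinked G i l := by
  obtain rfl | hne₁ := eq_or_ne i j
  · exact hjl
  obtain rfl | hne₂ := eq_or_ne j l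
  · exact hij
  intro hil
  rw [← commutator_eichler (u := basisX i) (w := basisY j) (u' := basisX j) (w' := basisY l)
    (by simp [hne₁.symm]) (by simp [hne₂.symm]) (by simp) (by simp [hil.symm]) (by simp)
    (by simp)]
  exact mul_mem (mul_mem (mul_mem (hij hne₁) (hjl hne₂)) (inv_mem (hij hne₁)))
    (inv_mem (hjl hne₂))

theorem eichlerLinked_perm_iff {σ : Equiv.Perm ι} (hσ : permSymplectic σ ∈ G) {i j : ι} :
    EichlerLinked G (σ i) (σ j) ↔ EichlerLinked G i j := by
  rw [EichlerLinked, EichlerLinked, σ.injective.ne_iff, ← conj_permSymplectic_eichler,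
    Subgroup.mul_mem_cancel_right _ (inv_mem hσ), Subgroup.mul_mem_cancel_left _ hσ]

end EichlerLinked

section Twist

variable {ι : Type*} [Fintype ι] [DecidableEq ι] {R : Type*} [CommRing R]
  {G : Subgroup (symplecticGroup ι R)} {σ τ : Equiv.Perm ι} {p q a b : ι}

open scoped commutatorElement

theorem commutatorElement_mul_mul_of_commute {H : Type*} [Group H] {e r e' r' : H}
    (hr : Commute r (e' * r')) (hr' : Commute r' e) : ⁅e * r, e' * r'⁆ = ⁅e, e'⁆ := by
  calc ⁅e * r, e' * r'⁆ = e * (r * (e' * r')) * r⁻¹ * e⁻¹ * r'⁻¹ * e'⁻¹ := by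
        rw [commutatorElement_def]; group
    _ = e * e' * (r' * e⁻¹) * r'⁻¹ * e'⁻¹ := by rw [hr.eq]; group
    _ = ⁅e, e'⁆ := by rw [hr'.inv_right.eq, commutatorElement_def]; group

/-- The element by which one of the permutations is conjugated to obtain the fourth generator. The
Eichler factor provides the short roots and the transvection provides the long roots. -/
def twist (p q a b : ι) : symplecticGroup ι R :=
  eichler (basisX p) (basisY q) * transvection 1 (basisX a + basisY b)

theorem conj_permSymplectic_twist (σ : Equiv.Perm ι) (p q a b : ι) :
    permSymplectic σ * twist p q a b * (permSymplectic σ)⁻¹ =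
      (twist (σ p) (σ q) (σ a) (σ b) : symplecticGroup ι R) := by
  rw [twist, ← conj_mul, conj_eichler, conj_transvection, mulVec_add]
  simp only [permSymplectic_mulVec_basisX, permSymplectic_mulVec_basisY, twist]

theorem twist_mul_inv_twist_mem (hσ : permSymplectic σ ∈ G)
    (htwist : twist p q a b * permSymplectic σ * (twist p q a b)⁻¹ ∈ G) :
    twist p q a b * (twist (σ p) (σ q) (σ a) (σ b))⁻¹ ∈ G := by
  convert mul_mem htwist (inv_mem hσ) using 1
  rw [← conj_permSymplectic_twist]
  group

theorem transvection_basisX_add_basisY_mem_unipotentSubgroup {A : Set ι} (ha : a ∈ A)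
    (hb : b ∉ A) : (transvection 1 (basisX a + basisY b) : symplecticGroup ι R) ∈
      unipotentSubgroup (coordinateLagrangian A) :=
  transvection_mem_unipotentSubgroup 1
    (add_mem (basisX_mem_coordinateLagrangian ha) (basisY_mem_coordinateLagrangian hb))

theorem eichler_basisX_basisY_mem_unipotentSubgroup {A : Set ι} (hp : p ∈ A) (hq : q ∉ A) :
    (eichler (basisX p) (basisY q) : symplecticGroup ι R) ∈
      unipotentSubgroup (coordinateLagrangian A) :=
  eichler_mem_unipotentSubgroup (basisX_mem_coordinateLagrangian hp)
    (basisY_mem_coordinateLagrangian hq)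

theorem twist_mem_unipotentSubgroup {A : Set ι} (hp : p ∈ A) (hq : q ∉ A) (ha : a ∈ A)
    (hb : b ∉ A) : (twist p q a b : symplecticGroup ι R) ∈
      unipotentSubgroup (coordinateLagrangian A) :=
  mul_mem (eichler_basisX_basisY_mem_unipotentSubgroup hp hq)
    (transvection_basisX_add_basisY_mem_unipotentSubgroup ha hb)

/- All factors except the root elements for `(p, q)` and `(q, s)` commute with everything that
occurs, because they lie in a common abelian unipotent radical. -/
theorem commutator_twist_mul {A : Set ι} {s a' b' : ι} {y y' : symplecticGroup ι R} (hp : p ∈ A)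
    (hq : q ∉ A) (hs : s ∉ insert q A) (ha : a ∈ A) (hb : b ∉ insert q A) (ha' : a' ∈ A)
    (hb' : b' ∉ insert q A) (hy : y ∈ unipotentSubgroup (coordinateLagrangian (insert q A)))
    (hy'A : y' ∈ unipotentSubgroup (coordinateLagrangian A))
    (hy'q : y' ∈ unipotentSubgroup (coordinateLagrangian (insert q A))) :
    ⁅twist p q a b * y, twist q s a' b' * y'⁆ = eichler (basisX p) (basisY s) := by
  have hsub : A ⊆ insert q A := Set.subset_insert _ _
  have hcomm : Commute (transvection 1 (basisX a + basisY b) * y) (twist q s a' b' * y') :=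
    commute_of_mem_unipotentSubgroup
      (mul_mem (transvection_basisX_add_basisY_mem_unipotentSubgroup (hsub ha) hb) hy)
      (mul_mem (twist_mem_unipotentSubgroup (Set.mem_insert _ _) hs (hsub ha') hb') hy'q)
  have hcomm' : Commute (transvection 1 (basisX a' + basisY b') * y')
      (eichler (basisX p) (basisY q)) :=
    commute_of_mem_unipotentSubgroup
      (mul_mem (transvection_basisX_add_basisY_mem_unipotentSubgroup ha' (mt (@hsub _) hb')) hy'A)
      (eichler_basisX_basisY_mem_unipotentSubgroup hp hq)
  rw [twist, mul_assoc] at hcomm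
  rw [twist, twist, mul_assoc, mul_assoc, commutatorElement_mul_mul_of_commute hcomm hcomm']
  have hqp : q ≠ p := (ne_of_mem_of_not_mem hp hq).symm
  have hsp : s ≠ p := (ne_of_mem_of_not_mem (hsub hp) hs).symm
  have hsq : s ≠ q := (ne_of_mem_of_not_mem (Set.mem_insert q A) hs).symm
  exact commutator_eichler (by simp [hqp]) (by simp [hsq]) (by simp) (by simp [hsp]) (by simp)
    (by simp)

theorem eichlerLinked_of_conj_twist_mem (hσ : permSymplectic σ ∈ G) (hτ : permSymplectic τ ∈ G)
    (htwist : twist p (τ p) a b * permSymplectic σ * (twist p (τ p) a b)⁻¹ ∈ G) {A : Set ι}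
    (hA : {p, a, σ p, σ a, τ a, τ (σ p), τ (σ a)} ⊆ A) (hτp : τ p ∉ A)
    (hAc : Disjoint (insert (τ p) A)
      {b, τ (τ p), σ (τ p), σ b, τ b, τ (σ (τ p)), τ (σ b)}) :
    EichlerLinked G p (τ (τ p)) := by
  simp only [Set.insert_subset_iff, Set.singleton_subset_iff] at hA
  simp only [Set.disjoint_insert_right, Set.disjoint_singleton_right] at hAc
  obtain ⟨hp, ha, hσp, hσa, hτa, hτσp, hτσa⟩ := hA
  obtain ⟨hb, hττp, hστp, hσb, hτb, hτστp, hτσb⟩ := hAc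
  have hsub : A ⊆ insert (τ p) A := Set.subset_insert _ _
  have hratio := twist_mul_inv_twist_mem hσ htwist
  have hconj := mul_mem (mul_mem hτ hratio) (inv_mem hτ)
  rw [← conj_mul, ← conj_inv, conj_permSymplectic_twist, conj_permSymplectic_twist] at hconj
  intro _
  rw [← commutator_twist_mul hp hτp hττp ha hb hτa hτb
    (inv_mem (twist_mem_unipotentSubgroup (hsub hσp) hστp (hsub hσa) hσb))
    (inv_mem (twist_mem_unipotentSubgroup hτσp (mt (@hsub _) hτστp) hτσa (mt (@hsub _) hτσb)))
    (inv_mem (twist_mem_unipotentSubgroup (hsub hτσp) hτστp (hsub hτσa) hτσb))]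
  exact mul_mem (mul_mem (mul_mem hratio hconj) (inv_mem hratio)) (inv_mem hconj)

end Twist

section Ratio

variable {ι : Type*} [Fintype ι] [DecidableEq ι] {R : Type*} [CommRing R]
  {G : Subgroup (symplecticGroup ι R)}

local notation "ω" => symplecticForm

theorem transvection_mulVec_mem_iff {g : symplecticGroup ι R} (hg : g ∈ G) {c : R}
    {u : ι ⊕ ι → R} : transvection c (g.1 *ᵥ u) ∈ G ↔ transvection c u ∈ G := by
  rw [← conj_transvection, Subgroup.mul_mem_cancel_right _ (inv_mem hg),
    Subgroup.mul_mem_cancel_left _ hg]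

theorem eichler_mulVec_mem {g : symplecticGroup ι R} (hg : g ∈ G) {u w : ι ⊕ ι → R}
    (huw : eichler u w ∈ G) : eichler (g.1 *ᵥ u) (g.1 *ᵥ w) ∈ G :=
  conj_eichler g u w ▸ mul_mem (mul_mem hg huw) (inv_mem hg)

theorem transvection_mul_eichler_mem_of_ratio_mem {u z e : ι ⊕ ι → R} {g : symplecticGroup ι R}
    (hg : g ∈ G) (hgu : g.1 *ᵥ u = e + u) (hgz : g.1 *ᵥ z = z) (heu : ω e u = 0)
    (hratio : transvection 1 u * (transvection 1 z)⁻¹ ∈ G) :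
    transvection 1 e * eichler e u ∈ G := by
  have hconj := mul_mem (mul_mem hg hratio) (inv_mem hg)
  rw [← conj_mul, ← conj_inv, conj_transvection, conj_transvection, hgu, hgz,
    transvection_add heu] at hconj
  convert mul_mem hconj (inv_mem hratio) using 1
  group

theorem transvection_mem_of_transvection_mul_eichler_mem {α β e f : ι ⊕ ι → R}
    {g h : symplecticGroup ι R} (hg : g ∈ G) (hgu : g.1 *ᵥ (α + β) = f + (α + β))
    (hge : g.1 *ᵥ e = e) (hh : h ∈ G) (hhf : h.1 *ᵥ f = α + f) (hhe : h.1 *ᵥ e = e)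
    (hαe : ω α e = 0) (hβe : ω β e = 0) (hfe : ω f e = 0) (hαβ : ω α β = 0) (hαf : ω α f = 0)
    (hfβ : ω f β = 0) (hβ : eichler β e ∈ G)
    (hmem : transvection 1 e * eichler e (α + β) ∈ G) : transvection 1 e ∈ G := by
  have hue : ω (α + β) e = 0 := by simp [hαe, hβe]
  have hfu : ω f (α + β) = 0 := by simp [symplecticForm_eq_zero_comm.1 hαf, hfβ]
  rw [eichler_comm (symplecticForm_eq_zero_comm.1 hue)] at hmem
  have hf : eichler f e ∈ G := by
    have hconj := mul_mem (mul_mem hg hmem) (inv_mem hg)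
    rw [← conj_mul, conj_transvection, conj_eichler, hge, hgu,
      eichler_add_left hfe hue hfu, ← mul_assoc,
      ← (commute_eichler_transvection 1 hfe hfe (symplecticForm_self e)).eq, mul_assoc] at hconj
    exact (Subgroup.mul_mem_cancel_right _ hmem).1 hconj
  have hα : eichler α e ∈ G := by
    have hconj := eichler_mulVec_mem hh hf
    rwa [hhf, hhe, eichler_add_left hαe hfe hαf, Subgroup.mul_mem_cancel_right _ hf] at hconj
  rwa [eichler_add_left hαe hβe hαβ, Subgroup.mul_mem_cancel_right _ (mul_mem hα hβ)] at hmem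

theorem transvection_basisX_mem_of_ratio_mem (hlink : ∀ i j, EichlerLinked G i j)
    {a b a' b' e f : ι} (hab : a ≠ b) (haa' : a ≠ a') (hea : e ≠ a) (heb : e ≠ b) (heb' : e ≠ b')
    (hfa : f ≠ a) (hfb : f ≠ b) (hfe : f ≠ e)
    (hratio : transvection 1 (basisX a + basisY b) *
      (transvection 1 (basisX a' + basisY b'))⁻¹ ∈ G) : transvection 1 (basisX e) ∈ G := by
  have hmem : transvection 1 (basisX e) * eichler (basisX e) (basisX a + basisY b) ∈ G :=
    transvection_mul_eichler_mem_of_ratio_mem (hlink e a hea)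
      (by simp [eichler_basisX_basisY_mulVec hea, heb, add_comm])
      (by simp [eichler_basisX_basisY_mulVec hea, haa', heb']) (by simp [heb]) hratio
  have hβ : eichler (basisY b) (basisX e) ∈ G := by
    rw [eichler_comm (by simp [heb])]
    exact hlink e b heb
  exact transvection_mem_of_transvection_mul_eichler_mem (f := basisX f)
    (hlink f a hfa) (by simp [eichler_basisX_basisY_mulVec hfa, hfb, add_comm])
    (by simp [eichler_basisX_basisY_mulVec hfa, hea.symm]) (hlink a f hfa.symm)
    (by simp [eichler_basisX_basisY_mulVec hfa.symm, add_comm])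
    (by simp [eichler_basisX_basisY_mulVec hfa.symm, hfe]) (by simp) (by simp [heb])
    (by simp) (by simp [hab.symm]) (by simp) (by simp [hfb.symm]) hβ hmem

theorem transvection_basisY_mem_of_ratio_mem (hlink : ∀ i j, EichlerLinked G i j)
    {a b a' b' e f : ι} (hab : a ≠ b) (hbb' : b ≠ b') (hea : e ≠ a) (heb : e ≠ b) (hea' : e ≠ a')
    (hfa : f ≠ a) (hfb : f ≠ b) (hfe : f ≠ e)
    (hratio : transvection 1 (basisX a + basisY b) *
      (transvection 1 (basisX a' + basisY b'))⁻¹ ∈ G) : transvection 1 (basisY e) ∈ G := by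
  rw [add_comm (basisX a)] at hratio
  have hmem : transvection 1 (-basisY e) * eichler (-basisY e) (basisY b + basisX a) ∈ G :=
    transvection_mul_eichler_mem_of_ratio_mem (hlink b e heb.symm)
      (by simp [eichler_basisX_basisY_mulVec heb.symm, hea, sub_eq_neg_add])
      (by simp [eichler_basisX_basisY_mulVec heb.symm, hbb', hea']) (by simp [hea]) hratio
  have hβ : eichler (basisX a) (-basisY e) ∈ G := by
    rw [eichler_comm (by simp [hea.symm]), eichler_neg_left (by simp [hea.symm]),
      eichler_comm (by simp [hea.symm])]
    exact inv_mem (hlink a e hea.symm)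
  rw [← transvection_neg]
  exact transvection_mem_of_transvection_mul_eichler_mem (f := -basisY f)
    (hlink b f hfb.symm)
    (by simp [eichler_basisX_basisY_mulVec hfb.symm, hfa, sub_eq_neg_add])
    (by simp [eichler_basisX_basisY_mulVec hfb.symm, heb.symm]) (hlink f b hfb)
    (by simp [eichler_basisX_basisY_mulVec hfb, sub_eq_neg_add])
    (by simp [eichler_basisX_basisY_mulVec hfb, hfe]) (by simp) (by simp [hea.symm])
    (by simp) (by simp [hab]) (by simp) (by simp [hfa.symm]) hβ hmem

theorem transvection_basisX_mem_of_eichlerLinked (hlink : ∀ i j, EichlerLinked G i j) {e : ι}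
    (he : transvection 1 (basisX e) ∈ G) (i : ι) : transvection 1 (basisX i) ∈ G := by
  obtain rfl | hie := eq_or_ne i e
  · exact he
  have hmove : (eichler (basisX i) (basisY e)).1 *ᵥ basisX e =
      (eichler (basisX e) (basisY i)).1 *ᵥ (basisX i : ι ⊕ ι → R) := by
    simp [eichler_basisX_basisY_mulVec hie, eichler_basisX_basisY_mulVec hie.symm, add_comm]
  rwa [← transvection_mulVec_mem_iff (hlink e i hie.symm), ← hmove,
    transvection_mulVec_mem_iff (hlink i e hie)]

theorem transvection_basisY_mem_of_eichlerLinked (hlink : ∀ i j, EichlerLinked G i j) {e : ι}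
    (he : transvection 1 (basisY e) ∈ G) (i : ι) : transvection 1 (basisY i) ∈ G := by
  obtain rfl | hie := eq_or_ne i e
  · exact he
  have hmove : (eichler (basisX i) (basisY e)).1 *ᵥ basisY i =
      -((eichler (basisX e) (basisY i)).1 *ᵥ (basisY e : ι ⊕ ι → R)) := by
    simp [eichler_basisX_basisY_mulVec hie, eichler_basisX_basisY_mulVec hie.symm]
  rwa [← transvection_mulVec_mem_iff (hlink i e hie), hmove, transvection_neg,
    transvection_mulVec_mem_iff (hlink e i hie.symm)]

theorem eq_top_of_ratio_mem {G : Subgroup (symplecticGroup ι ℤ)}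
    (hlink : ∀ i j, EichlerLinked G i j) {a b a' b' e f : ι}
    (hnodup : [a, b, a', b', e, f].Nodup)
    (hratio : transvection 1 (basisX a + basisY b) *
      (transvection 1 (basisX a' + basisY b'))⁻¹ ∈ G) : G = ⊤ := by
  simp only [List.nodup_cons, List.mem_cons, not_or, List.not_mem_nil, not_false_eq_true,
    and_true, List.nodup_nil] at hnodup
  obtain ⟨⟨hab, haa', -, hae, haf⟩, ⟨-, hbb', hbe, hbf⟩, ⟨-, ha'e, -⟩, ⟨hb'e, -⟩, hef⟩ := hnodup
  refine eq_top_of_root_elements_mem hlink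
    (transvection_basisX_mem_of_eichlerLinked hlink (e := e) ?_)
    (transvection_basisY_mem_of_eichlerLinked hlink (e := e) ?_)
  · exact transvection_basisX_mem_of_ratio_mem hlink hab haa' (Ne.symm hae) (Ne.symm hbe)
      (Ne.symm hb'e) (Ne.symm haf) (Ne.symm hbf) (Ne.symm hef) hratio
  · exact transvection_basisY_mem_of_ratio_mem hlink hab hbb' (Ne.symm hae) (Ne.symm hbe)
      (Ne.symm ha'e) (Ne.symm haf) (Ne.symm hbf) (Ne.symm hef) hratio

theorem ratio_mem_of_conj_twist_mem {σ : Equiv.Perm ι} {p q a b : ι} (hpq : p ≠ q)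
    (hlink : ∀ i j, EichlerLinked G i j) (hσ : permSymplectic σ ∈ G)
    (htwist : twist p q a b * permSymplectic σ * (twist p q a b)⁻¹ ∈ G) :
    transvection 1 (basisX a + basisY b) *
      (transvection 1 (basisX (σ a) + basisY (σ b)))⁻¹ ∈ G := by
  have hratio := twist_mul_inv_twist_mem hσ htwist
  rwa [twist, twist, _root_.mul_inv_rev, ← mul_assoc,
    Subgroup.mul_mem_cancel_right _ (inv_mem (hlink (σ p) (σ q) (σ.injective.ne hpq))), mul_assoc,
    Subgroup.mul_mem_cancel_left _ (hlink p q hpq)] at hratio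

end Ratio

section Connectivity

variable {ι : Type*} [Fintype ι] [DecidableEq ι] {R : Type*} [CommRing R]
  {G : Subgroup (symplecticGroup ι R)} {σ τ : Equiv.Perm ι} {o p : ι}

theorem eichlerLinked_base (hσ : permSymplectic σ ∈ G) (hτ : permSymplectic τ ∈ G)
    (hσp : σ p = o) (hττp : τ (τ p) = σ o) (hτo : τ o = o) (hστ : σ (σ o) = τ (σ o))
    (hlink : EichlerLinked G p (τ (τ p))) :
    EichlerLinked G o (σ o) ∧ EichlerLinked G (σ o) o := by
  have hout : EichlerLinked G o (σ o) := by
    rwa [hττp, ← eichlerLinked_perm_iff hσ, hσp, hστ, ← hτo, eichlerLinked_perm_iff hτ,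
      hτo] at hlink
  have hpo : EichlerLinked G p o := by
    rwa [← eichlerLinked_perm_iff hσ, hσp]
  refine ⟨hout, ?_⟩
  rwa [← hττp, ← hτo, eichlerLinked_perm_iff hτ, ← hτo, eichlerLinked_perm_iff hτ]

theorem eichlerLinked_of_reflTransGen {s : Set (Equiv.Perm ι)}
    (hs : ∀ π ∈ s, permSymplectic π ∈ G ∧ EichlerLinked G o (π o) ∧ EichlerLinked G (π o) o)
    (hconn : ∀ i, Relation.ReflTransGen (fun j l ↦ ∃ π ∈ s, π j = l) o i) (i j : ι) :
    EichlerLinked G i j := by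
  have hboth (l : ι) : EichlerLinked G o l ∧ EichlerLinked G l o := by
    induction hconn l with
    | refl => exact ⟨.refl o, .refl o⟩
    | tail _ hstep ih =>
      obtain ⟨π, hπs, rfl⟩ := hstep
      obtain ⟨hπ, hout, hin⟩ := hs π hπs
      exact ⟨hout.trans ((eichlerLinked_perm_iff hπ).2 ih.1),
        ((eichlerLinked_perm_iff hπ).2 ih.2).trans hin⟩
  exact (hboth i).2.trans (hboth j).1

theorem eq_top_of_conj_twist_mem {G : Subgroup (symplecticGroup ι ℤ)} {ρ : Equiv.Perm ι}
    {a b : ι} (hσ : permSymplectic σ ∈ G) (hτ : permSymplectic τ ∈ G)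
    (hρ : permSymplectic ρ ∈ G)
    (htwist : twist p (τ p) a b * permSymplectic σ * (twist p (τ p) a b)⁻¹ ∈ G) {A : Set ι}
    (hA : {p, a, σ p, σ a, τ a, τ (σ p), τ (σ a)} ⊆ A) (hτp : τ p ∉ A)
    (hAc : Disjoint (insert (τ p) A)
      {b, τ (τ p), σ (τ p), σ b, τ b, τ (σ (τ p)), τ (σ b)})
    (hσp : σ p = o) (hττp : τ (τ p) = σ o) (hτo : τ o = o) (hστ : σ (σ o) = τ (σ o))
    (hρo : ρ o = o) (hnodup : [a, b, σ a, σ b, o, σ o].Nodup)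
    (hconn : ∀ i, Relation.ReflTransGen
      (fun j l ↦ ∃ π ∈ ({σ, τ, ρ} : Set (Equiv.Perm ι)), π j = l) o i) : G = ⊤ := by
  have hbase := eichlerLinked_base hσ hτ hσp hττp hτo hστ
    (eichlerLinked_of_conj_twist_mem hσ hτ htwist hA hτp hAc)
  have hlink := eichlerLinked_of_reflTransGen (G := G) (o := o) (s := {σ, τ, ρ}) (by
    rintro π (rfl | rfl | rfl)
    · exact ⟨hσ, hbase⟩
    · exact ⟨hτ, by rw [hτo]; exact ⟨.refl o, .refl o⟩⟩
    · exact ⟨hρ, by rw [hρo]; exact ⟨.refl o, .refl o⟩⟩) hconn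
  have hpτp : p ≠ τ p := ne_of_mem_of_not_mem (hA (Set.mem_insert _ _)) hτp
  exact eq_top_of_ratio_mem hlink hnodup (ratio_mem_of_conj_twist_mem hpτp hlink hσ htwist)

end Connectivity

section BlockCycles

variable {k m n p : ℕ}

/-- The embedding of `m` consecutive blocks of `k` points starting at the point `p`. -/
def blockEmbedding (h : p + m * k ≤ n) : (Σ _ : Fin m, Fin k) ↪ Fin n :=
  ((Equiv.sigmaEquivProd _ _).trans finProdFinEquiv).toEmbedding.trans
    ((Fin.natAddEmb p).trans (Fin.castLEEmb h))

theorem coe_blockEmbedding (h : p + m * k ≤ n) (t : Fin m) (r : Fin k) :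
    (blockEmbedding h ⟨t, r⟩ : ℕ) = p + (r + k * t) :=
  rfl

/-- The permutation that rotates each of `m` consecutive blocks of `k` points starting at `p`. -/
noncomputable def blockCycles (h : p + m * k ≤ n) : Equiv.Perm (Fin n) :=
  Equiv.Perm.viaEmbeddingHom (blockEmbedding h)
    (Equiv.Perm.sigmaCongrRightHom _ fun _ ↦ finRotate k)

variable (h : p + m * k ≤ n)

theorem blockCycles_blockEmbedding (t : Fin m) (r : Fin k) :
    blockCycles h (blockEmbedding h ⟨t, r⟩) = blockEmbedding h ⟨t, finRotate k r⟩ :=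
  Equiv.Perm.viaEmbedding_apply ..

theorem blockCycles_eq_self {x : Fin n} (hx : (x : ℕ) < p) : blockCycles h x = x := by
  refine Equiv.Perm.viaEmbedding_apply_of_notMem _ _ _ ?_
  rintro ⟨⟨t, r⟩, rfl⟩
  rw [coe_blockEmbedding] at hx
  lia

theorem coe_blockCycles_of_lt {x : Fin n} {t r : ℕ} (ht : t < m) (hr : r + 1 < k)
    (hx : (x : ℕ) = p + (r + k * t)) : (blockCycles h x : ℕ) = x + 1 := by
  obtain rfl : x = blockEmbedding h ⟨⟨t, ht⟩, ⟨r, by lia⟩⟩ := Fin.ext hx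
  obtain ⟨k, rfl⟩ := Nat.exists_eq_add_one_of_ne_zero (by lia : k ≠ 0)
  rw [blockCycles_blockEmbedding, finRotate_of_lt (by lia), coe_blockEmbedding,
    coe_blockEmbedding]
  lia

theorem coe_blockCycles_last {x : Fin n} {t : ℕ} (ht : t < m) (hk : 0 < k)
    (hx : (x : ℕ) + 1 = p + (k + k * t)) : (blockCycles h x : ℕ) = p + k * t := by
  obtain rfl : x = blockEmbedding h ⟨⟨t, ht⟩, ⟨k - 1, by lia⟩⟩ :=
    Fin.ext (by rw [coe_blockEmbedding]; lia)
  obtain ⟨k, rfl⟩ := Nat.exists_eq_add_one_of_ne_zero hk.ne'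
  have hrot : finRotate (k + 1) ⟨k + 1 - 1, by lia⟩ = ⟨0, hk⟩ := finRotate_last'
  rw [blockCycles_blockEmbedding, hrot, coe_blockEmbedding, Nat.zero_add]

theorem coe_blockCycles_first {x : Fin n} (hm : 0 < m) (hpx : p ≤ x) (hx : (x : ℕ) + 1 < p + k) :
    (blockCycles h x : ℕ) = x + 1 :=
  coe_blockCycles_of_lt h (r := x - p) hm (by lia) (by lia)

theorem coe_blockCycles_second {x : Fin n} (hm : 1 < m) (hpx : p + k ≤ x)
    (hx : (x : ℕ) + 1 < p + 2 * k) : (blockCycles h x : ℕ) = x + 1 :=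
  coe_blockCycles_of_lt h (r := x - p - k) hm (by lia) (by lia)

theorem orderOf_finRotate (hk : 2 ≤ k) : orderOf (finRotate k) = k := by
  rw [(isCycle_finRotate_of_le hk).orderOf, support_finRotate_of_le hk, Finset.card_univ,
    Fintype.card_fin]

theorem orderOf_blockCycles (hk : 2 ≤ k) (hm : 0 < m) : orderOf (blockCycles h) = k := by
  have hconst : Function.Injective (Pi.constMonoidHom (Fin m) (Equiv.Perm (Fin k))) :=
    fun _ _ heq ↦ congrFun heq ⟨0, hm⟩
  rw [blockCycles, orderOf_injective _ (Equiv.Perm.viaEmbeddingHom_injective _),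
    orderOf_injective _ Equiv.Perm.sigmaCongrRightHom_injective]
  exact (orderOf_injective _ hconst (finRotate k)).trans (orderOf_finRotate hk)

theorem exists_blockCycles_eq_succ (hσ : 0 + n / k * k ≤ n) (hτ : 1 + (n - 1) / k * k ≤ n)
    (hρ : n - k + 1 * k ≤ n) (hk : 2 ≤ k) {x y : Fin n} (hxy : (y : ℕ) = x + 1) :
    ∃ π ∈ ({blockCycles hσ, blockCycles hτ, blockCycles hρ} : Set (Equiv.Perm (Fin n))),
      π x = y := by
  have hk0 : 0 < k := by lia
  have hx := Nat.mod_add_div (x : ℕ) k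
  obtain hlast | hlast := lt_or_ge (x + k : ℕ) n
  · obtain hmod | hmod := lt_or_ge ((x : ℕ) % k + 1) k
    · have ht : x / k < n / k :=
        (Nat.succ_le_iff).1 ((Nat.add_div_right (x : ℕ) hk0).symm.trans_le
          (Nat.div_le_div_right hlast.le))
      exact ⟨blockCycles hσ, by simp,
        Fin.ext (by rw [coe_blockCycles_of_lt hσ ht hmod (by lia), hxy])⟩
    · have hmod' : (x : ℕ) % k + 1 = k := le_antisymm (Nat.mod_lt _ hk0) hmod
      have ht : x / k < (n - 1) / k :=
        (Nat.succ_le_iff).1 ((Nat.add_div_right (x : ℕ) hk0).symm.trans_le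
          (Nat.div_le_div_right (by lia)))
      exact ⟨blockCycles hτ, by simp,
        Fin.ext (by rw [coe_blockCycles_of_lt hτ (r := k - 2) ht (by lia) (by lia), hxy])⟩
  · exact ⟨blockCycles hρ, by simp, Fin.ext (by
      rw [coe_blockCycles_of_lt hρ (t := 0) (r := x + k - n) (by lia) (by lia) (by lia), hxy])⟩

theorem reflTransGen_blockCycles (hσ : 0 + n / k * k ≤ n) (hτ : 1 + (n - 1) / k * k ≤ n)
    (hρ : n - k + 1 * k ≤ n) (hk : 2 ≤ k) {o : Fin n} (ho : (o : ℕ) = 0) (x : Fin n) :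
    Relation.ReflTransGen (fun y z ↦ ∃ π ∈ ({blockCycles hσ, blockCycles hτ, blockCycles hρ} :
      Set (Equiv.Perm (Fin n))), π y = z) o x := by
  obtain ⟨x, hx⟩ := x
  induction x with
  | zero => rw [show o = ⟨0, hx⟩ from Fin.ext ho]
  | succ x ih =>
    exact (ih (by lia)).tail (exists_blockCycles_eq_succ hσ hτ hρ hk rfl)

end BlockCycles

section FourGenerators

variable {k n : ℕ} {G : Subgroup (symplecticGroup (Fin n) ℤ)} {p a b : Fin n}

theorem eq_top_of_block_shifts {σ τ ρ : Equiv.Perm (Fin n)} (hk : 5 ≤ k) {o : Fin n}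
    (ho : (o : ℕ) = 0) (hp : (p : ℕ) + 1 = k) (ha : (a : ℕ) = 2) (hb : (b : ℕ) = k + 3)
    (hσG : permSymplectic σ ∈ G) (hτG : permSymplectic τ ∈ G) (hρG : permSymplectic ρ ∈ G)
    (htwist : twist p (τ p) a b * permSymplectic σ * (twist p (τ p) a b)⁻¹ ∈ G)
    (hσ₁ : ∀ x : Fin n, (x : ℕ) + 1 < k → (σ x : ℕ) = x + 1)
    (hσ₂ : ∀ x : Fin n, k ≤ x → (x : ℕ) + 1 < 2 * k → (σ x : ℕ) = x + 1)
    (hτ₁ : ∀ x : Fin n, 1 ≤ (x : ℕ) → (x : ℕ) < k → (τ x : ℕ) = x + 1)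
    (hτ₂ : ∀ x : Fin n, k < x → (x : ℕ) < 2 * k → (τ x : ℕ) = x + 1)
    (hσp : σ p = o) (hττp : (τ (τ p) : ℕ) = 1) (hτo : τ o = o) (hρo : ρ o = o)
    (hconn : ∀ i, Relation.ReflTransGen
      (fun j l ↦ ∃ π ∈ ({σ, τ, ρ} : Set (Equiv.Perm (Fin n))), π j = l) o i) : G = ⊤ := by
  have hσo : (σ o : ℕ) = 1 := by rw [hσ₁ o (by lia), ho]
  have hτp : (τ p : ℕ) = k := by rw [hτ₁ p (by lia) (by lia), hp]
  have hστp : (σ (τ p) : ℕ) = k + 1 := by rw [hσ₂ _ (by lia) (by lia), hτp]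
  have hτστp : (τ (σ (τ p)) : ℕ) = k + 2 := by rw [hτ₂ _ (by lia) (by lia), hστp]
  have hσa : (σ a : ℕ) = 3 := by rw [hσ₁ a (by lia), ha]
  have hτa : (τ a : ℕ) = 3 := by rw [hτ₁ a (by lia) (by lia), ha]
  have hτσa : (τ (σ a) : ℕ) = 4 := by rw [hτ₁ _ (by lia) (by lia), hσa]
  have hσb : (σ b : ℕ) = k + 4 := by rw [hσ₂ b (by lia) (by lia), hb]
  have hτb : (τ b : ℕ) = k + 4 := by rw [hτ₂ b (by lia) (by lia), hb]
  have hτσb : (τ (σ b) : ℕ) = k + 5 := by rw [hτ₂ _ (by lia) (by lia), hσb]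
  have hστ : σ (σ o) = τ (σ o) := Fin.ext (by
    rw [hσ₁ _ (by lia), hτ₁ _ (by lia) (by lia)])
  -- `A` is the first block of `σ` without the point `τ (τ p)`.
  refine eq_top_of_conj_twist_mem (A := {i | (i : ℕ) ≠ 1 ∧ (i : ℕ) < k}) hσG hτG hρG htwist ?_ ?_
    ?_ hσp (Fin.ext (hττp.trans hσo.symm)) hτo hστ hρo ?_ hconn
  · simp only [Set.insert_subset_iff, Set.singleton_subset_iff, Set.mem_ofPred_eq, hσp, hτo]
    omega
  · exact fun hmem ↦ hmem.2.ne hτp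
  · simp only [Set.disjoint_insert_right, Set.disjoint_singleton_right, Set.mem_insert_iff,
      Set.mem_ofPred_eq, Fin.ext_iff]
    omega
  · simp only [List.nodup_cons, List.mem_cons, List.not_mem_nil, List.nodup_nil, or_false,
      not_false_eq_true, and_true, Fin.ext_iff]
    omega

theorem eq_top_of_permSymplectic_blockCycles_mem (hσ : 0 + n / k * k ≤ n)
    (hτ : 1 + (n - 1) / k * k ≤ n) (hρ : n - k + 1 * k ≤ n) (hk : 5 ≤ k) (hn : 2 * k + 1 ≤ n)
    (hp : (p : ℕ) + 1 = k) (ha : (a : ℕ) = 2) (hb : (b : ℕ) = k + 3)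
    (hσG : permSymplectic (blockCycles hσ) ∈ G) (hτG : permSymplectic (blockCycles hτ) ∈ G)
    (hρG : permSymplectic (blockCycles hρ) ∈ G)
    (htwist : twist p (blockCycles hτ p) a b * permSymplectic (blockCycles hσ) *
      (twist p (blockCycles hτ p) a b)⁻¹ ∈ G) : G = ⊤ := by
  have hm : 1 < n / k := (Nat.le_div_iff_mul_le (by lia)).2 (by lia)
  have hm' : 1 < (n - 1) / k := (Nat.le_div_iff_mul_le (by lia)).2 (by lia)
  have hτp : (blockCycles hτ p : ℕ) = p + 1 :=
    coe_blockCycles_first hτ (by lia) (by lia) (by lia)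
  exact eq_top_of_block_shifts (o := ⟨0, by lia⟩) hk rfl hp ha hb hσG hτG hρG htwist
    (fun x hx ↦ coe_blockCycles_first hσ (by lia) (by lia) (by lia))
    (fun x hkx hx ↦ coe_blockCycles_second hσ hm (by lia) (by lia))
    (fun x hx hxk ↦ coe_blockCycles_first hτ (by lia) hx (by lia))
    (fun x hkx hx ↦ coe_blockCycles_second hτ hm' (by lia) (by lia))
    (Fin.ext (coe_blockCycles_last hσ (t := 0) (by lia) (by lia) (by lia)))
    (coe_blockCycles_last hτ (t := 0) (by lia) (by lia) (by lia))
    (blockCycles_eq_self hτ Nat.one_pos) (blockCycles_eq_self hρ (Nat.sub_pos_of_lt (by lia)))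
    (reflTransGen_blockCycles hσ hτ hρ (by lia) rfl)

theorem orderOf_permSymplectic_blockCycles {s m : ℕ} (h : s + m * k ≤ n) (hk : 2 ≤ k)
    (hm : 0 < m) : orderOf (permSymplectic (blockCycles h) : symplecticGroup (Fin n) ℤ) = k :=
  (orderOf_injective _ permSymplectic_injective _).trans (orderOf_blockCycles h hk hm)

end FourGenerators

end SpGenerators

open SpGenerators in
theorem Sp_2n_Z_generated_by_four_elements_of_order_k_general
    (k n : ℕ) (hk : 5 ≤ k) (hn : 2 * k + 1 ≤ n) :
    ∃ M₁ M₂ M₃ M₄ : Matrix.symplecticGroup (Fin n) ℤ,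
      orderOf M₁ = k ∧ orderOf M₂ = k ∧ orderOf M₃ = k ∧ orderOf M₄ = k ∧
      Subgroup.closure {M₁, M₂, M₃, M₄} = ⊤ := by
  have hσ : 0 + n / k * k ≤ n := by simpa using Nat.div_mul_le_self n k
  have hτ : 1 + (n - 1) / k * k ≤ n := by have := Nat.div_mul_le_self (n - 1) k; lia
  have hρ : n - k + 1 * k ≤ n := by lia
  let p : Fin n := ⟨k - 1, by lia⟩
  let a : Fin n := ⟨2, by lia⟩
  let b : Fin n := ⟨k + 3, by lia⟩
  let z : Matrix.symplecticGroup (Fin n) ℤ := twist p (blockCycles hτ p) a b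
  have hM₁ : orderOf (permSymplectic (blockCycles hσ) : Matrix.symplecticGroup (Fin n) ℤ) = k :=
    orderOf_permSymplectic_blockCycles hσ (by lia) (Nat.div_pos (by lia) (by lia))
  refine ⟨permSymplectic (blockCycles hσ), permSymplectic (blockCycles hτ),
    permSymplectic (blockCycles hρ), MulAut.conj z (permSymplectic (blockCycles hσ)), hM₁,
    orderOf_permSymplectic_blockCycles hτ (by lia) (Nat.div_pos (by lia) (by lia)),
    orderOf_permSymplectic_blockCycles hρ (by lia) Nat.one_pos,
    ((MulAut.conj z).orderOf_eq _).trans hM₁, ?_⟩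
  exact eq_top_of_permSymplectic_blockCycles_mem hσ hτ hρ hk hn (p := p)
    (a := a) (b := b) (Nat.sub_add_cancel (by lia)) rfl rfl
    (Subgroup.subset_closure (by simp)) (Subgroup.subset_closure (by simp))
    (Subgroup.subset_closure (by simp)) (Subgroup.subset_closure (by simp [z]))

/-- For `k ≥ 5` and `n ≥ 2(k - 1)(k - 3)`, the integral symplectic group
`Sp(2n, ℤ)` is generated by four elements of order exactly `k`. -/
theorem Sp_2n_Z_generated_by_four_elements_of_order_k
    (k n : ℕ) (hk : 5 ≤ k) (hn : 2 * (k - 1) * (k - 3) ≤ n) :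
    ∃ M₁ M₂ M₃ M₄ : Matrix.symplecticGroup (Fin n) ℤ,
      orderOf M₁ = k ∧ orderOf M₂ = k ∧ orderOf M₃ = k ∧ orderOf M₄ = k ∧
      Subgroup.closure {M₁, M₂, M₃, M₄} = ⊤ := by
  have hle : 2 * (k - 1) * 2 ≤ 2 * (k - 1) * (k - 3) := Nat.mul_le_mul_left _ (by lia)
  exact Sp_2n_Z_generated_by_four_elements_of_order_k_general k n hk (by lia)
end

section
/- Let k ≥ 6 and n ≥ 2((k − 1)² + 1). Then there exist three matrices M₁, M₂, M₃ in the integral symplectic group Sp(2n, ℤ), each of order exactly k, such that the subgroup they generate is all of Sp(2n, ℤ). -/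
/-!
The `n` hyperbolic planes of `ℤ ^ 2n` are arranged as `k` rows of length `m`, with at most
`m - 2` planes left over. The first generator `x` permutes the rows cyclically, and the other two,
`y` and `z`, are conjugates of `x`, so all three have order `k`. The quotient `y x⁻¹` rotates row
`1` by one step. The quotient `z x⁻¹` is an elementary matrix in row `1` times a matrix that is
supported on rows other than `0` and `1`, maps planes of row `3` to the leftover planes and
acts on one further plane of row `3` by an element of order `6` of `SL₂(ℤ)`. Commutators with
powers of `y x⁻¹` kill the second factor and isolate elementary matrices in row `1`; conjugation by
`x` and `z x⁻¹` spreads them to all pairs of planes. The element of order `6` turns elementary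
matrices into transvections, and transvections together with elementary matrices generate the
symplectic group by Euclidean descent.
-/

namespace SymplecticGeneration

section Commutator

open scoped commutatorElement

variable {H : Type*} [Group H] {a b c h y z : H}

theorem commutator_mem {K : Subgroup H} (ha : a ∈ K) (hb : b ∈ K) : ⁅a, b⁆ ∈ K :=
  mul_mem (mul_mem (mul_mem ha hb) (inv_mem ha)) (inv_mem hb)

theorem commutator_inv_mul_of_commute (hya : Commute y a) (hyh : Commute y h) :
    ⁅(a * y)⁻¹, h⁆ = ⁅a⁻¹, h⁆ := by
  calc ⁅(a * y)⁻¹, h⁆ = y⁻¹ * (a⁻¹ * h * a) * y * h⁻¹ := by rw [commutatorElement_def]; group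
    _ = a⁻¹ * h * a * h⁻¹ := by
      rw [((hya.inv_right.mul_right hyh).mul_right hya).inv_left.eq, inv_mul_cancel_right]
    _ = ⁅a⁻¹, h⁆ := by rw [commutatorElement_def, inv_inv]

theorem commutator_inv_mul_inv_mul (hba : b * a * b⁻¹ = a * z⁻¹) (haz : Commute a z)
    (hca : Commute c a) (hcb : Commute c b) : ⁅a⁻¹ * b, a⁻¹ * c⁆ = z := by
  have hba' : b * a⁻¹ * b⁻¹ = z * a⁻¹ := by rw [← conj_inv, hba, mul_inv_rev, inv_inv]
  have hc : c * (b⁻¹ * a) = b⁻¹ * a * c := (hcb.inv_right.mul_right hca).eq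
  calc ⁅a⁻¹ * b, a⁻¹ * c⁆ = a⁻¹ * b * a⁻¹ * (c * (b⁻¹ * a)) * c⁻¹ * a := by
        rw [commutatorElement_def]; group
    _ = a⁻¹ * (b * a⁻¹ * b⁻¹) * a * a := by rw [hc]; group
    _ = a⁻¹ * (z * a) := by rw [hba']; group
    _ = z := by rw [← haz.eq, inv_mul_cancel_left]

theorem commutator_inv_mul (hba : b * a * b⁻¹ = a * z⁻¹) (hcb : Commute c b) :
    ⁅b, a⁻¹ * c⁆ = z := by
  have hba' : b * a⁻¹ * b⁻¹ = z * a⁻¹ := by rw [← conj_inv, hba, mul_inv_rev, inv_inv]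
  calc ⁅b, a⁻¹ * c⁆ = b * a⁻¹ * (c * b⁻¹) * c⁻¹ * a := by rw [commutatorElement_def]; group
    _ = b * a⁻¹ * b⁻¹ * a := by rw [hcb.inv_right.eq]; group
    _ = z := by rw [hba', inv_mul_cancel_right]

theorem orderOf_conj (g x : H) : orderOf (g * x * g⁻¹) = orderOf x :=
  orderOf_injective (MulAut.conj g).toMonoidHom (MulAut.conj g).injective x

end Commutator

open Matrix

section Form

variable (ι R : Type*) [Fintype ι] [DecidableEq ι] [CommRing R]

/-- The standard symplectic form `∑ i, (x (inl i) * y (inr i) - x (inr i) * y (inl i))`. -/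
def symplecticForm : LinearMap.BilinForm R (ι ⊕ ι → R) :=
  Matrix.toBilin' (-J ι R)

end Form

local notation "ω" => symplecticForm _ _

section Basis

/-- The index of the hyperbolic plane that contains the basis vector labelled by `c`. -/
def plane {ι : Type*} (c : ι ⊕ ι) : ι := Sum.elim id id c

@[simp] theorem plane_swap {ι : Type*} (c : ι ⊕ ι) : plane c.swap = plane c := by
  cases c <;> rfl

@[simp] theorem plane_map {ι κ : Type*} (σ : ι → κ) (c : ι ⊕ ι) :
    plane (c.map σ σ) = σ (plane c) := by
  cases c <;> rfl

theorem eq_or_eq_swap_of_plane_eq {ι : Type*} {c d : ι ⊕ ι} (h : plane c = plane d) :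
    c = d ∨ c = d.swap := by
  rcases c with i | i <;> rcases d with j | j <;> simp_all [plane]

variable {ι : Type*} (R : Type*) [DecidableEq ι] [CommRing R]

/-- The basis vectors of `R ^ (ι ⊕ ι)`; the ones labelled `inl i` and `inr i` span the `i`-th
hyperbolic plane. -/
def basisVec (c : ι ⊕ ι) : ι ⊕ ι → R := Pi.single c 1

/-- The basis vector `eᵢ` of a symplectic basis `(eᵢ, fᵢ)`. -/
abbrev e (i : ι) : ι ⊕ ι → R := basisVec R (Sum.inl i)

/-- The basis vector `fᵢ` of a symplectic basis `(eᵢ, fᵢ)`, so that `ω eᵢ fᵢ = 1`. -/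
abbrev f (i : ι) : ι ⊕ ι → R := basisVec R (Sum.inr i)

theorem basisVec_apply (c d : ι ⊕ ι) : basisVec R c d = if d = c then 1 else 0 :=
  Pi.single_apply c 1 d

variable {R}

theorem basisVec_injective [Nontrivial R] : Function.Injective (basisVec R : ι ⊕ ι → _) :=
  fun c d h => by simpa [basisVec_apply] using congrFun h c

theorem basisVec_apply_of_plane_notMem {S : Set ι} {c d : ι ⊕ ι} (hc : plane c ∈ S)
    (hd : plane d ∉ S) : basisVec R c d = 0 := by
  rw [basisVec_apply, if_neg]
  rintro rfl
  exact hd hc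

variable [Fintype ι]

theorem eq_sum_basisVec (x : ι ⊕ ι → R) : x = ∑ c, x c • basisVec R c := by
  simpa [basisVec, ← Pi.single_smul] using pi_eq_sum_univ' x

theorem form_apply (x y : ι ⊕ ι → R) :
    ω x y = ∑ i, (x (.inl i) * y (.inr i) - x (.inr i) * y (.inl i)) := by
  simp [symplecticForm, J, Matrix.toBilin'_apply', dotProduct, Matrix.fromBlocks_mulVec,
    Fintype.sum_sum_type, Matrix.neg_mulVec, Finset.sum_add_distrib, sub_eq_add_neg, add_comm]

@[simp] theorem form_self (x : ι ⊕ ι → R) : ω x x = 0 := by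
  simp [form_apply, mul_comm]

theorem form_swap (x y : ι ⊕ ι → R) : ω x y = -ω y x := by
  simp [form_apply, mul_comm]

theorem form_e (x : ι ⊕ ι → R) (i : ι) : ω x (e R i) = -x (.inr i) := by
  simp [form_apply, basisVec_apply]

theorem form_f (x : ι ⊕ ι → R) (i : ι) : ω x (f R i) = x (.inl i) := by
  simp [form_apply, basisVec_apply]

theorem form_basisVec_eq_zero_iff {x : ι ⊕ ι → R} {c : ι ⊕ ι} :
    ω x (basisVec R c) = 0 ↔ x c.swap = 0 := by
  rcases c with i | i
  · simp [form_e]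
  · simp [form_f]

theorem form_basisVec_basisVec_of_plane_ne {c d : ι ⊕ ι} (h : plane c ≠ plane d) :
    ω (basisVec R c) (basisVec R d) = 0 := by
  rw [form_basisVec_eq_zero_iff, basisVec_apply, if_neg]
  rintro rfl
  exact h (plane_swap d)

@[simp] theorem form_e_e (i j : ι) : ω (e R i) (e R j) = 0 := by simp [form_e, basisVec_apply]

@[simp] theorem form_f_f (i j : ι) : ω (f R i) (f R j) = 0 := by simp [form_f, basisVec_apply]

theorem form_e_f (i j : ι) : ω (e R i) (f R j) = if i = j then 1 else 0 := by
  simp [form_f, basisVec_apply, eq_comm]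

theorem form_f_e (i j : ι) : ω (f R i) (e R j) = if i = j then -1 else 0 := by
  rw [form_swap, form_e_f]
  split_ifs <;> simp_all

end Basis

section Action

variable {ι R : Type*} [Fintype ι] [DecidableEq ι] [CommRing R]

theorem smul_def (g : symplecticGroup ι R) (x : ι ⊕ ι → R) :
    g • x = (g : Matrix (ι ⊕ ι) (ι ⊕ ι) R) *ᵥ x := rfl

theorem form_eq_neg_dotProduct (x y : ι ⊕ ι → R) : ω x y = -(x ⬝ᵥ J ι R *ᵥ y) := by
  simp [symplecticForm, Matrix.toBilin'_apply']

@[simp] theorem form_smul_smul (g : symplecticGroup ι R) (x y : ι ⊕ ι → R) :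
    ω (g • x) (g • y) = ω x y := by
  rw [form_eq_neg_dotProduct, form_eq_neg_dotProduct, smul_def, smul_def, mulVec_mulVec,
    dotProduct_mulVec, vecMul_mulVec, ← dotProduct_mulVec, ← Matrix.mul_assoc,
    SymplecticGroup.mem_iff'.1 g.2]

theorem ext_basisVec {g h : symplecticGroup ι R}
    (hgh : ∀ c : ι ⊕ ι, g • basisVec R c = h • basisVec R c) : g = h := by
  refine Subtype.ext (Matrix.ext fun i j => ?_)
  simpa [smul_def, basisVec] using congrFun (hgh j) i

/-- The symplectic matrix of a linear map that preserves the symplectic form. -/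
noncomputable def ofIsometry (F : (ι ⊕ ι → R) →ₗ[R] ι ⊕ ι → R)
    (hF : ∀ x y, ω (F x) (F y) = ω x y) : symplecticGroup ι R :=
  ⟨LinearMap.toMatrix' F, by
    rw [SymplecticGroup.mem_iff', ← neg_inj]
    refine Matrix.toBilin'.injective (LinearMap.ext₂ fun x y => ?_)
    have hFxy := hF x y
    rw [form_eq_neg_dotProduct, form_eq_neg_dotProduct, ← LinearMap.toMatrix'_mulVec F x,
      ← LinearMap.toMatrix'_mulVec F y, mulVec_mulVec, dotProduct_mulVec, vecMul_mulVec,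
      ← dotProduct_mulVec, ← Matrix.mul_assoc] at hFxy
    simpa only [toBilin'_apply', neg_mulVec, dotProduct_neg] using hFxy⟩

@[simp] theorem ofIsometry_smul (F : (ι ⊕ ι → R) →ₗ[R] ι ⊕ ι → R)
    (hF : ∀ x y, ω (F x) (F y) = ω x y) (x : ι ⊕ ι → R) : ofIsometry F hF • x = F x :=
  LinearMap.toMatrix'_mulVec F x

/-- The symplectic transvection `x ↦ x + c ω(x, v) v`. -/
noncomputable def transvection (c : R) (v : ι ⊕ ι → R) : symplecticGroup ι R :=
  ofIsometry (LinearMap.transvection (c • (ω).flip v) v) fun x y => by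
    simp only [LinearMap.transvection.apply, LinearMap.smul_apply,
      LinearMap.BilinForm.flip_apply, map_add, map_smul, LinearMap.add_apply, smul_eq_mul,
      form_self, form_swap v y]
    ring

theorem transvection_smul (c : R) (v x : ι ⊕ ι → R) :
    transvection c v • x = x + (c * ω x v) • v := by
  simp [transvection, LinearMap.transvection.apply]

theorem ext_smul {g h : symplecticGroup ι R} (hgh : ∀ x : ι ⊕ ι → R, g • x = h • x) : g = h :=
  ext_basisVec fun _ => hgh _

theorem transvection_mul_transvection (c d : R) (v : ι ⊕ ι → R) :
    transvection c v * transvection d v = transvection (c + d) v :=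
  ext_smul fun x => by
    simp only [mul_smul, transvection_smul, map_add, map_smul, LinearMap.add_apply,
      LinearMap.smul_apply, form_self]
    module

theorem transvection_zero (v : ι ⊕ ι → R) : transvection 0 v = 1 :=
  ext_smul fun x => by simp [transvection_smul]

theorem inv_transvection (c : R) (v : ι ⊕ ι → R) :
    (transvection c v)⁻¹ = transvection (-c) v := by
  rw [inv_eq_iff_mul_eq_one, transvection_mul_transvection, add_neg_cancel, transvection_zero]

theorem transvection_neg (c : R) (v : ι ⊕ ι → R) : transvection c (-v) = transvection c v :=
  ext_smul fun x => by simp [transvection_smul]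

theorem conj_transvection (g : symplecticGroup ι R) (c : R) (v : ι ⊕ ι → R) :
    g * transvection c v * g⁻¹ = transvection c (g • v) :=
  ext_smul fun x => by
    have hx : ω (g⁻¹ • x) v = ω x (g • v) := by rw [← form_smul_smul g, smul_inv_smul]
    rw [mul_smul, mul_smul, transvection_smul, transvection_smul, smul_add, smul_inv_smul,
      smul_comm, hx]

/-- The Eichler transformation, which is `x ↦ x + ω(x, p) q + ω(x, q) p` if `ω(p, q) = 0`. -/
noncomputable def eichler (p q : ι ⊕ ι → R) : symplecticGroup ι R :=
  transvection 1 (p + q) * transvection (-1) p * transvection (-1) q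

theorem eichler_smul {p q : ι ⊕ ι → R} (hpq : ω p q = 0) (x : ι ⊕ ι → R) :
    eichler p q • x = x + ω x p • q + ω x q • p := by
  have hqp : ω q p = 0 := by rw [form_swap, hpq, neg_zero]
  simp only [eichler, mul_smul, transvection_smul, map_add, map_smul, LinearMap.add_apply,
    LinearMap.smul_apply, form_self, hpq, hqp]
  module

theorem eichler_comm {p q : ι ⊕ ι → R} (hpq : ω p q = 0) : eichler p q = eichler q p :=
  ext_smul fun x => by
    rw [eichler_smul hpq, eichler_smul (by rw [form_swap, hpq, neg_zero]), add_right_comm]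

theorem conj_eichler (g : symplecticGroup ι R) (p q : ι ⊕ ι → R) :
    g * eichler p q * g⁻¹ = eichler (g • p) (g • q) := by
  simp only [eichler, ← smul_add, ← conj_transvection]
  group

theorem eichler_add {p q r : ι ⊕ ι → R} (hpq : ω p q = 0) (hpr : ω p r = 0) :
    eichler p (q + r) = eichler p q * eichler p r * transvection (ω q r) p :=
  ext_smul fun x => by
    have hpqr : ω p (q + r) = 0 := by rw [map_add, hpq, hpr, add_zero]
    have hrp : ω r p = 0 := by rw [form_swap, hpr, neg_zero]
    simp only [mul_smul, transvection_smul, eichler_smul, hpq, hpr, hpqr, hrp, map_add,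
      map_smul, LinearMap.add_apply, LinearMap.smul_apply, form_self, form_swap r q]
    module

theorem eichler_zero (p : ι ⊕ ι → R) : eichler p 0 = 1 :=
  ext_smul fun x => by simp [eichler_smul]

theorem eichler_neg {p q : ι ⊕ ι → R} (hpq : ω p q = 0) :
    eichler p (-q) = (eichler p q)⁻¹ := by
  have hpq' : ω p (-q) = 0 := by rw [map_neg, hpq, neg_zero]
  have h := eichler_add hpq hpq'
  rw [map_neg, form_self, neg_zero, transvection_zero, mul_one, add_neg_cancel,
    eichler_zero] at h
  exact (inv_eq_of_mul_eq_one_right h.symm).symm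

end Action

section Elementary

variable {ι : Type*} (R : Type*) [Fintype ι] [DecidableEq ι] [CommRing R]

/-- The image of the elementary matrix `1 + E p q` of `GL` under `A ↦ diag(A, A⁻ᵀ)`; it maps
`e q` to `e q + e p` and `f p` to `f p - f q`. -/
noncomputable def elementary (p q : ι) : symplecticGroup ι R := eichler (e R p) (f R q)

variable {R} {p q : ι}

theorem form_e_f_of_ne (hpq : p ≠ q) : ω (e R p) (f R q) = 0 := by
  rw [form_e_f, if_neg hpq]

theorem elementary_smul_e (hpq : p ≠ q) (s : ι) :
    elementary R p q • e R s = e R s + if s = q then e R p else 0 := by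
  rw [elementary, eichler_smul (form_e_f_of_ne hpq), form_e_e, form_e_f]
  split_ifs <;> simp

theorem elementary_smul_f (hpq : p ≠ q) (s : ι) :
    elementary R p q • f R s = f R s - if s = p then f R q else 0 := by
  rw [elementary, eichler_smul (form_e_f_of_ne hpq), form_f_f, form_f_e]
  split_ifs <;> simp [sub_eq_add_neg]

theorem commute_elementary {r s : ι} (hpq : p ≠ q) (hps : p ≠ s) (hrq : r ≠ q) :
    Commute (elementary R p q) (elementary R r s) := by
  rw [commute_iff_eq, ← mul_inv_eq_iff_eq_mul, elementary.eq_def R r s, conj_eichler,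
    elementary_smul_e hpq, elementary_smul_f hpq, if_neg hrq, if_neg hps.symm, add_zero, sub_zero]

theorem elementary_conj_elementary {s : ι} (hpq : p ≠ q) (hps : p ≠ s) (hqs : q ≠ s) :
    elementary R q s * elementary R p q * (elementary R q s)⁻¹ =
      elementary R p q * (elementary R p s)⁻¹ := by
  rw [elementary.eq_def R p q, conj_eichler, elementary_smul_e hqs, elementary_smul_f hqs,
    if_neg hps, if_pos rfl, add_zero, sub_eq_add_neg,
    eichler_add (form_e_f_of_ne hpq) (by rw [map_neg, form_e_f_of_ne hps, neg_zero]), map_neg,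
    form_f_f, neg_zero, transvection_zero, mul_one, eichler_neg (form_e_f_of_ne hps), elementary]

end Elementary

section Permutation

variable (ι R : Type*) [Fintype ι] [DecidableEq ι] [CommRing R]

/-- The symplectic matrices that permute the hyperbolic planes of the standard basis. -/
noncomputable def permHom : Equiv.Perm ι →* symplecticGroup ι R :=
  MonoidHom.mk'
    (fun π => ofIsometry (LinearMap.funLeft R R (Equiv.sumCongr π π).symm) fun x y => by
      simp only [form_apply, LinearMap.funLeft_apply]
      exact π.symm.sum_comp fun i => x (.inl i) * y (.inr i) - x (.inr i) * y (.inl i))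
    fun π σ => ext_smul fun x => by
      simp only [mul_smul, ofIsometry_smul]
      ext (i | i) <;> rfl

variable {ι R}

theorem permHom_smul_basisVec (π : Equiv.Perm ι) (c : ι ⊕ ι) :
    permHom ι R π • basisVec R c = basisVec R (c.map π π) := by
  ext d
  rw [permHom, MonoidHom.mk'_apply, ofIsometry_smul, LinearMap.funLeft_apply, basisVec_apply,
    basisVec_apply]
  simp only [Equiv.symm_apply_eq]
  rfl

theorem permHom_smul_e (π : Equiv.Perm ι) (i : ι) : permHom ι R π • e R i = e R (π i) :=
  permHom_smul_basisVec π _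

theorem permHom_smul_f (π : Equiv.Perm ι) (i : ι) : permHom ι R π • f R i = f R (π i) :=
  permHom_smul_basisVec π _

theorem permHom_injective [Nontrivial R] : Function.Injective (permHom ι R) := fun π σ h => by
  ext i
  have h' : e R (π i) = e R (σ i) := by rw [← permHom_smul_e, h, permHom_smul_e]
  simpa using basisVec_injective h'

end Permutation

section Support

variable {ι : Type*} (R : Type*) [Fintype ι] [DecidableEq ι] [CommRing R]

/-- The symplectic group of the sum of the hyperbolic planes indexed by `S`. -/
def supportedOn (S : Set ι) : Subgroup (symplecticGroup ι R) :=
  fixingSubgroup _ (basisVec R '' (plane ⁻¹' Sᶜ))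

variable {R} {S T : Set ι}

theorem mem_supportedOn {g : symplecticGroup ι R} :
    g ∈ supportedOn R S ↔ ∀ c, plane c ∉ S → g • basisVec R c = basisVec R c := by
  simp only [supportedOn, mem_fixingSubgroup_iff, Set.forall_mem_image, Set.mem_preimage,
    Set.mem_compl_iff]

theorem supportedOn_mono (h : S ⊆ T) : supportedOn R S ≤ supportedOn R T :=
  fixingSubgroup_antitone _ _ (Set.image_mono (Set.preimage_mono (Set.compl_subset_compl.2 h)))

theorem supportedOn_univ : supportedOn R (Set.univ : Set ι) = ⊤ := by
  simp [supportedOn]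

theorem supportedOn_empty : supportedOn R (∅ : Set ι) = ⊥ :=
  (Subgroup.eq_bot_iff_forall _).2 fun g hg =>
    ext_basisVec fun c => by rw [mem_supportedOn.1 hg c (Set.notMem_empty _), one_smul]

theorem smul_apply_of_mem_supportedOn {g : symplecticGroup ι R} (hg : g ∈ supportedOn R S)
    (x : ι ⊕ ι → R) {c : ι ⊕ ι} (hc : plane c ∉ S) : (g • x) c = x c := by
  have hgc : ω (g • x - x) (basisVec R c.swap) = 0 := by
    rw [map_sub, LinearMap.sub_apply, sub_eq_zero]
    conv_lhs => rw [← mem_supportedOn.1 hg c.swap (by rwa [plane_swap])]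
    exact form_smul_smul g _ _
  rwa [form_basisVec_eq_zero_iff, Sum.swap_swap, Pi.sub_apply, sub_eq_zero] at hgc

theorem smul_eq_self_of_mem_supportedOn {g : symplecticGroup ι R} (hg : g ∈ supportedOn R S)
    {x : ι ⊕ ι → R} (hx : ∀ c, plane c ∈ S → x c = 0) : g • x = x := by
  rw [eq_sum_basisVec x, Finset.smul_sum]
  refine Finset.sum_congr rfl fun c _ => ?_
  rw [smul_comm]
  by_cases hc : plane c ∈ S
  · rw [hx c hc, zero_smul, zero_smul]
  · rw [mem_supportedOn.1 hg c hc]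

theorem smul_smul_basisVec_comm {g h : symplecticGroup ι R} (hg : g ∈ supportedOn R S)
    (hh : h ∈ supportedOn R T) (hST : Disjoint S T) {c : ι ⊕ ι} (hc : plane c ∉ S) :
    g • h • basisVec R c = h • g • basisVec R c := by
  rw [mem_supportedOn.1 hg c hc]
  refine smul_eq_self_of_mem_supportedOn hg fun d hd => ?_
  rw [smul_apply_of_mem_supportedOn hh _ (hST.notMem_of_mem_left hd), basisVec_apply, if_neg]
  rintro rfl
  exact hc hd

theorem commute_of_disjoint_support {g h : symplecticGroup ι R} (hg : g ∈ supportedOn R S)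
    (hh : h ∈ supportedOn R T) (hST : Disjoint S T) : Commute g h :=
  ext_basisVec fun c => by
    rw [mul_smul, mul_smul]
    by_cases hc : plane c ∈ S
    · exact (smul_smul_basisVec_comm hh hg hST.symm (hST.notMem_of_mem_left hc)).symm
    · exact smul_smul_basisVec_comm hg hh hST hc

theorem transvection_mem_supportedOn (t : R) {v : ι ⊕ ι → R} (hv : ∀ c, plane c ∉ S → v c = 0) :
    transvection t v ∈ supportedOn R S :=
  mem_supportedOn.2 fun c hc => by
    rw [transvection_smul, form_swap, form_basisVec_eq_zero_iff.2 (hv _ (by rwa [plane_swap])),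
      neg_zero, mul_zero, zero_smul, add_zero]

theorem eichler_mem_supportedOn {u v : ι ⊕ ι → R} (hu : ∀ c, plane c ∉ S → u c = 0)
    (hv : ∀ c, plane c ∉ S → v c = 0) : eichler u v ∈ supportedOn R S :=
  mul_mem (mul_mem
    (transvection_mem_supportedOn _ fun c hc => by rw [Pi.add_apply, hu c hc, hv c hc, add_zero])
    (transvection_mem_supportedOn _ hu)) (transvection_mem_supportedOn _ hv)

theorem permHom_mem_supportedOn {π : Equiv.Perm ι} (hπ : ∀ i ∉ S, π i = i) :
    permHom ι R π ∈ supportedOn R S := by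
  rw [mem_supportedOn]
  rintro (i | i) hi
  · exact (permHom_smul_e π i).trans (congrArg _ (hπ i hi))
  · exact (permHom_smul_f π i).trans (congrArg _ (hπ i hi))

theorem permHom_conj_mem_supportedOn {g : symplecticGroup ι R} (hg : g ∈ supportedOn R S)
    {π : Equiv.Perm ι} (hπ : Set.MapsTo π S T) :
    permHom ι R π * g * (permHom ι R π)⁻¹ ∈ supportedOn R T := by
  rw [mem_supportedOn]
  intro c hc
  obtain ⟨d, rfl⟩ : ∃ d : ι ⊕ ι, d.map π π = c := (π.sumCongr π).surjective c
  rw [plane_map] at hc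
  rw [← permHom_smul_basisVec, mul_smul, mul_smul, inv_smul_smul,
    mem_supportedOn.1 hg d fun hd => hc (hπ hd)]

end Support

section Reindex

variable {ι κ : Type*} [DecidableEq ι] [DecidableEq κ] {R : Type*} [CommRing R]

theorem J_submatrix_symm (σ : ι ≃ κ) :
    (J ι R).submatrix (σ.sumCongr σ).symm (σ.sumCongr σ).symm = J κ R := by
  ext (i | i) (j | j) <;> simp [J, one_apply]

variable [Fintype ι] [Fintype κ]

theorem submatrix_mem_symplecticGroup (σ : ι ≃ κ) {A : Matrix (ι ⊕ ι) (ι ⊕ ι) R}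
    (hA : A ∈ symplecticGroup ι R) :
    A.submatrix (σ.sumCongr σ).symm (σ.sumCongr σ).symm ∈ symplecticGroup κ R := by
  rw [SymplecticGroup.mem_iff] at hA ⊢
  rw [← J_submatrix_symm σ, transpose_submatrix, submatrix_mul_equiv, submatrix_mul_equiv, hA]

variable (R) in
/-- The isomorphism of symplectic groups that relabels the hyperbolic planes along `σ`. -/
def reindexEquiv (σ : ι ≃ κ) : symplecticGroup ι R ≃* symplecticGroup κ R where
  toFun A := ⟨_, submatrix_mem_symplecticGroup σ A.2⟩
  invFun A := ⟨_, submatrix_mem_symplecticGroup σ.symm A.2⟩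
  left_inv A := Subtype.ext (by ext (i | i) (j | j) <;> simp)
  right_inv A := Subtype.ext (by ext (i | i) (j | j) <;> simp)
  map_mul' A B := Subtype.ext (by simp [submatrix_mul_equiv])

end Reindex

section Generation

variable {ι : Type*} [Fintype ι] [DecidableEq ι] {K : Subgroup (symplecticGroup ι ℤ)}
  {p q : ι ⊕ ι → ℤ}

theorem transvection_mem (hp : transvection 1 p ∈ K) (t : ℤ) : transvection t p ∈ K := by
  induction t using Int.induction_on with
  | zero => exact transvection_zero p ▸ one_mem K
  | succ n ih => exact transvection_mul_transvection _ _ p ▸ mul_mem ih hp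
  | pred n ih =>
    rw [sub_eq_add_neg, ← transvection_mul_transvection, ← inv_transvection 1]
    exact mul_mem ih (inv_mem hp)

theorem eichler_mem (hp : transvection 1 p ∈ K) (hq : transvection 1 q ∈ K)
    (hpq : transvection 1 (p + q) ∈ K) : eichler p q ∈ K :=
  mul_mem (mul_mem hpq (transvection_mem hp _)) (transvection_mem hq _)

theorem transvection_add_mem (hp : transvection 1 p ∈ K) (hq : transvection 1 q ∈ K)
    (hpq : eichler p q ∈ K) : transvection 1 (p + q) ∈ K := by
  rw [eichler, ← inv_transvection, ← inv_transvection] at hpq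
  rwa [← Subgroup.mul_mem_cancel_right K (inv_mem hp),
    ← Subgroup.mul_mem_cancel_right K (inv_mem hq)]

theorem transvection_smul_mem {g : symplecticGroup ι ℤ} (hg : g ∈ K) (hp : transvection 1 p ∈ K) :
    transvection 1 (g • p) ∈ K :=
  conj_transvection g 1 p ▸ mul_mem (mul_mem hg hp) (inv_mem hg)

/-- The vectors `u` orthogonal to `p` with `eichler p u ∈ K`, for a subgroup `K` that contains the
transvections along `p`. -/
def eichlerVectors (hp : transvection 1 p ∈ K) : AddSubgroup (ι ⊕ ι → ℤ) where
  carrier := {u | ω p u = 0 ∧ eichler p u ∈ K}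
  zero_mem' := ⟨map_zero _, by rw [eichler_zero]; exact one_mem K⟩
  add_mem' := fun {u v} hu hv =>
    ⟨by rw [map_add, hu.1, hv.1, add_zero], by
      rw [eichler_add hu.1 hv.1]
      exact mul_mem (mul_mem hu.2 hv.2) (transvection_mem hp _)⟩
  neg_mem' := fun {u} hu =>
    ⟨by rw [map_neg, hu.1, neg_zero], by rw [eichler_neg hu.1]; exact inv_mem hu.2⟩

/-- The subgroup of `Sp(2n, ℤ)` generated by the elementary symplectic matrices of the planes
indexed by `S`: the root elements of the root system of type `C` on `S`. -/
def elementarySymplectic (S : Set ι) : Subgroup (symplecticGroup ι ℤ) :=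
  Subgroup.closure
    ({g | ∃ c, plane c ∈ S ∧ transvection 1 (basisVec ℤ c) = g} ∪
      {g | ∃ c d, plane c ∈ S ∧ plane d ∈ S ∧ plane c ≠ plane d ∧
        eichler (basisVec ℤ c) (basisVec ℤ d) = g})

variable {S T : Set ι} {c d : ι ⊕ ι}

theorem transvection_mem_elementarySymplectic (hc : plane c ∈ S) :
    transvection 1 (basisVec ℤ c) ∈ elementarySymplectic S :=
  Subgroup.subset_closure (.inl ⟨c, hc, rfl⟩)

theorem basisVec_mem_eichlerVectors (hc : plane c ∈ S) (hd : plane d ∈ S)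
    (hcd : plane c ≠ plane d) :
    basisVec ℤ d ∈ eichlerVectors (transvection_mem_elementarySymplectic hc) :=
  ⟨form_basisVec_basisVec_of_plane_ne hcd, Subgroup.subset_closure (.inr ⟨c, d, hc, hd, hcd, rfl⟩)⟩

theorem elementarySymplectic_le {K : Subgroup (symplecticGroup ι ℤ)}
    (hT : ∀ c, plane c ∈ S → transvection 1 (basisVec ℤ c) ∈ K)
    (hX : ∀ c d, plane c ∈ S → plane d ∈ S → plane c ≠ plane d →
      eichler (basisVec ℤ c) (basisVec ℤ d) ∈ K) :
    elementarySymplectic S ≤ K := by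
  rw [elementarySymplectic, Subgroup.closure_le]
  rintro _ (⟨c, hc, rfl⟩ | ⟨c, d, hc, hd, hcd, rfl⟩)
  · exact hT c hc
  · exact hX c d hc hd hcd

theorem elementarySymplectic_mono (h : S ⊆ T) :
    elementarySymplectic S ≤ elementarySymplectic T :=
  elementarySymplectic_le (fun _ hc => transvection_mem_elementarySymplectic (h hc))
    fun _ _ hc hd hcd => (basisVec_mem_eichlerVectors (h hc) (h hd) hcd).2

theorem elementarySymplectic_le_supportedOn (S : Set ι) :
    elementarySymplectic S ≤ supportedOn ℤ S :=
  elementarySymplectic_le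
    (fun _ hc => transvection_mem_supportedOn _ fun _ => basisVec_apply_of_plane_notMem hc)
    fun _ _ hc hd _ => eichler_mem_supportedOn (fun _ => basisVec_apply_of_plane_notMem hc)
      fun _ => basisVec_apply_of_plane_notMem hd

/-- The `ℓ¹` norm, which decreases in the Euclidean descent on integral vectors. -/
def height (v : ι ⊕ ι → ℤ) : ℕ := ∑ c, (v c).natAbs

theorem natAbs_form_basisVec (v : ι ⊕ ι → ℤ) (c : ι ⊕ ι) :
    (ω v (basisVec ℤ c)).natAbs = (v c.swap).natAbs := by
  rcases c with i | i
  · rw [form_e, Int.natAbs_neg, Sum.swap_inl]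
  · rw [form_f, Sum.swap_inr]

theorem exists_natAbs_add_mul_lt {a b : ℤ} (ha : a ≠ 0) (hab : a.natAbs ≤ b.natAbs) :
    ∃ t : ℤ, (b + t * a).natAbs < b.natAbs := by
  rcases Int.natAbs_eq a with h | h <;> rcases Int.natAbs_eq b with h' | h'
  · exact ⟨-1, by lia⟩
  · exact ⟨1, by lia⟩
  · exact ⟨1, by lia⟩
  · exact ⟨-1, by lia⟩

theorem exists_height_add_lt {v : ι ⊕ ι → ℤ} {a : ℤ} (ha : a ≠ 0)
    (hac : a.natAbs ≤ (v c).natAbs) :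
    ∃ t : ℤ, height (v + (t * a) • basisVec ℤ c) < height v := by
  obtain ⟨t, ht⟩ := exists_natAbs_add_mul_lt ha hac
  refine ⟨t, Finset.sum_lt_sum (fun d _ => ?_) ⟨c, Finset.mem_univ c, ?_⟩⟩
  · obtain rfl | hd := eq_or_ne d c
    · simpa [basisVec_apply] using ht.le
    · simp [basisVec_apply, hd]
  · simpa [basisVec_apply] using ht

theorem exists_height_lt_of_swap {v : ι ⊕ ι → ℤ} (hS : plane c ∈ S) (hc : v c ≠ 0)
    (hc' : v c.swap ≠ 0) : ∃ g ∈ elementarySymplectic S, height (g • v) < height v := by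
  wlog hle : (v c.swap).natAbs ≤ (v c).natAbs generalizing c
  · refine this (c := c.swap) (by rwa [plane_swap]) hc' ?_ ?_ <;> rw [Sum.swap_swap]
    exacts [hc, (not_le.1 hle).le]
  obtain ⟨t, ht⟩ : ∃ t : ℤ, height (v + (t * ω v (basisVec ℤ c)) • basisVec ℤ c) < height v :=
    exists_height_add_lt (by rwa [Ne, form_basisVec_eq_zero_iff]) (by rwa [natAbs_form_basisVec])
  exact ⟨transvection t (basisVec ℤ c),
    transvection_mem (transvection_mem_elementarySymplectic hS) t, by rwa [transvection_smul]⟩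

theorem exists_height_lt_of_plane_ne {v : ι ⊕ ι → ℤ} (hcS : plane c ∈ S) (hdS : plane d ∈ S)
    (hcd : plane c ≠ plane d) (hc : v c ≠ 0) (hc' : v c.swap = 0) (hd : v d ≠ 0)
    (hd' : v d.swap = 0) : ∃ g ∈ elementarySymplectic S, height (g • v) < height v := by
  wlog hle : (v c).natAbs ≤ (v d).natAbs generalizing c d
  · exact this hdS hcS hcd.symm hd hd' hc hc' (not_le.1 hle).le
  rw [← plane_swap] at hcS hcd
  obtain ⟨t, ht⟩ :
      ∃ t : ℤ, height (v + (t * ω v (basisVec ℤ c.swap)) • basisVec ℤ d) < height v :=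
    exists_height_add_lt (by rwa [Ne, form_basisVec_eq_zero_iff, Sum.swap_swap])
      (by rwa [natAbs_form_basisVec, Sum.swap_swap])
  have hmem := zsmul_mem (basisVec_mem_eichlerVectors hcS hdS hcd) t
  refine ⟨eichler (basisVec ℤ c.swap) (t • basisVec ℤ d), hmem.2, ?_⟩
  rwa [eichler_smul hmem.1, map_zsmul, form_basisVec_eq_zero_iff.2 hd', smul_zero, zero_smul,
    add_zero, smul_smul, mul_comm]

theorem exists_height_lt {v : ι ⊕ ι → ℤ} (hcS : plane c ∈ S) (hdS : plane d ∈ S) (hcd : c ≠ d)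
    (hc : v c ≠ 0) (hd : v d ≠ 0) : ∃ g ∈ elementarySymplectic S, height (g • v) < height v := by
  by_cases hc' : v c.swap = 0
  · by_cases hd' : v d.swap = 0
    · refine exists_height_lt_of_plane_ne hcS hdS (fun h => ?_) hc hc' hd hd'
      rcases eq_or_eq_swap_of_plane_eq h with rfl | rfl
      exacts [hcd rfl, hc hd']
    · exact exists_height_lt_of_swap hdS hd hd'
  · exact exists_height_lt_of_swap hcS hc hc'

theorem exists_smul_subsingleton_support (v : ι ⊕ ι → ℤ) (hv : ∀ c, plane c ∉ S → v c = 0) :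
    ∃ g ∈ elementarySymplectic S, ∀ c d, (g • v) c ≠ 0 → (g • v) d ≠ 0 → c = d := by
  induction hN : height v using Nat.strong_induction_on generalizing v with
  | _ N ih =>
  by_cases hone : ∀ c d, v c ≠ 0 → v d ≠ 0 → c = d
  · exact ⟨1, one_mem _, by rwa [one_smul]⟩
  push Not at hone
  obtain ⟨c, d, hc, hd, hcd⟩ := hone
  obtain ⟨g, hg, hlt⟩ := exists_height_lt (S := S) (by_contra fun h => hc (hv c h))
    (by_contra fun h => hd (hv d h)) hcd hc hd
  have hgv (b : ι ⊕ ι) (hb : plane b ∉ S) : (g • v) b = 0 :=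
    (smul_apply_of_mem_supportedOn (elementarySymplectic_le_supportedOn S hg) v hb).trans (hv b hb)
  obtain ⟨h, hh, hone⟩ := ih _ (hN ▸ hlt) (g • v) hgv rfl
  exact ⟨h * g, mul_mem hh hg, by rwa [mul_smul]⟩

theorem exists_smul_eq_basisVec_or_neg {v w : ι ⊕ ι → ℤ} (hv : ∀ c, plane c ∉ S → v c = 0)
    (hvw : ω v w = 1) : ∃ g ∈ elementarySymplectic S, ∃ c, plane c ∈ S ∧
      (g • v = basisVec ℤ c ∨ g • v = -basisVec ℤ c) := by
  obtain ⟨g, hg, hone⟩ := exists_smul_subsingleton_support v hv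
  have hgvw : ω (g • v) (g • w) = 1 := (form_smul_smul g v w).trans hvw
  obtain ⟨c, hc⟩ : ∃ c, (g • v) c ≠ 0 := by
    by_contra! h
    rw [show g • v = 0 from funext h, map_zero] at hgvw
    exact zero_ne_one hgvw
  have hgv : g • v = (g • v) c • basisVec ℤ c := by
    conv_lhs => rw [eq_sum_basisVec (g • v)]
    refine Finset.sum_eq_single c (fun d _ hdc => ?_) (by simp)
    rw [by_contra fun h => hdc (hone d c h hc), zero_smul]
  refine ⟨g, hg, c, by_contra fun h => hc ?_, ?_⟩
  · rw [smul_apply_of_mem_supportedOn (elementarySymplectic_le_supportedOn S hg) v h, hv c h]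
  · rw [hgv, map_zsmul, LinearMap.smul_apply, smul_eq_mul] at hgvw
    rcases Int.isUnit_iff.1 (IsUnit.of_mul_eq_one _ hgvw) with h | h <;> rw [h] at hgv
    · exact .inl (by rw [hgv, one_smul])
    · exact .inr (by rw [hgv, neg_one_smul])

section Orbit

open MulAction

theorem orbit_eq_of_form_eq_one (hp : transvection 1 p ∈ K) (hq : transvection 1 q ∈ K)
    (hpq : ω p q = 1) : orbit K p = orbit K q := by
  refine (orbit_eq_iff.2 ⟨⟨_, mul_mem hp hq⟩, ?_⟩).symm
  change (transvection 1 p * transvection 1 q) • p = q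
  rw [mul_smul, transvection_smul 1 q, hpq, transvection_smul, map_add,
    LinearMap.add_apply, form_self, mul_one, one_smul, form_swap q, hpq]
  module

theorem orbit_e_eq_orbit_f {i : ι} (hi : i ∈ S) :
    orbit (elementarySymplectic S) (e ℤ i) = orbit (elementarySymplectic S) (f ℤ i) :=
  orbit_eq_of_form_eq_one (transvection_mem_elementarySymplectic hi)
    (transvection_mem_elementarySymplectic hi) (by rw [form_e_f, if_pos rfl])

theorem orbit_neg_e {i : ι} (hi : i ∈ S) :
    orbit (elementarySymplectic S) (-e ℤ i) = orbit (elementarySymplectic S) (e ℤ i) := by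
  rw [orbit_e_eq_orbit_f hi]
  refine (orbit_eq_of_form_eq_one (transvection_mem_elementarySymplectic hi) ?_ ?_).symm
  · rw [transvection_neg]
    exact transvection_mem_elementarySymplectic hi
  · rw [map_neg, form_f_e, if_pos rfl, neg_neg]

theorem orbit_neg_f {i : ι} (hi : i ∈ S) :
    orbit (elementarySymplectic S) (-f ℤ i) = orbit (elementarySymplectic S) (e ℤ i) := by
  rw [← orbit_neg_e hi]
  refine (orbit_eq_of_form_eq_one ?_ ?_ ?_).symm
  · rw [transvection_neg]
    exact transvection_mem_elementarySymplectic hi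
  · rw [transvection_neg]
    exact transvection_mem_elementarySymplectic hi
  · rw [map_neg, map_neg, LinearMap.neg_apply, form_e_f, if_pos rfl, neg_neg]

theorem orbit_e_eq_orbit_e {i j : ι} (hi : i ∈ S) (hj : j ∈ S) :
    orbit (elementarySymplectic S) (e ℤ i) = orbit (elementarySymplectic S) (e ℤ j) := by
  obtain rfl | hij := eq_or_ne i j
  · rfl
  have hmid : transvection 1 (f ℤ i + e ℤ j) ∈ elementarySymplectic S :=
    transvection_add_mem (transvection_mem_elementarySymplectic hi)
      (transvection_mem_elementarySymplectic hj)
      (basisVec_mem_eichlerVectors (c := .inr i) (d := .inl j) hi hj hij).2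
  rw [orbit_e_eq_orbit_f hj]
  trans orbit (elementarySymplectic S) (f ℤ i + e ℤ j)
  · exact orbit_eq_of_form_eq_one (transvection_mem_elementarySymplectic hi) hmid
      (by rw [map_add, form_e_f, if_pos rfl, form_e_e, add_zero])
  · exact orbit_eq_of_form_eq_one hmid (transvection_mem_elementarySymplectic hj)
      (by rw [map_add, LinearMap.add_apply, form_f_f, form_e_f, if_pos rfl, zero_add])

theorem exists_smul_eq_e {v w : ι ⊕ ι → ℤ} {a : ι} (ha : a ∈ S) (hv : ∀ c, plane c ∉ S → v c = 0)
    (hvw : ω v w = 1) : ∃ g ∈ elementarySymplectic S, g • v = e ℤ a := by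
  suffices h : orbit (elementarySymplectic S) v = orbit (elementarySymplectic S) (e ℤ a) by
    obtain ⟨g, hg⟩ := orbit_eq_iff.1 h.symm
    exact ⟨g, g.2, hg⟩
  obtain ⟨g, hg, c, hc, hgv⟩ := exists_smul_eq_basisVec_or_neg hv hvw
  rw [← orbit_e_eq_orbit_e hc ha, ← orbit_smul (⟨g, hg⟩ : elementarySymplectic S) v,
    Subgroup.mk_smul]
  rcases c with i | i <;> rcases hgv with hgv | hgv <;> rw [hgv]
  exacts [rfl, orbit_neg_e hc, (orbit_e_eq_orbit_f hc).symm, orbit_neg_f hc]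

end Orbit

variable {s : Set ι} {a : ι}

theorem mem_eichlerVectors_e (ha : a ∉ s) {u : ι ⊕ ι → ℤ} (hu : ∀ c, plane c ∉ s → u c = 0) :
    u ∈ eichlerVectors (p := e ℤ a)
      (transvection_mem_elementarySymplectic (Set.mem_insert a s)) := by
  rw [eq_sum_basisVec u]
  refine sum_mem fun c _ => ?_
  by_cases hc : plane c ∈ s
  · refine zsmul_mem (basisVec_mem_eichlerVectors (Set.mem_insert a s)
      (Set.mem_insert_of_mem a hc) ?_) _
    rintro rfl
    exact ha hc
  · rw [hu c hc, zero_smul]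
    exact zero_mem _

theorem exists_smul_f_eq (ha : a ∉ s) {w : ι ⊕ ι → ℤ} (hw : ∀ c, plane c ∉ insert a s → w c = 0)
    (haw : ω (e ℤ a) w = 1) :
    ∃ g ∈ elementarySymplectic (insert a s), g • e ℤ a = e ℤ a ∧ g • f ℤ a = w := by
  have hwa : w (.inr a) = 1 := by rwa [form_swap, form_e, neg_neg] at haw
  set u := f ℤ a + w (.inl a) • e ℤ a - w with hu
  have hu_zero (c : ι ⊕ ι) (hc : plane c ∉ s) : u c = 0 := by
    by_cases hca : plane c = a
    · rcases c with i | i <;> obtain rfl : i = a := hca <;> simp [hu, basisVec_apply, hwa]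
    · have hcs : plane c ∉ insert a s := by simp [hca, hc]
      simp [hu, hw c hcs,
        basisVec_apply_of_plane_notMem (c := .inl a) (Set.mem_insert a s) hcs,
        basisVec_apply_of_plane_notMem (c := .inr a) (Set.mem_insert a s) hcs]
  obtain ⟨hau, hu_mem⟩ := mem_eichlerVectors_e ha hu_zero
  have hfu : ω (f ℤ a) u = 0 := by
    rw [form_swap, form_f, hu_zero (.inl a) ha, neg_zero]
  refine ⟨transvection (-w (.inl a)) (e ℤ a) * eichler (e ℤ a) u, mul_mem (transvection_mem
    (transvection_mem_elementarySymplectic (Set.mem_insert a s)) _) hu_mem, ?_, ?_⟩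
  · simp [mul_smul, eichler_smul hau, transvection_smul, hau]
  · rw [mul_smul, eichler_smul hau, hfu, form_f_e, if_pos rfl, zero_smul, neg_one_smul,
      add_zero, show f ℤ a + -u = w - w (.inl a) • e ℤ a by rw [hu]; abel,
      transvection_smul, map_sub, map_zsmul, LinearMap.sub_apply, LinearMap.smul_apply, form_self,
      form_e, hwa]
    module

theorem supportedOn_le_elementarySymplectic (S : Set ι) :
    supportedOn ℤ S ≤ elementarySymplectic S := by
  induction S, S.toFinite using Set.Finite.induction_on with
  | empty => exact supportedOn_empty.trans_le bot_le
  | @insert a s ha _ ih =>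
  intro g hg
  have hga (c : ι ⊕ ι) (hc : plane c = a) (d : ι ⊕ ι) (hd : plane d ∉ insert a s) :
      (g • basisVec ℤ c) d = 0 := by
    rw [smul_apply_of_mem_supportedOn hg _ hd,
      basisVec_apply_of_plane_notMem (hc ▸ Set.mem_insert a s) hd]
  have hef : ω (g • e ℤ a) (g • f ℤ a) = 1 := by rw [form_smul_smul, form_e_f, if_pos rfl]
  obtain ⟨h₁, hh₁, he⟩ := exists_smul_eq_e (Set.mem_insert a s) (hga _ rfl) hef
  obtain ⟨h₂, hh₂, he₂, hf₂⟩ := exists_smul_f_eq (w := h₁ • g • f ℤ a) ha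
    (fun d hd => (smul_apply_of_mem_supportedOn (elementarySymplectic_le_supportedOn _ hh₁) _ hd
      ).trans (hga _ rfl d hd)) (by rw [← he, form_smul_smul, hef])
  have hmem : h₂⁻¹ * h₁ * g ∈ supportedOn ℤ s := by
    have hmem' : h₂⁻¹ * h₁ * g ∈ supportedOn ℤ (insert a s) :=
      mul_mem (elementarySymplectic_le_supportedOn _ (mul_mem (inv_mem hh₂) hh₁)) hg
    rw [mem_supportedOn]
    intro c hc
    by_cases hca : plane c = a
    · rw [mul_smul, mul_smul, inv_smul_eq_iff]
      rcases c with i | i <;> obtain rfl : i = a := hca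
      exacts [he.trans he₂.symm, hf₂.symm]
    · exact mem_supportedOn.1 hmem' c (by simp [hca, hc])
  exact (Subgroup.mul_mem_cancel_left _ (mul_mem (inv_mem hh₂) hh₁)).1
    (elementarySymplectic_mono (Set.subset_insert a s) (ih hmem))

theorem elementarySymplectic_univ : elementarySymplectic (Set.univ : Set ι) = ⊤ :=
  top_le_iff.1 (supportedOn_univ.ge.trans (supportedOn_le_elementarySymplectic _))

end Generation

section Criterion

variable {ι : Type*} [Fintype ι] [DecidableEq ι] {K : Subgroup (symplecticGroup ι ℤ)}

theorem transvection_e_mem (hK : ∀ i j, i ≠ j → elementary ℤ i j ∈ K) {d : ι}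
    (hd : transvection 1 (e ℤ d) ∈ K) (i : ι) : transvection 1 (e ℤ i) ∈ K := by
  obtain rfl | hid := eq_or_ne i d
  · exact hd
  have hsmul : ((elementary ℤ d i)⁻¹ * elementary ℤ i d) • e ℤ d = e ℤ i := by
    rw [mul_smul, inv_smul_eq_iff, elementary_smul_e hid, elementary_smul_e hid.symm, if_pos rfl,
      if_pos rfl, add_comm]
  exact hsmul ▸ transvection_smul_mem (mul_mem (inv_mem (hK d i hid.symm)) (hK i d hid)) hd

theorem transvection_f_mem (hK : ∀ i j, i ≠ j → elementary ℤ i j ∈ K) {d : ι}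
    (hd : transvection 1 (f ℤ d) ∈ K) (i : ι) : transvection 1 (f ℤ i) ∈ K := by
  obtain rfl | hid := eq_or_ne i d
  · exact hd
  have hsmul : ((elementary ℤ i d)⁻¹ * elementary ℤ d i) • f ℤ d = -f ℤ i := by
    rw [mul_smul, inv_smul_eq_iff, elementary_smul_f hid.symm, smul_neg, elementary_smul_f hid,
      if_pos rfl, if_pos rfl, neg_sub]
  rw [← transvection_neg, ← hsmul]
  exact transvection_smul_mem (mul_mem (inv_mem (hK i d hid)) (hK d i hid.symm)) hd

theorem eq_top_of_transvection_mem_of_elementary_mem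
    (hK : ∀ i j, i ≠ j → elementary ℤ i j ∈ K) {d : ι} (he : transvection 1 (e ℤ d) ∈ K)
    (hf : transvection 1 (f ℤ d) ∈ K) : K = ⊤ := by
  have hTe := transvection_e_mem hK he
  have hTf := transvection_f_mem hK hf
  rw [← top_le_iff, ← elementarySymplectic_univ]
  refine elementarySymplectic_le ?_ ?_
  · rintro (i | i) _
    exacts [hTe i, hTf i]
  rintro (i | i) (j | j) _ _ (hij : i ≠ j)
  · refine eichler_mem (hTe i) (hTe j) ?_
    have h := transvection_smul_mem (hK i j hij) (hTe j)
    rwa [elementary_smul_e hij, if_pos rfl, add_comm] at h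
  · exact hK i j hij
  · rw [eichler_comm (form_basisVec_basisVec_of_plane_ne (c := .inr i) (d := .inl j) hij)]
    exact hK j i hij.symm
  · refine eichler_mem (hTf i) (hTf j) ?_
    have h := transvection_smul_mem (inv_mem (hK i j hij)) (hTf i)
    have hsmul : (elementary ℤ i j)⁻¹ • f ℤ i = f ℤ i + f ℤ j := by
      rw [inv_smul_eq_iff, smul_add, elementary_smul_f hij, elementary_smul_f hij, if_pos rfl,
        if_neg hij.symm, sub_zero, sub_add_cancel]
    rwa [hsmul] at h

theorem transvection_mem_of_rotation {w : symplecticGroup ι ℤ} {p u v : ι ⊕ ι → ℤ} (hw : w ∈ K)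
    (hwp : w • p = p) (hwu : w • u = u + v) (hwv : w • v = -u) (hpu : ω p u = 0) (hpv : ω p v = 0)
    (hX : eichler p u ∈ K) : transvection (ω u v) p ∈ K := by
  have hXuv : eichler p (u + v) ∈ K := by
    rw [← hwp, ← hwu, ← conj_eichler]
    exact mul_mem (mul_mem hw hX) (inv_mem hw)
  have hXv : eichler p v ∈ K := by
    have hwuv : w • (u + v) = v := by rw [smul_add, hwu, hwv, add_neg_cancel_comm]
    rw [← hwp, ← hwuv, ← conj_eichler]
    exact mul_mem (mul_mem hw hXuv) (inv_mem hw)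
  rw [eichler_add hpu hpv] at hXuv
  exact (Subgroup.mul_mem_cancel_left _ (mul_mem hX hXv)).1 hXuv

end Criterion

section Linking

variable {ι R : Type*} [Fintype ι] [DecidableEq ι] [CommRing R]

/-- The symplectic matrix `g` carries the `p`-th pair `(e, f)` of the standard basis to the
`q`-th pair. -/
def MapsPlane (g : symplecticGroup ι R) (p q : ι) : Prop :=
  g • e R p = e R q ∧ g • f R p = f R q

theorem mapsPlane_permHom (π : Equiv.Perm ι) (p : ι) : MapsPlane (permHom ι R π) p (π p) :=
  ⟨permHom_smul_e π p, permHom_smul_f π p⟩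

theorem MapsPlane.conj_elementary {g : symplecticGroup ι R} {p q p' q' : ι}
    (hp : MapsPlane g p p') (hq : MapsPlane g q q') :
    g * elementary R p q * g⁻¹ = elementary R p' q' := by
  rw [elementary, conj_eichler, hp.1, hq.2, elementary]

variable {K : Subgroup (symplecticGroup ι R)} {p q s : ι}

/-- The planes `p` and `q` are linked by `K` if they coincide or `K` contains the elementary
matrix from one to the other. -/
def Linked (K : Subgroup (symplecticGroup ι R)) (p q : ι) : Prop :=
  p ≠ q → elementary R p q ∈ K

theorem Linked.trans (hpq : Linked K p q) (hqs : Linked K q s) : Linked K p s := by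
  intro hps
  by_cases hpq' : p = q
  · exact hpq' ▸ hqs (hpq' ▸ hps)
  by_cases hqs' : q = s
  · exact hqs' ▸ hpq (hqs' ▸ hps)
  have hconj := mul_mem (mul_mem (hqs hqs') (hpq hpq')) (inv_mem (hqs hqs'))
  rw [elementary_conj_elementary hpq' hps hqs'] at hconj
  exact inv_mem_iff.1 ((mul_mem_cancel_left (hpq hpq')).1 hconj)

theorem Linked.of_mapsPlane [Nontrivial R] {p' q' : ι} (hpq : Linked K p q)
    {g : symplecticGroup ι R} (hg : g ∈ K) (hp : MapsPlane g p p') (hq : MapsPlane g q q') :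
    Linked K p' q' := by
  intro hp'q'
  have hne : p ≠ q := by
    rintro rfl
    exact hp'q' (Sum.inl_injective (basisVec_injective (hp.1.symm.trans hq.1)))
  rw [← hp.conj_elementary hq]
  exact mul_mem (mul_mem hg (hpq hne)) (inv_mem hg)

end Linking

section CyclicLinking

open scoped commutatorElement

variable {ι R : Type*} [Fintype ι] [DecidableEq ι] [CommRing R]
  {K : Subgroup (symplecticGroup ι R)} {col : ℕ → ι} {h y : symplecticGroup ι R}

theorem MapsPlane.pow (hcol : ∀ j, MapsPlane h (col j) (col (j + 1))) (j s : ℕ) :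
    MapsPlane (h ^ s) (col j) (col (j + s)) := by
  induction s with
  | zero => simp [MapsPlane]
  | succ s ih =>
    rw [MapsPlane, pow_succ', mul_smul, mul_smul, ih.1, ih.2, ← add_assoc]
    exact hcol (j + s)

theorem inv_elementary_mul_elementary_mem (hcol : ∀ j, MapsPlane h (col j) (col (j + 1)))
    (hh : h ∈ K) (hy : elementary R (col 0) (col 1) * y ∈ K)
    (hyA : Commute y (elementary R (col 0) (col 1))) (hyh : Commute y h) (s : ℕ) :
    (elementary R (col 0) (col 1))⁻¹ * elementary R (col s) (col (s + 1)) ∈ K := by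
  have hconj : h ^ s * elementary R (col 0) (col 1) * (h ^ s)⁻¹ =
      elementary R (col s) (col (s + 1)) := by
    simpa only [zero_add, add_comm 1 s] using
      (MapsPlane.pow hcol 0 s).conj_elementary (MapsPlane.pow hcol 1 s)
  have hcomm := commutator_mem (inv_mem hy) (pow_mem hh s)
  rwa [commutator_inv_mul_of_commute hyA (hyh.pow_right s), commutatorElement_def, inv_inv,
    mul_assoc, mul_assoc, ← mul_assoc (h ^ s), hconj] at hcomm

theorem linked_add_two_and_linked_add_three [Nontrivial R]
    (hcol : ∀ j, MapsPlane h (col j) (col (j + 1))) (hinj : Set.InjOn col (Set.Iio 6))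
    (hh : h ∈ K) (hy : elementary R (col 0) (col 1) * y ∈ K)
    (hyA : Commute y (elementary R (col 0) (col 1))) (hyh : Commute y h) (j : ℕ) :
    Linked K (col j) (col (j + 2)) ∧ Linked K (col j) (col (j + 3)) := by
  have hne {a b : ℕ} (ha : a < 6) (hb : b < 6) (hab : a ≠ b) : col a ≠ col b :=
    fun hab' => hab (hinj ha hb hab')
  have hE := inv_elementary_mul_elementary_mem hcol hh hy hyA hyh
  have translate (a b : ℕ) (hab : Linked K (col a) (col b)) (i : ℕ) :
      Linked K (col (a + i)) (col (b + i)) :=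
    hab.of_mapsPlane (pow_mem hh i) (MapsPlane.pow hcol a i) (MapsPlane.pow hcol b i)
  have h02 : elementary R (col 0) (col 2) ∈ K := by
    rw [← commutator_inv_mul_inv_mul (a := elementary R (col 0) (col 1))
      (b := elementary R (col 1) (col 2)) (c := elementary R (col 4) (col 5))
      (elementary_conj_elementary _ _ _) (commute_elementary _ _ _)
      (commute_elementary _ _ _) (commute_elementary _ _ _)]
    · exact commutator_mem (hE 1) (hE 4)
    all_goals exact hne (by decide) (by decide) (by decide)
  have h13 : elementary R (col 1) (col 3) ∈ K :=
    translate 0 2 (fun _ => h02) 1 (hne (by decide) (by decide) (by decide))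
  have h03 : elementary R (col 0) (col 3) ∈ K := by
    rw [← commutator_inv_mul (a := elementary R (col 0) (col 1))
      (b := elementary R (col 1) (col 3)) (c := elementary R (col 4) (col 5))
      (elementary_conj_elementary _ _ _) (commute_elementary _ _ _)]
    · exact commutator_mem h13 (hE 4)
    all_goals exact hne (by decide) (by decide) (by decide)
  simpa only [zero_add, add_comm j] using
    And.intro (translate 0 2 (fun _ => h02) j) (translate 0 3 (fun _ => h03) j)

theorem linked_add_add_two [Nontrivial R]
    (hcol : ∀ j, MapsPlane h (col j) (col (j + 1))) (hinj : Set.InjOn col (Set.Iio 6))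
    (hh : h ∈ K) (hy : elementary R (col 0) (col 1) * y ∈ K)
    (hyA : Commute y (elementary R (col 0) (col 1))) (hyh : Commute y h) (j n : ℕ) :
    Linked K (col j) (col (j + (n + 2))) := by
  have hstep := linked_add_two_and_linked_add_three hcol hinj hh hy hyA hyh
  induction n using Nat.twoStepInduction with
  | zero => exact (hstep j).1
  | one => exact (hstep j).2
  | more n ih _ => exact ih.trans (hstep (j + (n + 2))).1

end CyclicLinking

section Rotation

variable {ι : Type*} [Fintype ι] [DecidableEq ι]

/-- The symplectic matrix of order `6` with `e ↦ e + f` and `f ↦ -e` on the plane `p`. -/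
noncomputable def rotation (p : ι) : symplecticGroup ι ℤ :=
  transvection 1 (f ℤ p) * transvection 1 (e ℤ p)

theorem rotation_smul_e (p : ι) : rotation p • e ℤ p = e ℤ p + f ℤ p := by
  simp [rotation, mul_smul, transvection_smul, form_e_f]

theorem rotation_smul_f (p : ι) : rotation p • f ℤ p = -e ℤ p := by
  simp [rotation, mul_smul, transvection_smul, form_f_e, form_e_f]

theorem rotation_mem_supportedOn {S : Set ι} {p : ι} (hp : p ∈ S) :
    rotation p ∈ supportedOn ℤ S :=
  mul_mem (transvection_mem_supportedOn _ fun _ => basisVec_apply_of_plane_notMem hp)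
    (transvection_mem_supportedOn _ fun _ => basisVec_apply_of_plane_notMem hp)

end Rotation

section Construction

variable {k m : ℕ} {β : Type*}

variable (k m β) in
/-- The planes of the construction: `k` rows of length `m`, together with remaining planes
indexed by `β`. -/
abbrev Index : Type _ := (ZMod k × ZMod m) ⊕ β

/-- The plane in row `i` and column `j`. -/
abbrev cell (i : ZMod k) (j : ZMod m) : Index k m β := Sum.inl (i, j)

/-- The row of a plane, where the planes indexed by `β` are put into the extra row `k`. -/
def row : Index k m β → ℕ := Sum.elim (fun p => p.1.val) fun _ => k

/-- The cyclic permutation of the `k` rows. -/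
def rowShift : Equiv.Perm (Index k m β) :=
  Equiv.sumCongr ((Equiv.addRight 1).prodCongr (Equiv.refl _)) (Equiv.refl _)

/-- The cyclic permutation of the cells of row `0`. -/
def columnShift : Equiv.Perm (Index k m β) :=
  Equiv.sumCongr
    (Equiv.prodShear (Equiv.refl _) fun i => Equiv.addRight (if i = 0 then 1 else 0))
    (Equiv.refl _)

@[simp] theorem rowShift_cell (i : ZMod k) (j : ZMod m) :
    rowShift (cell i j : Index k m β) = cell (i + 1) j := rfl

theorem columnShift_cell (i : ZMod k) (j : ZMod m) :
    columnShift (cell i j : Index k m β) = cell i (j + if i = 0 then 1 else 0) := rfl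

theorem rowShift_pow_inr (n : ℕ) (t : β) :
    (rowShift ^ n) (Sum.inr t : Index k m β) = Sum.inr t :=
  Equiv.Perm.pow_apply_eq_self_of_apply_eq_self rfl n

theorem rowShift_pow_cell (n : ℕ) (i : ZMod k) (j : ZMod m) :
    (rowShift ^ n) (cell i j : Index k m β) = cell (i + (n : ZMod k)) j := by
  induction n with
  | zero => simp
  | succ n ih => rw [pow_succ', Equiv.Perm.mul_apply, ih, rowShift_cell, add_assoc,
      Nat.cast_succ]

theorem orderOf_rowShift : orderOf (rowShift (k := k) (m := m) (β := β)) = k := by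
  refine Nat.dvd_antisymm (orderOf_dvd_of_pow_eq_one (Equiv.ext ?_)) ?_
  · rintro (⟨i, j⟩ | t)
    · simp [rowShift_pow_cell]
    · exact rowShift_pow_inr k t
  · have h : (rowShift ^ orderOf (rowShift (k := k) (m := m) (β := β)))
        (cell 0 0 : Index k m β) = cell 0 0 := by
      rw [pow_orderOf_eq_one, Equiv.Perm.one_apply]
    rw [rowShift_pow_cell] at h
    simpa [ZMod.natCast_eq_zero_iff] using h

variable (φ : β ↪ ZMod m)

/-- The involution that exchanges the plane `t` of `β` with the cell `φ t` of row `3`. -/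
noncomputable def exchange : Equiv.Perm (Index k m β) :=
  Equiv.Perm.viaEmbedding (Equiv.sumComm β β)
    ((φ.trans (Function.Embedding.sectR 3 (ZMod m))).sumMap (Function.Embedding.refl β))

theorem exchange_cell (t : β) :
    exchange φ (cell 3 (φ t) : Index k m β) = Sum.inr t :=
  Equiv.Perm.viaEmbedding_apply _
    ((φ.trans (Function.Embedding.sectR (3 : ZMod k) (ZMod m))).sumMap
      (Function.Embedding.refl β)) (Sum.inl t)

theorem exchange_cell_of_notMem {i : ZMod k} {j : ZMod m} (hij : i = 3 → j ∉ Set.range φ) :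
    exchange φ (cell i j : Index k m β) = cell i j := by
  refine Equiv.Perm.viaEmbedding_apply_of_notMem _ _ _ ?_
  rintro ⟨t | t, ht⟩
  · obtain ⟨h3, hj⟩ : 3 = i ∧ φ t = j := by simpa using ht
    exact hij h3.symm ⟨t, hj⟩
  · simp at ht

theorem row_cell_natCast {a : ℕ} (ha : a < k) (j : ZMod m) :
    row (cell (a : ZMod k) j : Index k m β) = a :=
  ZMod.val_natCast_of_lt ha

theorem disjoint_row_preimage {L L' : Set ℕ} (h : ∀ a ∈ L, a ∉ L') :
    Disjoint (row ⁻¹' L : Set (Index k m β)) (row ⁻¹' L') :=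
  (Set.disjoint_left.2 h).preimage row

variable [NeZero k]

theorem row_rowShift {q : Index k m β} (hq : row q + 1 < k) : row (rowShift q) = row q + 1 := by
  rcases q with ⟨i, j⟩ | t
  · have hi : i.val + 1 < k := hq
    have hval : (i + 1).val = i.val + 1 := by
      conv_lhs => rw [← ZMod.natCast_zmod_val i, ← Nat.cast_succ, ZMod.val_natCast_of_lt hi]
    exact hval
  · exact absurd hq (by simp [row])

theorem mapsTo_rowShift {L L' : Set ℕ}
    (hL : ∀ a ∈ L, a + 1 < k ∧ a + 1 ∈ L' ∨ a = k ∧ k ∈ L') :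
    Set.MapsTo (rowShift : Equiv.Perm (Index k m β)) (row ⁻¹' L) (row ⁻¹' L') := by
  intro q hq
  rcases hL _ hq with ⟨hlt, hmem⟩ | ⟨hrow, hmem⟩
  · rwa [Set.mem_preimage, row_rowShift hlt]
  · rcases q with ⟨i, j⟩ | t
    · exact absurd hrow (ZMod.val_lt i).ne
    · exact hmem

variable [NeZero m] [Fintype β] [DecidableEq β]

variable (k m β) in
/-- The first generator, which permutes the rows cyclically. -/
noncomputable def firstGenerator : symplecticGroup (Index k m β) ℤ := permHom _ ℤ rowShift

variable (k m β) in
/-- The second generator, the conjugate of the first one by the rotation of row `0`. -/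
noncomputable def secondGenerator : symplecticGroup (Index k m β) ℤ :=
  (permHom _ ℤ columnShift)⁻¹ * firstGenerator k m β * permHom _ ℤ columnShift

variable (k m β) in
/-- The quotient of the second and the first generator; it rotates the rows `0` and `1` in
opposite directions. -/
noncomputable def rowRotation : symplecticGroup (Index k m β) ℤ :=
  secondGenerator k m β * (firstGenerator k m β)⁻¹

theorem rowRotation_eq_permHom :
    rowRotation k m β =
      permHom _ ℤ (columnShift⁻¹ * (rowShift * columnShift * rowShift⁻¹)) := by
  simp only [rowRotation, secondGenerator, firstGenerator, map_mul, map_inv, mul_assoc]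

theorem mapsPlane_rowRotation (hk : 1 < k) (j : ZMod m) :
    MapsPlane (rowRotation k m β) (cell 1 j) (cell 1 (j + 1)) := by
  have : Fact (1 < k) := ⟨hk⟩
  have hshift : rowShift⁻¹ (cell 1 j : Index k m β) = cell 0 j := by
    rw [Equiv.Perm.inv_eq_iff_eq, rowShift_cell, zero_add]
  have hcolumn : columnShift⁻¹ (cell 1 (j + 1) : Index k m β) = cell 1 (j + 1) := by
    rw [Equiv.Perm.inv_eq_iff_eq, columnShift_cell, if_neg one_ne_zero, add_zero]
  have h := mapsPlane_permHom (R := ℤ)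
    (columnShift⁻¹ * (rowShift * columnShift * rowShift⁻¹)) (cell 1 j : Index k m β)
  simpa only [rowRotation_eq_permHom, Equiv.Perm.mul_apply, hshift, columnShift_cell, if_true,
    rowShift_cell, zero_add, hcolumn] using h

theorem permHom_columnShift_mem_supportedOn :
    permHom (Index k m β) ℤ columnShift ∈ supportedOn ℤ (row ⁻¹' {0}) := by
  refine permHom_mem_supportedOn ?_
  rintro (⟨i, j⟩ | t) hq
  · have hi : i ≠ 0 := by simpa [row] using hq
    rw [columnShift_cell, if_neg hi, add_zero]
  · rfl

theorem rowRotation_mem_supportedOn (hk : 1 < k) :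
    rowRotation k m β ∈ supportedOn ℤ (row ⁻¹' {0, 1}) := by
  have hconj : permHom (Index k m β) ℤ rowShift * permHom _ ℤ columnShift *
      (permHom _ ℤ rowShift)⁻¹ ∈ supportedOn ℤ (row ⁻¹' {1}) :=
    permHom_conj_mem_supportedOn permHom_columnShift_mem_supportedOn
      (mapsTo_rowShift (by simpa using Or.inl hk))
  rw [rowRotation_eq_permHom]
  simp only [map_mul, map_inv]
  exact mul_mem
    (supportedOn_mono (Set.preimage_mono (by simp)) (inv_mem permHom_columnShift_mem_supportedOn))
    (supportedOn_mono (Set.preimage_mono (by simp)) hconj)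

variable (k m β) in
/-- The elementary matrix between the first two cells of row `1`. -/
noncomputable def rowOneElementary : symplecticGroup (Index k m β) ℤ :=
  elementary ℤ (cell 1 0) (cell 1 1)

variable (c : ZMod m)

variable (k) in
/-- The part of the conjugator that attaches the planes of `β` to row `3` and rotates its
plane in column `c`. -/
noncomputable def attachment : symplecticGroup (Index k m β) ℤ :=
  rotation (cell 3 c) * permHom _ ℤ (exchange φ)

variable (k) in
/-- The element that conjugates the first generator to the third one. -/
noncomputable def conjugator : symplecticGroup (Index k m β) ℤ :=
  rowOneElementary k m β * attachment k φ c

variable (k) in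
/-- The third generator, a conjugate of the first one. -/
noncomputable def thirdGenerator : symplecticGroup (Index k m β) ℤ :=
  conjugator k φ c * firstGenerator k m β * (conjugator k φ c)⁻¹

variable (k) in
/-- The quotient of the third and the first generator. -/
noncomputable def connector : symplecticGroup (Index k m β) ℤ :=
  thirdGenerator k φ c * (firstGenerator k m β)⁻¹

variable (k) in
/-- The part of the connector that does not touch the rows `0` and `1`. -/
noncomputable def connectorTail : symplecticGroup (Index k m β) ℤ :=
  attachment k φ c *
    (firstGenerator k m β * conjugator k φ c * (firstGenerator k m β)⁻¹)⁻¹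

theorem connector_eq : connector k φ c = rowOneElementary k m β * connectorTail k φ c := by
  simp only [connector, connectorTail, thirdGenerator, conjugator]
  group

theorem rowOneElementary_mem_supportedOn (hk : 1 < k) :
    rowOneElementary k m β ∈ supportedOn ℤ (row ⁻¹' {1}) := by
  have hrow (j : ZMod m) : (cell 1 j : Index k m β) ∈ row ⁻¹' {1} := by
    simpa using row_cell_natCast hk j
  exact eichler_mem_supportedOn (fun _ => basisVec_apply_of_plane_notMem (hrow 0))
    fun _ => basisVec_apply_of_plane_notMem (hrow 1)

theorem permHom_exchange_mem_supportedOn (hk : 3 < k) :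
    permHom _ ℤ (exchange φ) ∈ supportedOn ℤ (row ⁻¹' {3, k} : Set (Index k m β)) := by
  refine permHom_mem_supportedOn ?_
  rintro (⟨i, j⟩ | t) hq
  · refine exchange_cell_of_notMem φ ?_
    rintro rfl
    exact absurd (Or.inl (row_cell_natCast hk j)) hq
  · exact absurd (Or.inr rfl) hq

theorem attachment_mem_supportedOn (hk : 3 < k) :
    attachment k φ c ∈ supportedOn ℤ (row ⁻¹' {3, k} : Set (Index k m β)) :=
  mul_mem (rotation_mem_supportedOn (Or.inl (row_cell_natCast hk c)))
    (permHom_exchange_mem_supportedOn φ hk)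

theorem conj_conjugator_mem_supportedOn (hk : 5 ≤ k) :
    firstGenerator k m β * conjugator k φ c * (firstGenerator k m β)⁻¹ ∈
      supportedOn ℤ (row ⁻¹' {2, 4, k}) := by
  have hconj : conjugator k φ c ∈ supportedOn ℤ (row ⁻¹' {1, 3, k} : Set (Index k m β)) :=
    mul_mem
      (supportedOn_mono (Set.preimage_mono (by simp))
        (rowOneElementary_mem_supportedOn (by lia)))
      (supportedOn_mono (Set.preimage_mono (by simp))
        (attachment_mem_supportedOn φ c (by lia)))
  refine permHom_conj_mem_supportedOn hconj (mapsTo_rowShift ?_)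
  rintro a (rfl | rfl | rfl)
  · exact Or.inl ⟨by lia, by simp⟩
  · exact Or.inl ⟨by lia, by simp⟩
  · exact Or.inr ⟨rfl, by simp⟩

theorem connectorTail_mem_supportedOn (hk : 5 ≤ k) :
    connectorTail k φ c ∈ supportedOn ℤ (row ⁻¹' {2, 3, 4, k} : Set (Index k m β)) := by
  refine mul_mem
    (supportedOn_mono (Set.preimage_mono ?_) (attachment_mem_supportedOn φ c (by lia)))
    (inv_mem (supportedOn_mono (Set.preimage_mono ?_)
      (conj_conjugator_mem_supportedOn φ c hk)))
  · rintro a (rfl | rfl) <;> simp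
  · rintro a (rfl | rfl | rfl) <;> simp

theorem commute_connectorTail (hk : 5 ≤ k) {g : symplecticGroup (Index k m β) ℤ}
    (hg : g ∈ supportedOn ℤ (row ⁻¹' {0, 1})) : Commute (connectorTail k φ c) g := by
  refine (commute_of_disjoint_support hg (connectorTail_mem_supportedOn φ c hk)
    (disjoint_row_preimage ?_)).symm
  simp only [Set.mem_insert_iff, Set.mem_singleton_iff]
  lia

variable {φ c}

theorem connector_smul_basisVec (hk : 5 ≤ k) {b b' : Index k m β ⊕ Index k m β}
    (hb : row (plane b) = 3) (hbb' : b.map (exchange φ) (exchange φ) = b') :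
    connector k φ c • basisVec ℤ b =
      rotation (cell 3 c : Index k m β) • basisVec ℤ b' := by
  have hA := rowOneElementary_mem_supportedOn (k := k) (m := m) (β := β) (by lia)
  have hcomm : Commute (rowOneElementary k m β) (attachment k φ c) := by
    refine commute_of_disjoint_support hA (attachment_mem_supportedOn φ c (by lia))
      (disjoint_row_preimage ?_)
    simp only [Set.mem_insert_iff, Set.mem_singleton_iff]
    lia
  rw [connector_eq, connectorTail, mul_smul, mul_smul,
    mem_supportedOn.1 (inv_mem (conj_conjugator_mem_supportedOn φ c hk)), ← mul_smul,
    hcomm.eq, mul_smul, mem_supportedOn.1 hA, attachment, mul_smul, permHom_smul_basisVec, hbb']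
  · simp [hb]
  · simp only [Set.mem_preimage, hb, Set.mem_insert_iff, Set.mem_singleton_iff]
    lia

theorem mapsPlane_connector (hk : 5 ≤ k) {j : ZMod m} {q : Index k m β}
    (hq : exchange φ (cell 3 j) = q) (hqc : q ≠ cell 3 c) :
    MapsPlane (connector k φ c) (cell 3 j) q := by
  have hrow : row (cell 3 j : Index k m β) = 3 := row_cell_natCast (by lia) j
  have hfix := mem_supportedOn.1
    (rotation_mem_supportedOn (Set.mem_singleton (cell 3 c : Index k m β)))
  exact ⟨(connector_smul_basisVec (b := .inl (cell 3 j)) hk hrow (congrArg Sum.inl hq)).trans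
      (hfix (.inl q) hqc),
    (connector_smul_basisVec (b := .inr (cell 3 j)) hk hrow (congrArg Sum.inr hq)).trans
      (hfix (.inr q) hqc)⟩

theorem connector_smul_e (hk : 5 ≤ k) (hc : c ∉ Set.range φ) :
    connector k φ c • e ℤ (cell 3 c : Index k m β) = e ℤ (cell 3 c) + f ℤ (cell 3 c) :=
  (connector_smul_basisVec (b := .inl (cell 3 c)) hk (row_cell_natCast (by lia) c)
    (congrArg Sum.inl (exchange_cell_of_notMem φ fun _ => hc))).trans (rotation_smul_e _)

theorem connector_smul_f (hk : 5 ≤ k) (hc : c ∉ Set.range φ) :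
    connector k φ c • f ℤ (cell 3 c : Index k m β) = -e ℤ (cell 3 c) :=
  (connector_smul_basisVec (b := .inr (cell 3 c)) hk (row_cell_natCast (by lia) c)
    (congrArg Sum.inr (exchange_cell_of_notMem φ fun _ => hc))).trans (rotation_smul_f _)

theorem orderOf_firstGenerator : orderOf (firstGenerator k m β) = k := by
  rw [firstGenerator, orderOf_injective _ permHom_injective, orderOf_rowShift]

theorem orderOf_secondGenerator : orderOf (secondGenerator k m β) = k := by
  simpa only [secondGenerator, inv_inv, orderOf_firstGenerator] using
    orderOf_conj (permHom _ ℤ columnShift)⁻¹ (firstGenerator k m β)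

theorem orderOf_thirdGenerator : orderOf (thirdGenerator k φ c) = k :=
  (orderOf_conj _ _).trans orderOf_firstGenerator

variable {K : Subgroup (symplecticGroup (Index k m β) ℤ)}

theorem linked_row_one (hk : 5 ≤ k) (hm : 6 ≤ m) (hR : rowRotation k m β ∈ K)
    (hC : connector k φ c ∈ K) (j j' : ZMod m) : Linked K (cell 1 j) (cell 1 j') := by
  have hcol (i : ℕ) : MapsPlane (rowRotation k m β) (cell 1 (i : ZMod m))
      (cell 1 ((i + 1 : ℕ) : ZMod m)) := by
    simpa using mapsPlane_rowRotation (by lia) (i : ZMod m)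
  have hinj : Set.InjOn (fun i : ℕ => (cell 1 (i : ZMod m) : Index k m β)) (Set.Iio 6) := by
    intro a ha b hb hab
    have hab' : (a : ZMod m) = b := by simpa using hab
    rw [Set.mem_Iio] at ha hb
    rw [← ZMod.val_natCast_of_lt (ha.trans_le hm), hab',
      ZMod.val_natCast_of_lt (hb.trans_le hm)]
  have hE : elementary ℤ (cell 1 ((0 : ℕ) : ZMod m)) (cell 1 ((1 : ℕ) : ZMod m)) =
      rowOneElementary k m β := by
    rw [Nat.cast_zero, Nat.cast_one, rowOneElementary]
  have hA : rowOneElementary k m β ∈ supportedOn ℤ (row ⁻¹' {0, 1}) :=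
    supportedOn_mono (Set.preimage_mono (by simp)) (rowOneElementary_mem_supportedOn (by lia))
  have h := linked_add_add_two hcol hinj hR (y := connectorTail k φ c)
    (by rwa [hE, ← connector_eq]) (by rw [hE]; exact commute_connectorTail φ c hk hA)
    (commute_connectorTail φ c hk (rowRotation_mem_supportedOn (by lia)))
    j.val ((j' - j).val + (m - 2))
  have hcast : ((j.val + ((j' - j).val + (m - 2) + 2) : ℕ) : ZMod m) = j' := by
    rw [add_assoc _ (m - 2), Nat.sub_add_cancel (by lia)]
    simp
  simpa only [hcast, ZMod.natCast_zmod_val] using h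

theorem mapsPlane_firstGenerator_pow (n : ℕ) (p : Index k m β) :
    MapsPlane (firstGenerator k m β ^ n) p ((rowShift ^ n) p) := by
  rw [firstGenerator, ← map_pow]
  exact mapsPlane_permHom _ p

theorem mapsPlane_firstGenerator_pow_cell (i i' : ZMod k) (j : ZMod m) :
    MapsPlane (firstGenerator k m β ^ (i' - i).val) (cell i j) (cell i' j) := by
  simpa [rowShift_pow_cell] using
    mapsPlane_firstGenerator_pow (i' - i).val (cell i j : Index k m β)

theorem linked_row (hk : 5 ≤ k) (hm : 6 ≤ m) (hX : firstGenerator k m β ∈ K)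
    (hR : rowRotation k m β ∈ K) (hC : connector k φ c ∈ K) (i : ZMod k) (j j' : ZMod m) :
    Linked K (cell i j) (cell i j') :=
  (linked_row_one hk hm hR hC j j').of_mapsPlane (pow_mem hX _)
    (mapsPlane_firstGenerator_pow_cell 1 i j) (mapsPlane_firstGenerator_pow_cell 1 i j')

variable {d : ZMod m}

theorem linked_inr_cell (hk : 5 ≤ k) (hm : 6 ≤ m) (hX : firstGenerator k m β ∈ K)
    (hR : rowRotation k m β ∈ K) (hC : connector k φ c ∈ K) (hd : d ∉ Set.range φ) (hdc : d ≠ c)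
    (t : β) (i : ZMod k) :
    Linked K (Sum.inr t) (cell i d) ∧ Linked K (cell i d) (Sum.inr t) := by
  have hrow := linked_row hk hm hX hR hC
  have ht : MapsPlane (connector k φ c) (cell 3 (φ t) : Index k m β) (Sum.inr t) :=
    mapsPlane_connector hk (exchange_cell φ t) (by simp)
  have hdd : MapsPlane (connector k φ c) (cell 3 d : Index k m β) (cell 3 d) :=
    mapsPlane_connector hk (exchange_cell_of_notMem φ fun _ => hd) (by simpa using hdc)
  have hshift := mapsPlane_firstGenerator_pow_cell (β := β) 3 i d
  have hfix : MapsPlane (firstGenerator k m β ^ (i - 3).val) (Sum.inr t) (Sum.inr t) := by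
    simpa only [rowShift_pow_inr] using mapsPlane_firstGenerator_pow (i - 3).val (Sum.inr t)
  exact ⟨((hrow 3 (φ t) d).of_mapsPlane hC ht hdd).of_mapsPlane (pow_mem hX _) hfix hshift,
    ((hrow 3 d (φ t)).of_mapsPlane hC hdd ht).of_mapsPlane (pow_mem hX _) hshift hfix⟩

theorem linked_of_mem [Nonempty β] (hk : 5 ≤ k) (hm : 6 ≤ m) (hX : firstGenerator k m β ∈ K)
    (hR : rowRotation k m β ∈ K) (hC : connector k φ c ∈ K) (hd : d ∉ Set.range φ) (hdc : d ≠ c)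
    (p q : Index k m β) : Linked K p q := by
  obtain ⟨t₀⟩ := ‹Nonempty β›
  have hrow := linked_row hk hm hX hR hC
  have hinr := linked_inr_cell hk hm hX hR hC hd hdc
  have hub : ∀ p, Linked K p (Sum.inr t₀) ∧ Linked K (Sum.inr t₀) p := by
    rintro (⟨i, j⟩ | t)
    · exact ⟨(hrow i j d).trans (hinr t₀ i).2, (hinr t₀ i).1.trans (hrow i d j)⟩
    · exact ⟨(hinr t 3).1.trans (hinr t₀ 3).2, (hinr t₀ 3).1.trans (hinr t 3).2⟩
  exact (hub p).1.trans (hub q).2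

theorem eq_top_of_generators_mem [Nonempty β] (hk : 5 ≤ k) (hm : 6 ≤ m)
    (hX : firstGenerator k m β ∈ K) (hY : secondGenerator k m β ∈ K)
    (hZ : thirdGenerator k φ c ∈ K) (hc : c ∉ Set.range φ) (hd : d ∉ Set.range φ) (hdc : d ≠ c) :
    K = ⊤ := by
  have hC : connector k φ c ∈ K := mul_mem hZ (inv_mem hX)
  have hE (p q : Index k m β) (hpq : p ≠ q) : elementary ℤ p q ∈ K :=
    linked_of_mem hk hm hX (mul_mem hY (inv_mem hX)) hC hd hdc p q hpq
  have hcell : (cell 3 d : Index k m β) ≠ cell 3 c := by simpa using hdc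
  have hfix : MapsPlane (connector k φ c) (cell 3 d : Index k m β) (cell 3 d) :=
    mapsPlane_connector hk (exchange_cell_of_notMem φ fun _ => hd) hcell
  have he := connector_smul_e (k := k) hk hc
  have hf := connector_smul_f (k := k) hk hc
  refine eq_top_of_transvection_mem_of_elementary_mem hE (d := cell 3 d) ?_ ?_
  · have h := transvection_mem_of_rotation (inv_mem hC) (inv_smul_eq_iff.2 hfix.1.symm)
      (u := f ℤ (cell 3 c)) (v := e ℤ (cell 3 c))
      (inv_smul_eq_iff.2 (by rw [smul_add, he, hf]; abel))
      (inv_smul_eq_iff.2 (by rw [smul_neg, hf, neg_neg])) (form_e_f_of_ne hcell) (form_e_e _ _)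
      (hE _ _ hcell)
    rw [form_f_e, if_pos rfl, ← inv_transvection] at h
    exact inv_mem_iff.1 h
  · have h := transvection_mem_of_rotation hC hfix.2 he hf
      (by rw [form_f_e, if_neg hcell]) (form_f_f _ _)
      (by rw [eichler_comm (by rw [form_f_e, if_neg hcell])]; exact hE _ _ hcell.symm)
    rwa [form_e_f, if_pos rfl] at h

end Construction

theorem exists_closure_eq_top_of_mulEquiv {G H : Type*} [Group G] [Group H] (Φ : G ≃* H) {k : ℕ}
    (h : ∃ x y z : G, orderOf x = k ∧ orderOf y = k ∧ orderOf z = k ∧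
      Subgroup.closure {x, y, z} = ⊤) :
    ∃ x y z : H, orderOf x = k ∧ orderOf y = k ∧ orderOf z = k ∧
      Subgroup.closure {x, y, z} = ⊤ := by
  obtain ⟨x, y, z, hx, hy, hz, hxyz⟩ := h
  refine ⟨Φ x, Φ y, Φ z, by rwa [Φ.orderOf_eq], by rwa [Φ.orderOf_eq], by rwa [Φ.orderOf_eq], ?_⟩
  have himage : ({Φ x, Φ y, Φ z} : Set H) = Φ.toMonoidHom '' {x, y, z} := by
    simp [Set.image_insert_eq]
  rw [himage, ← MonoidHom.map_closure, hxyz, Subgroup.map_top_of_surjective _ Φ.surjective]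

theorem exists_generators_index {k m r : ℕ} (hk : 5 ≤ k) (hm : 6 ≤ m) (hr : 0 < r)
    (hrm : r + 2 ≤ m) [NeZero k] [NeZero m] :
    ∃ x y z : symplecticGroup (Index k m (Fin r)) ℤ,
      orderOf x = k ∧ orderOf y = k ∧ orderOf z = k ∧ Subgroup.closure {x, y, z} = ⊤ := by
  obtain ⟨ψ⟩ : Nonempty (Fin r ⊕ Bool ↪ ZMod m) :=
    Function.Embedding.nonempty_of_card_le (by simpa [ZMod.card] using hrm)
  let φ : Fin r ↪ ZMod m := Function.Embedding.inl.trans ψ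
  have hφ (b : Bool) : ψ (Sum.inr b) ∉ Set.range φ := by simp [φ]
  have : Nonempty (Fin r) := Fin.pos_iff_nonempty.1 hr
  refine ⟨firstGenerator k m (Fin r), secondGenerator k m (Fin r),
    thirdGenerator k φ (ψ (Sum.inr true)), orderOf_firstGenerator, orderOf_secondGenerator,
    orderOf_thirdGenerator, ?_⟩
  exact eq_top_of_generators_mem hk hm (Subgroup.subset_closure (by simp))
    (Subgroup.subset_closure (by simp)) (Subgroup.subset_closure (by simp)) (hφ true) (hφ false)
    (by simp)

end SymplecticGeneration

open SymplecticGeneration in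
theorem Sp_2n_Z_generated_by_three_elements_of_order_k_general {ι : Type*} [Fintype ι]
    [DecidableEq ι] {k : ℕ} (hk : 5 ≤ k) (hι : k * (k + 2) < Fintype.card ι) :
    ∃ M₁ M₂ M₃ : Matrix.symplecticGroup ι ℤ,
      orderOf M₁ = k ∧ orderOf M₂ = k ∧ orderOf M₃ = k ∧
      Subgroup.closure {M₁, M₂, M₃} = ⊤ := by
  obtain ⟨m, r, hr, hrk, hcard⟩ : ∃ m r, 0 < r ∧ r ≤ k ∧ Fintype.card ι = k * m + r :=
    ⟨(Fintype.card ι - 1) / k, (Fintype.card ι - 1) % k + 1, Nat.succ_pos _,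
      Nat.mod_lt _ (by lia), by have := Nat.div_add_mod (Fintype.card ι - 1) k; lia⟩
  have hm : k + 2 ≤ m := by
    by_contra! hm
    have := Nat.mul_le_mul_left k (Nat.le_of_lt_succ hm)
    lia
  have : NeZero k := ⟨by lia⟩
  have : NeZero m := ⟨by lia⟩
  have σ : Index k m (Fin r) ≃ ι := Fintype.equivOfCardEq (by simp [ZMod.card, hcard])
  exact exists_closure_eq_top_of_mulEquiv (reindexEquiv ℤ σ)
    (exists_generators_index hk (by lia) hr (by lia))

/-- For `k ≥ 6` and `n ≥ 2((k - 1)² + 1)`, the integral symplectic group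
`Sp(2n, ℤ)` is generated by three elements of order exactly `k`. -/
theorem Sp_2n_Z_generated_by_three_elements_of_order_k
    (k n : ℕ) (hk : 6 ≤ k) (hn : 2 * ((k - 1) ^ 2 + 1) ≤ n) :
    ∃ M₁ M₂ M₃ : Matrix.symplecticGroup (Fin n) ℤ,
      orderOf M₁ = k ∧ orderOf M₂ = k ∧ orderOf M₃ = k ∧
      Subgroup.closure {M₁, M₂, M₃} = ⊤ := by
  obtain ⟨a, rfl⟩ : ∃ a, k = a + 1 := ⟨k - 1, by lia⟩
  rw [Nat.add_sub_cancel] at hn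
  exact Sp_2n_Z_generated_by_three_elements_of_order_k_general (by lia)
    (by rw [Fintype.card_fin]; nlinarith)
end

section
/- Let k ≥ 5. The number of integers g with 1 ≤ g < (k − 1)(k − 3) such that either g = a·k + b·(k − 1) for some nonnegative integers a, b, or g = a·k + 1 for some positive integer a, is exactly (k² − 3k − 4)/2. -/
/-!
Fix `s = a + b`. As `a` and `b` vary, `a * k + b * (k - 1)` takes each value from `s * (k - 1)` to
`s * k` exactly once, and `s * k + 1` extends this run of integers by one. So the positive integers
of the correct form are those in the blocks `[s * (k - 1), s * k + 1]` with `s ≥ 1`. The blocks with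
`s ≤ k - 2` do not overlap, and those lying below `(k - 1) * (k - 3)` are exactly the ones with
`s ≤ k - 4`. The block of index `s` has `s + 2` elements, so the count is
`3 + 4 + ⋯ + (k - 2) = (k - 4) * (k + 1) / 2`.
-/

open Finset

/-- The condition on a genus `g` that is being counted: `g` lies in the additive monoid generated by
`k` and `k - 1`, or is `1` more than a positive multiple of `k`. -/
def IsOfCorrectForm (k g : ℤ) : Prop :=
  (∃ a b : ℤ, 0 ≤ a ∧ 0 ≤ b ∧ g = a * k + b * (k - 1)) ∨ ∃ a : ℤ, 1 ≤ a ∧ g = a * k + 1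

/-- The run of consecutive integers consisting of the combinations `a * k + b * (k - 1)` with
`a, b ≥ 0` and `a + b = s`, together with `s * k + 1`. This reading needs `0 ≤ s`, and the block of
index `0` contains `1`, which need not be of the correct form; the count uses `1 ≤ s` only. -/
noncomputable def genusBlock (k s : ℤ) : Finset ℤ :=
  Icc (s * (k - 1)) (s * k + 1)

theorem mem_genusBlock {k s g : ℤ} : g ∈ genusBlock k s ↔ s * (k - 1) ≤ g ∧ g ≤ s * k + 1 :=
  mem_Icc

theorem exists_nonneg_combination_iff {R : Type*} [CommRing R] [PartialOrder R]
    [IsOrderedAddMonoid R] {k s g : R} :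
    (∃ a b : R, 0 ≤ a ∧ 0 ≤ b ∧ a + b = s ∧ g = a * k + b * (k - 1)) ↔
      s * (k - 1) ≤ g ∧ g ≤ s * k := by
  constructor
  · rintro ⟨a, b, ha, hb, rfl, rfl⟩
    constructor
    · rw [← sub_nonneg]
      convert ha using 1
      ring
    · rw [← sub_nonneg]
      convert hb using 1
      ring
  · rintro ⟨hlower, hupper⟩
    exact ⟨g - s * (k - 1), s * k - g, sub_nonneg.2 hlower, sub_nonneg.2 hupper, by ring, by ring⟩

theorem isOfCorrectForm_iff_exists_mem_genusBlock {k g : ℤ} (hg : g ≠ 0) :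
    IsOfCorrectForm k g ↔ ∃ s, 1 ≤ s ∧ g ∈ genusBlock k s := by
  simp only [mem_genusBlock]
  constructor
  · rintro (⟨a, b, ha, hb, hgab⟩ | ⟨a, ha, rfl⟩)
    · have hsum : a + b ≠ 0 := by
        intro hsum
        obtain ⟨rfl, rfl⟩ : a = 0 ∧ b = 0 := by omega
        exact hg (by simpa using hgab)
      obtain ⟨hlower, hupper⟩ := exists_nonneg_combination_iff.1 ⟨a, b, ha, hb, rfl, hgab⟩
      exact ⟨a + b, by omega, hlower, by omega⟩
    · exact ⟨a, ha, by linarith, le_rfl⟩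
  · rintro ⟨s, hs, hlower, hupper⟩
    rcases hupper.eq_or_lt with htop | hlt
    · exact Or.inr ⟨s, hs, htop⟩
    · obtain ⟨a, b, ha, hb, -, hgab⟩ :=
        exists_nonneg_combination_iff.2 ⟨hlower, Int.lt_add_one_iff.1 hlt⟩
      exact Or.inl ⟨a, b, ha, hb, hgab⟩

theorem pos_of_mem_genusBlock {k s g : ℤ} (hk : 2 ≤ k) (hs : 1 ≤ s) (hg : g ∈ genusBlock k s) :
    0 < g :=
  (mul_pos (by omega) (by omega)).trans_le (mem_genusBlock.1 hg).1

theorem lt_iff_of_mem_genusBlock {k s g : ℤ} (hk : 1 ≤ k) (hg : g ∈ genusBlock k s) :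
    g < (k - 1) * (k - 3) ↔ s ≤ k - 4 := by
  obtain ⟨hlower, hupper⟩ := mem_genusBlock.1 hg
  constructor
  · intro hlt
    have hmul : s * (k - 1) < (k - 3) * (k - 1) := by linarith
    have : s < k - 3 := lt_of_mul_lt_mul_right hmul (by omega)
    omega
  · intro hs
    calc
      g ≤ s * k + 1 := hupper
      _ ≤ (k - 4) * k + 1 := by gcongr
      _ < (k - 1) * (k - 3) := by linarith

theorem setOf_isOfCorrectForm_eq_biUnion_genusBlock {k : ℤ} (hk : 2 ≤ k) :
    {g : ℤ | 1 ≤ g ∧ g < (k - 1) * (k - 3) ∧ IsOfCorrectForm k g} =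
      (Icc 1 (k - 4)).biUnion (genusBlock k) := by
  ext g
  simp only [Set.mem_ofPred_eq, mem_coe, mem_biUnion, mem_Icc]
  constructor
  · rintro ⟨hpos, hlt, hform⟩
    obtain ⟨s, hs, hmem⟩ := (isOfCorrectForm_iff_exists_mem_genusBlock (by omega)).1 hform
    exact ⟨s, ⟨hs, (lt_iff_of_mem_genusBlock (by omega) hmem).1 hlt⟩, hmem⟩
  · rintro ⟨s, ⟨hs, hsk⟩, hmem⟩
    have hpos : 0 < g := pos_of_mem_genusBlock hk hs hmem
    exact ⟨hpos, (lt_iff_of_mem_genusBlock (by omega) hmem).2 hsk,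
      (isOfCorrectForm_iff_exists_mem_genusBlock hpos.ne').2 ⟨s, hs, hmem⟩⟩

theorem disjoint_genusBlock_of_lt {k s t : ℤ} (hk : 1 ≤ k) (hst : s < t) (ht : t ≤ k - 2) :
    Disjoint (genusBlock k s) (genusBlock k t) := by
  have hgap : s * k + 1 < t * (k - 1) :=
    calc
      s * k + 1 < (s + 1) * (k - 1) := by linarith
      _ ≤ t * (k - 1) := mul_le_mul_of_nonneg_right hst (by omega)
  refine disjoint_left.2 fun g hgs hgt => ?_
  exact (((mem_genusBlock.1 hgs).2.trans_lt hgap).trans_le (mem_genusBlock.1 hgt).1).false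

theorem pairwiseDisjoint_genusBlock {k : ℤ} (hk : 1 ≤ k) :
    (Set.Iic (k - 2)).PairwiseDisjoint (genusBlock k) := by
  intro s hs t ht hst
  rcases hst.lt_or_gt with hlt | hgt
  · exact disjoint_genusBlock_of_lt hk hlt ht
  · exact (disjoint_genusBlock_of_lt hk hgt hs).symm

theorem card_genusBlock (k : ℤ) {s : ℤ} (hs : -2 ≤ s) : ((genusBlock k s).card : ℤ) = s + 2 := by
  rw [genusBlock, Int.card_Icc_of_le _ _ (by linarith)]
  ring

theorem two_mul_sum_Icc_one_add {n : ℤ} (hn : 0 ≤ n) (c : ℤ) :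
    2 * ∑ s ∈ Icc 1 n, (s + c) = n * (n + 1 + 2 * c) := by
  induction n, hn using Int.leInduction with
  | base => simp
  | succ n hn ih =>
    rw [← insert_Icc_right_eq_Icc_add_one (by omega), sum_insert (by simp), mul_add, ih]
    ring

theorem two_mul_card_biUnion_genusBlock {k n : ℤ} (hn : 0 ≤ n) (hnk : n ≤ k - 2) :
    2 * (((Icc 1 n).biUnion (genusBlock k)).card : ℤ) = n * (n + 5) := by
  have hdisj : (Icc 1 n : Set ℤ).PairwiseDisjoint (genusBlock k) :=
    (pairwiseDisjoint_genusBlock (by omega)).subset fun s hs => (mem_Icc.1 hs).2.trans hnk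
  have hcard : ∀ s ∈ Icc 1 n, ((genusBlock k s).card : ℤ) = s + 2 := fun s hs =>
    card_genusBlock k (by linarith [(mem_Icc.1 hs).1])
  rw [card_biUnion hdisj, Nat.cast_sum, sum_congr rfl hcard, two_mul_sum_Icc_one_add hn]
  ring

/-- For `k ≥ 5`, exactly `(k² - 3k - 4)/2` of the integers `g` with
`1 ≤ g < (k - 1)(k - 3)` are of the form `a·k + b·(k - 1)` with `a, b ≥ 0`
or of the form `a·k + 1` with `a ≥ 1`. -/
theorem count_of_small_genera_of_correct_form (k : ℤ) (hk : 5 ≤ k) :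
    ({g : ℤ | 1 ≤ g ∧ g < (k - 1) * (k - 3) ∧
        ((∃ a b : ℤ, 0 ≤ a ∧ 0 ≤ b ∧ g = a * k + b * (k - 1)) ∨
          (∃ a : ℤ, 1 ≤ a ∧ g = a * k + 1))}.ncard : ℤ)
      = (k ^ 2 - 3 * k - 4) / 2 := by
  change ({g : ℤ | 1 ≤ g ∧ g < (k - 1) * (k - 3) ∧ IsOfCorrectForm k g}.ncard : ℤ) = _
  rw [setOf_isOfCorrectForm_eq_biUnion_genusBlock (by omega), Set.ncard_coe_finset]
  have hcount : 2 * (((Icc 1 (k - 4)).biUnion (genusBlock k)).card : ℤ) = (k - 4) * (k - 4 + 5) :=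
    two_mul_card_biUnion_genusBlock (by omega) (by omega)
  exact (Int.ediv_eq_of_eq_mul_right two_ne_zero (by linarith)).symm
end

section
/- Let k ≥ 3 and n ≥ 2k. Then there exist three permutations a, b, c in the symmetric group Σ_n, each of order exactly k, such that the subgroup G generated by {a, b, c} contains a 3-cycle and acts 2-transitively on the underlying n-element set (i.e., for any two ordered pairs of distinct points there is an element of G carrying the first pair to the second). -/
/-!
Put `k = m + 1` and cover `{0, …, n - 1}` by intervals of length `k`, the `j`-th one starting at
`j * m`, except that the last one is pushed to the left until it fits. Consecutive intervals
overlap and the others are disjoint, so the cyclic rotations of the odd-numbered intervals multiply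
to a permutation `a` of order `k`, those of the even-numbered ones to a permutation `b` of order
`k`, and every step `x ↦ x + 1` is made by `a` or by `b`: hence `⟨a, b⟩` is transitive. Let `c` be
the rotation of the interval number `0` alone. The supports of `a` and `c` meet only in `p = m`, so
the commutator of `a` and `c` is a 3-cycle, which permutes `p`, `a p` and `c p = b p`. A block of
imprimitivity with a second point besides `p` is mapped to itself by this 3-cycle, hence contains
`a p` and `b p`, hence is mapped to itself by `a` and `b`, hence is everything. So `⟨a, b, c⟩` is
primitive, and by Jordan's theorem it contains the alternating group.
-/

open Equiv Equiv.Perm MulAction Subgroup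
open scoped Pointwise commutatorElement

section ThreeCycles

variable {α : Type*}

theorem commutatorElement_eq_swap_mul_swap [DecidableEq α] {a c : Perm α} {p : α} (hap : a p ≠ p)
    (hac : ∀ x, x ≠ p → a x = x ∨ c x = x) :
    ⁅a, c⁆ = swap (a p) p * swap (a p) (c p) := by
  have hcap : c (a p) = a p := (hac _ hap).resolve_left fun h => hap (a.injective h)
  obtain ⟨d, hd⟩ : ∃ d, d = swap (a p) p * a := ⟨_, rfl⟩
  have ha : a = swap (a p) p * d := by rw [hd, swap_mul_self_mul]
  have hdc : d * c = c * d := by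
    refine Disjoint.commute fun x => ?_
    by_cases hxp : x = p
    · left
      rw [hd, hxp, Perm.mul_apply, swap_apply_left]
    · refine or_iff_not_imp_right.mpr fun hcx => ?_
      have hax : a x = x := (hac x hxp).resolve_right hcx
      have hxa : x ≠ a p := fun h => hcx (by rw [h, hcap])
      rw [hd, Perm.mul_apply, hax, swap_apply_of_ne_of_ne hxa hxp]
  calc ⁅a, c⁆ = a * c * a⁻¹ * c⁻¹ := rfl
    _ = swap (a p) p * (d * c) * d⁻¹ * (swap (a p) p)⁻¹ * c⁻¹ := by
      nth_rewrite 1 2 [ha]; group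
    _ = swap (a p) p * (c * swap (a p) p * c⁻¹) := by
      rw [hdc, swap_inv]; group
    _ = swap (a p) p * swap (a p) (c p) := by
      rw [← swap_apply_apply, hcap]

variable {G : Subgroup (Perm α)} {B : Set α} {p : α}

theorem mem_stabilizer_of_isBlock (hB : IsBlock G B) {g : Perm α} (hg : g ∈ G) {x : α}
    (hx : x ∈ B) (hgx : g x ∈ B) : g ∈ stabilizer (Perm α) B :=
  hB.smul_eq_of_mem (g := ⟨g, hg⟩) hx hgx

variable [Fintype α] [DecidableEq α] {τ : Perm α}

theorem mem_stabilizer_of_isThreeCycle (hB : IsBlock G B) (hBn : B.Nontrivial) (hpB : p ∈ B)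
    (hτ : τ.IsThreeCycle) (hτG : τ ∈ G) (hp : τ p ≠ p) : τ ∈ stabilizer (Perm α) B := by
  obtain ⟨y, hyB, hyp⟩ := hBn.exists_ne p
  by_cases hy : τ y = y
  · exact mem_stabilizer_of_isBlock hB hτG hyB (by rwa [hy])
  obtain ⟨i, hi, rfl⟩ := (hτ.isCycle.sameCycle hp hy).exists_pow_eq'
  rw [hτ.orderOf] at hi
  interval_cases i
  · exact absurd rfl hyp
  · exact mem_stabilizer_of_isBlock hB hτG hpB hyB
  · have hτy : τ ((τ ^ 2) p) = p := by
      rw [← Perm.mul_apply, ← pow_succ', orderOf_dvd_iff_pow_eq_one.1 hτ.orderOf.dvd,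
        Perm.one_apply]
    exact mem_stabilizer_of_isBlock hB hτG hyB (by rwa [hτy])

theorem isPreprimitive_of_isThreeCycle_mem {S : Set (Perm α)} (hSG : S ⊆ G)
    (htrans : IsPretransitive (closure S) α) (hτ : τ.IsThreeCycle) (hτG : τ ∈ G) (hp : τ p ≠ p)
    (hS : ∀ s ∈ S, τ.SameCycle p (s p)) : IsPreprimitive G α := by
  have hGtrans : IsPretransitive G α := .mk fun x y => by
    obtain ⟨⟨g, hg⟩, hgx⟩ := exists_smul_eq (closure S) x y
    exact ⟨⟨g, (closure_le G).2 hSG hg⟩, hgx⟩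
  refine IsPreprimitive.of_isTrivialBlock_base p fun {B} hpB hB => ?_
  refine B.subsingleton_or_nontrivial.imp_right fun hBn => ?_
  have hτB := mem_stabilizer_of_isThreeCycle hB hBn hpB hτ hτG hp
  have hSB : closure S ≤ stabilizer (Perm α) B := (closure_le _).2 fun s hs => by
    obtain ⟨i, hi⟩ := hS s hs
    have hsp : s p ∈ B := hi ▸ (mem_stabilizer_set.1 (zpow_mem hτB i) p).2 hpB
    exact mem_stabilizer_of_isBlock hB (hSG hs) hpB hsp
  refine Set.eq_univ_of_forall fun y => ?_
  obtain ⟨⟨g, hg⟩, rfl⟩ := exists_smul_eq (closure S) p y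
  exact (mem_stabilizer_set.1 (hSB hg) p).2 hpB

theorem alternatingGroup_le_closure_of_isPretransitive {a b c : Perm α}
    (htrans : IsPretransitive (closure {a, b}) α) (hap : a p ≠ p) (hcp : c p ≠ p)
    (hac : ∀ x, x ≠ p → a x = x ∨ c x = x) (hbc : b p = c p) :
    alternatingGroup α ≤ closure {a, b, c} := by
  have ha : a ∈ closure {a, b, c} := subset_closure (by simp)
  have hc : c ∈ closure {a, b, c} := subset_closure (by simp)
  have hca : a p ≠ c p := fun h => by
    have hcap : c (a p) = a p := (hac _ hap).resolve_left fun h => hap (a.injective h)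
    exact hcp (c.injective (by rwa [h] at hcap))
  have hcomm := commutatorElement_eq_swap_mul_swap hap hac
  have hτ : IsThreeCycle ⁅a, c⁆ :=
    hcomm ▸ isThreeCycle_swap_mul_swap_same hap hca hcp.symm
  have hτG : ⁅a, c⁆ ∈ closure {a, b, c} :=
    mul_mem (mul_mem (mul_mem ha hc) (inv_mem ha)) (inv_mem hc)
  have hτp : ⁅a, c⁆ p = a p := by
    rw [hcomm, Perm.mul_apply, swap_apply_of_ne_of_ne hap.symm hcp.symm, swap_apply_right]
  have hτcp : ⁅a, c⁆ (c p) = p := by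
    rw [hcomm, Perm.mul_apply, swap_apply_right, swap_apply_left]
  have hprim : IsPreprimitive (closure {a, b, c}) α := by
    refine isPreprimitive_of_isThreeCycle_mem (S := {a, b}) (fun s hs => subset_closure ?_)
      htrans hτ hτG (p := p) (by rwa [hτp]) ?_
    · simp only [Set.mem_insert_iff, Set.mem_singleton_iff] at hs ⊢
      tauto
    · rintro s (rfl | rfl)
      · exact ⟨1, by rw [zpow_one, hτp]⟩
      · exact ⟨-1, by rw [zpow_neg_one, hbc, inv_eq_iff_eq, hτcp]⟩
  exact alternatingGroup_le_of_isPreprimitive_of_isThreeCycle_mem hprim hτ hτG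

theorem exists_isThreeCycle_mem_of_alternatingGroup_le (hα : 3 ≤ Fintype.card α)
    (hG : alternatingGroup α ≤ G) : ∃ σ ∈ G, IsThreeCycle σ := by
  obtain ⟨x, y, z, hxy, hxz, hyz⟩ := Fintype.two_lt_card_iff.1 hα
  have h3 := isThreeCycle_swap_mul_swap_same hxy hxz hyz
  exact ⟨_, hG h3.mem_alternatingGroup, h3⟩

theorem exists_mem_apply_eq_of_alternatingGroup_le (hα : 4 ≤ Fintype.card α)
    (hG : alternatingGroup α ≤ G) {i j i' j' : α} (hij : i ≠ j) (hij' : i' ≠ j') :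
    ∃ σ ∈ G, σ i = i' ∧ σ j = j' := by
  have := alternatingGroup.isMultiplyPretransitive α
  have h2 : IsMultiplyPretransitive (alternatingGroup α) α 2 :=
    isMultiplyPretransitive_of_le (n := Nat.card α - 2)
      (by rw [Nat.card_eq_fintype_card]; omega) (Nat.sub_le _ _)
  obtain ⟨g, hgi, hgj⟩ := is_two_pretransitive_iff.1 h2 hij hij'
  exact ⟨g, hG g.2, hgi, hgj⟩

end ThreeCycles

theorem isPretransitive_of_forall_exists_smul_val_eq_succ {M : Type*} [Group M] {n : ℕ}
    [MulAction M (Fin n)]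
    (h : ∀ x : Fin n, (x : ℕ) + 1 < n → ∃ g : M, ((g • x : Fin n) : ℕ) = x + 1) :
    IsPretransitive M (Fin n) := by
  rcases n with _ | n
  · exact .mk fun x => x.elim0
  refine (isPretransitive_iff_base 0).2 fun x => ?_
  induction x using Fin.induction with
  | zero => exact ⟨1, one_smul M _⟩
  | succ i ih =>
    obtain ⟨g, hg⟩ := ih
    obtain ⟨g', hg'⟩ := h i.castSucc (by simp)
    exact ⟨g' * g, by rw [mul_smul, hg]; exact Fin.ext hg'⟩

theorem orderOf_finRotate_succ (m : ℕ) : orderOf (finRotate (m + 1)) = m + 1 := by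
  rcases m with _ | m
  · simp [Subsingleton.elim (finRotate 1) 1]
  · rw [← lcm_cycleType, cycleType_finRotate, Multiset.lcm_singleton, normalize_eq]

/-- The intervals `[s i, s i + k)` are pairwise disjoint and contained in `[0, n)`. -/
structure IsIntervalPacking {ι : Type*} (s : ι → ℕ) (k n : ℕ) : Prop where
  add_le : ∀ i, s i + k ≤ n
  separated : Pairwise fun i j => s i + k ≤ s j ∨ s j + k ≤ s i

namespace IsIntervalPacking

variable {ι : Type*} {s : ι → ℕ} {k m n : ℕ}

/-- The inclusion of the disjoint union of the intervals of a packing into `Fin n`. -/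
def embedding (h : IsIntervalPacking s k n) : (Σ _ : ι, Fin k) ↪ Fin n where
  toFun x := ⟨s x.1 + x.2, (Nat.add_lt_add_left x.2.2 _).trans_le (h.add_le x.1)⟩
  inj' := by
    rintro ⟨i, x⟩ ⟨j, y⟩ hxy
    have hval : s i + x = s j + y := congrArg Fin.val hxy
    obtain rfl : i = j := by
      by_contra hij
      have := h.separated hij
      omega
    obtain rfl : x = y := Fin.ext (by omega)
    rfl

/-- The permutation of `Fin n` that rotates each interval `[s i, s i + k)` of a packing by one step
to the right, its last point going to its first, and fixes the points outside the intervals. -/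
noncomputable def rotation (h : IsIntervalPacking s k n) : Perm (Fin n) :=
  viaEmbeddingHom h.embedding (sigmaCongrRightHom _ fun _ => finRotate k)

theorem orderOf_rotation [Nonempty ι] (h : IsIntervalPacking s (m + 1) n) :
    orderOf h.rotation = m + 1 := by
  have hconst : orderOf (fun _ : ι => finRotate (m + 1)) = orderOf (finRotate (m + 1)) :=
    orderOf_injective (Pi.constMonoidHom ι (Perm (Fin (m + 1)))) Function.const_injective _
  rw [rotation, orderOf_injective _ (viaEmbeddingHom_injective _),
    orderOf_injective _ sigmaCongrRightHom_injective, hconst, orderOf_finRotate_succ]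

theorem rotation_embedding (h : IsIntervalPacking s k n) (i : ι) (x : Fin k) :
    h.rotation (h.embedding ⟨i, x⟩) = h.embedding ⟨i, finRotate k x⟩ :=
  viaEmbedding_apply _ _ _

theorem val_rotation_of_lt (h : IsIntervalPacking s (m + 1) n) (i : ι) {x : Fin n}
    (hix : s i ≤ x) (hxi : (x : ℕ) < s i + m) : (h.rotation x : ℕ) = x + 1 := by
  have hx : x = h.embedding ⟨i, ⟨x - s i, by omega⟩⟩ :=
    Fin.ext (Nat.add_sub_of_le hix).symm
  have hrot := congrArg Fin.val (h.rotation_embedding i ⟨x - s i, by omega⟩)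
  rw [← hx, finRotate_of_lt (by omega)] at hrot
  rw [hrot]
  change s i + (x - s i + 1) = x + 1
  omega

theorem val_rotation_of_eq (h : IsIntervalPacking s (m + 1) n) (i : ι) {x : Fin n}
    (hx : (x : ℕ) = s i + m) : (h.rotation x : ℕ) = s i := by
  have hx' : x = h.embedding ⟨i, Fin.last m⟩ := Fin.ext hx
  rw [hx', rotation_embedding, finRotate_last]
  rfl

theorem rotation_eq_self (h : IsIntervalPacking s k n) {x : Fin n}
    (hx : ∀ i, (x : ℕ) < s i ∨ s i + k ≤ x) : h.rotation x = x := by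
  refine viaEmbedding_apply_of_notMem _ _ _ ?_
  rintro ⟨⟨i, y⟩, rfl⟩
  have : s i + y < s i ∨ s i + k ≤ s i + y := hx i
  omega

end IsIntervalPacking

section Chain

variable {m n : ℕ}

/-- The start of the `j`-th interval in the chain of overlapping intervals of length `m + 1` that
covers `[0, n)`. It is `j * m`, unless that interval would stick out of `[0, n)` and is moved to the
left so as to end at `n`. The chain consists of the intervals with `j * m + 2 ≤ n`. -/
def chainStart (m n j : ℕ) : ℕ :=
  min (j * m) (n - (m + 1))

@[simp]
theorem chainStart_zero (m n : ℕ) : chainStart m n 0 = 0 := by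
  rw [chainStart, zero_mul, Nat.zero_min]

theorem isIntervalPacking_chainStart (hm : 1 ≤ m) (hmn : m + 1 ≤ n) {J : Set ℕ}
    (hJn : ∀ j ∈ J, j * m + 2 ≤ n) (hJ : ∀ j ∈ J, j + 1 ∉ J) :
    IsIntervalPacking (fun j : J => chainStart m n j) (m + 1) n where
  add_le j := by
    have := min_le_right (j * m) (n - (m + 1))
    unfold chainStart
    omega
  separated := by
    have hlt : ∀ i ∈ J, ∀ j ∈ J, i < j → chainStart m n i + (m + 1) ≤ chainStart m n j := by
      intro i hi j hj hij
      have hij2 : i + 2 ≤ j := Nat.lt_of_le_of_ne hij fun h => hJ i hi (by rwa [← h] at hj)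
      have hmul : (i + 2) * m ≤ j * m := Nat.mul_le_mul_right m hij2
      have := hJn j hj
      rw [add_mul] at hmul
      unfold chainStart
      omega
    intro i j hij
    exact (Subtype.coe_ne_coe.2 hij).lt_or_gt.imp (hlt i i.2 j j.2) (hlt j j.2 i i.2)

variable {J J' : Set ℕ}

theorem val_rotation_chainStart_of_div_mem (hm : 1 ≤ m)
    (h : IsIntervalPacking (fun j : J => chainStart m n j) (m + 1) n) {x : Fin n}
    (hx : (x : ℕ) + 1 < n) (hxJ : (x : ℕ) / m ∈ J) : (h.rotation x : ℕ) = x + 1 := by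
  have hdiv : (x : ℕ) / m * m + x % m = x := Nat.div_add_mod' _ _
  have hmod : (x : ℕ) % m < m := Nat.mod_lt _ hm
  have hmem : chainStart m n (x / m) ≤ x ∧ (x : ℕ) < chainStart m n (x / m) + m := by
    unfold chainStart
    omega
  exact h.val_rotation_of_lt ⟨x / m, hxJ⟩ hmem.1 hmem.2

theorem val_rotation_chainStart_of_val_eq
    (h : IsIntervalPacking (fun j : J => chainStart m n j) (m + 1) n) (hJ : 0 ∈ J) {x : Fin n}
    (hx : (x : ℕ) = m) : (h.rotation x : ℕ) = 0 :=
  (h.val_rotation_of_eq ⟨0, hJ⟩ (by simp [hx])).trans (chainStart_zero m n)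

theorem rotation_chainStart_of_val_lt (hmn : 2 * m + 1 ≤ n)
    (h : IsIntervalPacking (fun j : J => chainStart m n j) (m + 1) n) (hJ : 0 ∉ J) {x : Fin n}
    (hx : (x : ℕ) < m) : h.rotation x = x := by
  refine h.rotation_eq_self fun j => Or.inl (hx.trans_le (le_min ?_ (by omega)))
  exact Nat.le_mul_of_pos_left m (Nat.pos_of_ne_zero fun h0 => hJ (h0 ▸ j.2))

theorem rotation_chainStart_singleton_of_lt_val
    (h : IsIntervalPacking (fun j : ({0} : Set ℕ) => chainStart m n j) (m + 1) n) {x : Fin n}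
    (hx : m < (x : ℕ)) : h.rotation x = x := by
  refine h.rotation_eq_self ?_
  rintro ⟨j, rfl⟩
  right
  rwa [chainStart_zero, zero_add]

theorem isPretransitive_closure_rotation_chainStart (hm : 1 ≤ m)
    (ha : IsIntervalPacking (fun j : J => chainStart m n j) (m + 1) n)
    (hb : IsIntervalPacking (fun j : J' => chainStart m n j) (m + 1) n)
    (hJJ' : ∀ j, j * m + 2 ≤ n → j ∈ J ∨ j ∈ J') :
    IsPretransitive (closure {ha.rotation, hb.rotation}) (Fin n) := by
  refine isPretransitive_of_forall_exists_smul_val_eq_succ fun x hx => ?_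
  have hdiv : (x : ℕ) / m * m ≤ x := Nat.div_mul_le_self x m
  rcases hJJ' (x / m) (by omega) with hxJ | hxJ'
  · exact ⟨⟨ha.rotation, subset_closure (by simp)⟩,
      val_rotation_chainStart_of_div_mem hm ha hx hxJ⟩
  · exact ⟨⟨hb.rotation, subset_closure (by simp)⟩,
      val_rotation_chainStart_of_div_mem hm hb hx hxJ'⟩

theorem alternatingGroup_le_closure_rotation_chainStart (hm : 1 ≤ m) (hmn : 2 * m + 1 ≤ n)
    (ha : IsIntervalPacking (fun j : J => chainStart m n j) (m + 1) n)
    (hb : IsIntervalPacking (fun j : J' => chainStart m n j) (m + 1) n)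
    (hc : IsIntervalPacking (fun j : ({0} : Set ℕ) => chainStart m n j) (m + 1) n)
    (hJ0 : 0 ∉ J) (hJ1 : 1 ∈ J) (hJ'0 : 0 ∈ J') (hJJ' : ∀ j, j * m + 2 ≤ n → j ∈ J ∨ j ∈ J') :
    alternatingGroup (Fin n) ≤ closure {ha.rotation, hb.rotation, hc.rotation} := by
  let p : Fin n := ⟨m, by omega⟩
  have hap : (ha.rotation p : ℕ) = m + 1 :=
    val_rotation_chainStart_of_div_mem hm ha (show m + 1 < n by omega)
      (show m / m ∈ J by rwa [Nat.div_self hm])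
  have hbp : (hb.rotation p : ℕ) = 0 := val_rotation_chainStart_of_val_eq hb hJ'0 rfl
  have hcp : (hc.rotation p : ℕ) = 0 := val_rotation_chainStart_of_val_eq hc rfl rfl
  refine alternatingGroup_le_closure_of_isPretransitive (p := p)
    (isPretransitive_closure_rotation_chainStart hm ha hb hJJ') ?_ ?_ (fun x hx => ?_)
    (Fin.ext (hbp.trans hcp.symm))
  · exact Fin.ne_of_val_ne (hap.trans_ne m.succ_ne_self)
  · exact Fin.ne_of_val_ne (hcp.trans_ne (Nat.ne_of_lt hm))
  · exact (Fin.val_ne_of_ne hx).lt_or_gt.imp (rotation_chainStart_of_val_lt hmn ha hJ0)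
      (rotation_chainStart_singleton_of_lt_val hc)

end Chain

theorem three_order_k_perms_generate_two_transitive_group_with_three_cycle_general
    (k n : ℕ) (hk : 2 ≤ k) (hn : 2 * k ≤ n + 1) :
    ∃ a b c : Perm (Fin n), orderOf a = k ∧ orderOf b = k ∧ orderOf c = k ∧
      alternatingGroup (Fin n) ≤ closure {a, b, c} := by
  obtain ⟨m, rfl⟩ : ∃ m, k = m + 1 := ⟨k - 1, by omega⟩
  have hm : 1 ≤ m := by omega
  have hmn : m + 1 ≤ n := by omega
  let J : Set ℕ := {j | Odd j ∧ j * m + 2 ≤ n}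
  let J' : Set ℕ := {j | Even j ∧ j * m + 2 ≤ n}
  have hJ1 : 1 ∈ J := ⟨odd_one, by omega⟩
  have hJ'0 : 0 ∈ J' := ⟨Even.zero, by omega⟩
  have ha := isIntervalPacking_chainStart hm hmn (J := J) (fun _ hj => hj.2)
    fun _ hj hj' => Nat.not_even_iff_odd.2 hj'.1 hj.1.add_one
  have hb := isIntervalPacking_chainStart hm hmn (J := J') (fun _ hj => hj.2)
    fun _ hj hj' => Nat.not_even_iff_odd.2 hj.1.add_one hj'.1
  have hc := isIntervalPacking_chainStart hm hmn (J := {0})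
    (fun j hj => by rw [Set.mem_singleton_iff.1 hj]; omega) (by simp)
  have : Nonempty J := ⟨⟨1, hJ1⟩⟩
  have : Nonempty J' := ⟨⟨0, hJ'0⟩⟩
  exact ⟨ha.rotation, hb.rotation, hc.rotation,
    ha.orderOf_rotation, hb.orderOf_rotation, hc.orderOf_rotation,
    alternatingGroup_le_closure_rotation_chainStart hm (by omega) ha hb hc
      (fun h => Nat.not_odd_zero h.1) hJ1 hJ'0
      fun j hj => (Nat.even_or_odd j).symm.imp (⟨·, hj⟩) (⟨·, hj⟩)⟩

/-- For `k ≥ 3` and `n ≥ 2k`, there are three permutations of order exactly `k`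
in `Σ_n` generating a subgroup that contains a 3-cycle and acts 2-transitively
on the `n` points. -/
theorem three_order_k_perms_generate_two_transitive_group_with_three_cycle
    (k n : ℕ) (hk : 3 ≤ k) (hn : 2 * k ≤ n) :
    ∃ a b c : Equiv.Perm (Fin n),
      orderOf a = k ∧ orderOf b = k ∧ orderOf c = k ∧
      (∃ τ ∈ Subgroup.closure {a, b, c}, Equiv.Perm.IsThreeCycle τ) ∧
      (∀ i j i' j' : Fin n, i ≠ j → i' ≠ j' →
        ∃ σ ∈ Subgroup.closure {a, b, c}, σ i = i' ∧ σ j = j') := by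
  obtain ⟨a, b, c, ha, hb, hc, hG⟩ :=
    three_order_k_perms_generate_two_transitive_group_with_three_cycle_general k n
      (by omega) (by omega)
  exact ⟨a, b, c, ha, hb, hc,
    exists_isThreeCycle_mem_of_alternatingGroup_le (by rw [Fintype.card_fin]; omega) hG,
    fun _ _ _ _ => exists_mem_apply_eq_of_alternatingGroup_le (by rw [Fintype.card_fin]; omega) hG⟩
end
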